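/- arXiv:1809.02963 — 6 statements merged into one kernel-verified Lean document; each statement's English description precedes it below -/
import Mathlib

section
/- Let M, N, H ≥ 1 be integers, let φ_U, θ_U, φ_V, θ_V > 0 and κ > 0. For every real number s, the Lebesgue integral ∫_{[0,κ]^{M×H} × [0,κ]^{H×N}} (‖UV‖²)^{−s} φ(U,V) dU dV is finite if and only if s < H·min{Mφ_U, Nφ_V}/2. (Equivalently: the real log canonical threshold of ‖UV‖² with respect to the gamma prior equals H·min{Mφ_U, Nφ_V}/2.) -/
/-! Write `Q = ‖UV‖²`, and let every entry of `U` and `V` be positive.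

*Convergence.* `Q` dominates each single term `(u_{ik} v_{kj})²`, hence also their geometric mean,
`Q ≥ ∏ u_{ik}^{2/(MH)} · ∏ v_{kj}^{2/(HN)}`. For `s > 0` the integrand is therefore at most a product
of one-variable powers with exponents `φU - 1 - 2s/(MH)` and `φV - 1 - 2s/(HN)`, all of which exceed
`-1` exactly when `s < H · min (M φU) (N φV) / 2`. For `s ≤ 0` the factor `Q^{-s}` is bounded
(`exists_rpow_le`).

*Divergence.* On the box where all `u_{ik} ∈ (ρ/2, ρ]` and all `v_{kj} ∈ (σ/2, σ]`, one has
`Q ≤ M N H² (ρσ)²`, so the integral over that box is at least a constant multiple of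
`ρ^{MHφU - 2s} σ^{HNφV - 2s}` (`le_setLIntegral_box`). If, say, `2s ≥ MHφU`, taking `σ = κ` and
`ρ = κ 2^{-r}` gives infinitely many disjoint boxes, each carrying at least a fixed positive mass.
-/

open MeasureTheory Finset

namespace GammaRLCT

/-! ### Boxes and bounds on the squared norm -/

/-- The box of pairs `(U, V)` with all entries of `U` in `A` and all entries of `V` in `B`. -/
def box (M N H : ℕ) (A B : Set ℝ) : Set ((Fin M → Fin H → ℝ) × (Fin H → Fin N → ℝ)) :=
  (Set.univ.pi fun _ => Set.univ.pi fun _ => A) ×ˢ (Set.univ.pi fun _ => Set.univ.pi fun _ => B)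

/-- The squared Frobenius norm of `UV`. -/
noncomputable def Q {M N H : ℕ} (p : (Fin M → Fin H → ℝ) × (Fin H → Fin N → ℝ)) : ℝ :=
  ∑ i, ∑ j, (∑ k, p.1 i k * p.2 k j) ^ 2

variable {M N H : ℕ}

lemma mem_box {A B : Set ℝ} {p : (Fin M → Fin H → ℝ) × (Fin H → Fin N → ℝ)} :
    p ∈ box M N H A B ↔ (∀ i k, p.1 i k ∈ A) ∧ (∀ k j, p.2 k j ∈ B) := by
  simp [box, Set.mem_prod, Set.mem_pi]

lemma measurableSet_box {A B : Set ℝ} (hA : MeasurableSet A) (hB : MeasurableSet B) :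
    MeasurableSet (box M N H A B) :=
  (MeasurableSet.univ_pi fun _ => MeasurableSet.univ_pi fun _ => hA).prod
    (MeasurableSet.univ_pi fun _ => MeasurableSet.univ_pi fun _ => hB)

lemma volume_box (A B : Set ℝ) :
    volume (box M N H A B) = (volume A ^ H) ^ M * (volume B ^ N) ^ H := by
  simp [box, Measure.volume_eq_prod, Measure.prod_prod, volume_pi_pi]

lemma restrict_box (A B : Set ℝ) :
    (volume : Measure ((Fin M → Fin H → ℝ) × (Fin H → Fin N → ℝ))).restrict (box M N H A B) =
      (Measure.pi fun _ => Measure.pi fun _ => volume.restrict A).prod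
        (Measure.pi fun _ => Measure.pi fun _ => volume.restrict B) := by
  rw [box, Measure.volume_eq_prod, ← Measure.prod_restrict]
  simp only [volume_pi, Measure.restrict_pi_pi]

/-- Integrability of a product of one-variable functions over a box. -/
lemma integrable_box {A B : Set ℝ} {f g : ℝ → ℝ} (hf : IntegrableOn f A) (hg : IntegrableOn g B) :
    IntegrableOn (fun p : (Fin M → Fin H → ℝ) × (Fin H → Fin N → ℝ) =>
      (∏ i, ∏ k, f (p.1 i k)) * ∏ k, ∏ j, g (p.2 k j)) (box M N H A B) := by
  rw [IntegrableOn, restrict_box]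
  refine Integrable.mul_prod (f := fun u : Fin M → Fin H → ℝ => ∏ i, ∏ k, f (u i k))
    (g := fun v : Fin H → Fin N → ℝ => ∏ k, ∏ j, g (v k j)) ?_ ?_
  · exact Integrable.fintype_prod (f := fun _ (x : Fin H → ℝ) => ∏ k, f (x k))
      fun _ => Integrable.fintype_prod (f := fun _ => f) fun _ => hf
  · exact Integrable.fintype_prod (f := fun _ (x : Fin N → ℝ) => ∏ k, g (x k))
      fun _ => Integrable.fintype_prod (f := fun _ => g) fun _ => hg

lemma Q_le {ρ σ : ℝ} {p : (Fin M → Fin H → ℝ) × (Fin H → Fin N → ℝ)}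
    (hp : p ∈ box M N H (Set.Ioc 0 ρ) (Set.Ioc 0 σ)) :
    Q p ≤ M * N * H ^ 2 * (ρ * σ) ^ 2 := by
  obtain ⟨hu, hv⟩ := mem_box.1 hp
  have h1 : ∀ i j, (∑ k, p.1 i k * p.2 k j) ^ 2 ≤ (H * (ρ * σ)) ^ 2 := by
    intro i j
    refine pow_le_pow_left₀
      (Finset.sum_nonneg fun k _ => mul_nonneg (hu i k).1.le (hv k j).1.le) ?_ 2
    calc ∑ k, p.1 i k * p.2 k j ≤ ∑ _k : Fin H, ρ * σ :=
          Finset.sum_le_sum fun k _ => mul_le_mul (hu i k).2 (hv k j).2 (hv k j).1.le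
            ((hu i k).1.le.trans (hu i k).2)
      _ = H * (ρ * σ) := by simp
  calc Q p ≤ ∑ _i : Fin M, ∑ _j : Fin N, (H * (ρ * σ)) ^ 2 :=
        Finset.sum_le_sum fun i _ => Finset.sum_le_sum fun j _ => h1 i j
    _ = M * N * H ^ 2 * (ρ * σ) ^ 2 := by simp; ring

lemma sq_le_Q {p : (Fin M → Fin H → ℝ) × (Fin H → Fin N → ℝ)}
    (hu : ∀ i k, 0 < p.1 i k) (hv : ∀ k j, 0 < p.2 k j) (i : Fin M) (j : Fin N) (k : Fin H) :
    (p.1 i k * p.2 k j) ^ 2 ≤ Q p := by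
  have hn : ∀ k, 0 ≤ p.1 i k * p.2 k j := fun k => (mul_pos (hu i k) (hv k j)).le
  calc (p.1 i k * p.2 k j) ^ 2 ≤ (∑ k, p.1 i k * p.2 k j) ^ 2 :=
        pow_le_pow_left₀ (hn k)
          (Finset.single_le_sum (fun k _ => hn k) (Finset.mem_univ k)) 2
    _ ≤ ∑ j, (∑ k, p.1 i k * p.2 k j) ^ 2 :=
        Finset.single_le_sum (f := fun j => (∑ k, p.1 i k * p.2 k j) ^ 2)
          (fun j _ => sq_nonneg _) (Finset.mem_univ j)
    _ ≤ Q p :=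
        Finset.single_le_sum (f := fun i => ∑ j, (∑ k, p.1 i k * p.2 k j) ^ 2)
          (fun i _ => Finset.sum_nonneg fun j _ => sq_nonneg _) (Finset.mem_univ i)

lemma Q_pos (hM : 1 ≤ M) (hN : 1 ≤ N) (hH : 1 ≤ H)
    {p : (Fin M → Fin H → ℝ) × (Fin H → Fin N → ℝ)}
    (hu : ∀ i k, 0 < p.1 i k) (hv : ∀ k j, 0 < p.2 k j) : 0 < Q p :=
  (pow_pos (mul_pos (hu ⟨0, hM⟩ ⟨0, hH⟩) (hv ⟨0, hH⟩ ⟨0, hN⟩)) 2).trans_le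
    (sq_le_Q hu hv ⟨0, hM⟩ ⟨0, hN⟩ ⟨0, hH⟩)

/-- The comparison of `Q` with the geometric mean of the `M N H` squares `(u_{ik} v_{kj})²`. -/
lemma rpow_neg_Q_le (hM : 1 ≤ M) (hN : 1 ≤ N) (hH : 1 ≤ H) {s : ℝ} (hs : 0 ≤ s)
    {p : (Fin M → Fin H → ℝ) × (Fin H → Fin N → ℝ)}
    (hu : ∀ i k, 0 < p.1 i k) (hv : ∀ k j, 0 < p.2 k j) :
    Q p ^ (-s) ≤ (∏ i, ∏ k, p.1 i k ^ (-(2 * s / (M * H)))) *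
      ∏ k, ∏ j, p.2 k j ^ (-(2 * s / (N * H))) := by
  have hM' : (0 : ℝ) < M := by exact_mod_cast hM
  have hN' : (0 : ℝ) < N := by exact_mod_cast hN
  have hH' : (0 : ℝ) < H := by exact_mod_cast hH
  have hQ := Q_pos hM hN hH hu hv
  have huv : ∀ i j k, 0 < (p.1 i k * p.2 k j) ^ 2 :=
    fun i j k => pow_pos (mul_pos (hu i k) (hv k j)) 2
  set P : ℝ := ∏ i, ∏ j, ∏ k, (p.1 i k * p.2 k j) ^ 2 with hP
  have hPpos : 0 < P := Finset.prod_pos fun i _ => Finset.prod_pos fun j _ =>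
    Finset.prod_pos fun k _ => huv i j k
  have hPQ : P ≤ Q p ^ (M * N * H) := by
    calc P ≤ ∏ _i : Fin M, ∏ _j : Fin N, ∏ _k : Fin H, Q p := by
          refine Finset.prod_le_prod (fun i _ => Finset.prod_nonneg fun j _ =>
            Finset.prod_nonneg fun k _ => (huv i j k).le) fun i _ => ?_
          refine Finset.prod_le_prod (fun j _ =>
            Finset.prod_nonneg fun k _ => (huv i j k).le) fun j _ => ?_
          exact Finset.prod_le_prod (fun k _ => (huv i j k).le) fun k _ => sq_le_Q hu hv i j k
      _ = Q p ^ (M * N * H) := by simp [← pow_mul]; ring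
  set c : ℝ := -(s / (M * N * H)) with hc
  have hc0 : c ≤ 0 := neg_nonpos.2 (by positivity)
  have h1 : Q p ^ (-s) = (Q p ^ (M * N * H)) ^ c := by
    rw [← Real.rpow_natCast, ← Real.rpow_mul hQ.le]
    congr 1
    rw [hc]; push_cast; field_simp
  have h2 : P ^ c = ∏ i, ∏ j, ∏ k, (p.1 i k ^ (2 * c) * p.2 k j ^ (2 * c)) := by
    rw [hP, ← Real.finsetProd_rpow _ _ fun i _ => Finset.prod_nonneg fun j _ =>
            Finset.prod_nonneg fun k _ => (huv i j k).le]
    refine Finset.prod_congr rfl fun i _ => ?_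
    rw [← Real.finsetProd_rpow _ _ fun j _ =>
            Finset.prod_nonneg fun k _ => (huv i j k).le]
    refine Finset.prod_congr rfl fun j _ => ?_
    rw [← Real.finsetProd_rpow _ _ fun k _ => (huv i j k).le]
    refine Finset.prod_congr rfl fun k _ => ?_
    rw [← Real.mul_rpow (hu i k).le (hv k j).le, ← Real.rpow_natCast,
      ← Real.rpow_mul (mul_pos (hu i k) (hv k j)).le]
    norm_num
  have h3 : ∏ i, ∏ j, ∏ k, (p.1 i k ^ (2 * c) * p.2 k j ^ (2 * c)) =
      (∏ i, ∏ k, (p.1 i k ^ (2 * c)) ^ N) * ∏ k, ∏ j, (p.2 k j ^ (2 * c)) ^ M := by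
    simp only [Finset.prod_mul_distrib, Finset.prod_const, Finset.card_univ, Fintype.card_fin,
      Finset.prod_pow]
    rw [Finset.prod_comm (s := (Finset.univ : Finset (Fin N)))]
  rw [h1]
  refine (Real.rpow_le_rpow_of_nonpos hPpos hPQ hc0).trans (le_of_eq ?_)
  rw [h2, h3]
  congr 1
  · refine Finset.prod_congr rfl fun i _ => Finset.prod_congr rfl fun k _ => ?_
    rw [← Real.rpow_natCast, ← Real.rpow_mul (hu i k).le]
    congr 1
    rw [hc]; field_simp
  · refine Finset.prod_congr rfl fun k _ => Finset.prod_congr rfl fun j _ => ?_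
    rw [← Real.rpow_natCast, ← Real.rpow_mul (hv k j).le]
    congr 1
    rw [hc]; field_simp

/-- Below the threshold, `Q^{-s}` is dominated by a product of one-variable powers whose exponents
are integrable against the prior. -/
lemma exists_rpow_le (hM : 1 ≤ M) (hN : 1 ≤ N) (hH : 1 ≤ H) {φU φV κ s : ℝ}
    (hφU : 0 < φU) (hφV : 0 < φV)
    (hs : s < (H : ℝ) * min ((M : ℝ) * φU) ((N : ℝ) * φV) / 2) :
    ∃ C a b : ℝ, 0 ≤ C ∧ a < φU ∧ b < φV ∧
      ∀ p ∈ box M N H (Set.Ioc 0 κ) (Set.Ioc 0 κ),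
        Q p ^ (-s) ≤ C * ((∏ i, ∏ k, p.1 i k ^ (-a)) * ∏ k, ∏ j, p.2 k j ^ (-b)) := by
  have hM' : (0 : ℝ) < M := by exact_mod_cast hM
  have hN' : (0 : ℝ) < N := by exact_mod_cast hN
  have hH' : (0 : ℝ) < H := by exact_mod_cast hH
  rcases le_total 0 s with h0 | h0
  · refine ⟨1, 2 * s / (M * H), 2 * s / (N * H), zero_le_one, ?_, ?_, fun p hp => ?_⟩
    · rw [div_lt_iff₀ (by positivity)]
      have := mul_le_mul_of_nonneg_left (min_le_left ((M : ℝ) * φU) ((N : ℝ) * φV)) hH'.le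
      linarith
    · rw [div_lt_iff₀ (by positivity)]
      have := mul_le_mul_of_nonneg_left (min_le_right ((M : ℝ) * φU) ((N : ℝ) * φV)) hH'.le
      linarith
    · obtain ⟨hu, hv⟩ := mem_box.1 hp
      rw [one_mul]
      exact rpow_neg_Q_le hM hN hH h0 (fun i k => (hu i k).1) (fun k j => (hv k j).1)
  · refine ⟨(M * N * H ^ 2 * (κ * κ) ^ 2) ^ (-s), 0, 0, by positivity, hφU, hφV, fun p hp => ?_⟩
    obtain ⟨hu, hv⟩ := mem_box.1 hp
    simp only [neg_zero, Real.rpow_zero, Finset.prod_const_one, mul_one]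
    exact Real.rpow_le_rpow (Q_pos hM hN hH (fun i k => (hu i k).1) (fun k j => (hv k j).1)).le
      (Q_le hp) (neg_nonneg.2 h0)

/-! ### Convergence below the threshold -/

/-- The gamma prior density. -/
noncomputable def prior (φU θU φV θV : ℝ)
    (p : (Fin M → Fin H → ℝ) × (Fin H → Fin N → ℝ)) : ℝ :=
  (∏ i, ∏ k, θU ^ φU / Real.Gamma φU * p.1 i k ^ (φU - 1) * Real.exp (-θU * p.1 i k)) *
    (∏ k, ∏ j, θV ^ φV / Real.Gamma φV * p.2 k j ^ (φV - 1) * Real.exp (-θV * p.2 k j))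

lemma integrableOn_rpow {φ κ a A : ℝ} (hκ : 0 < κ) (ha : a < φ) :
    IntegrableOn (fun x : ℝ => A * x ^ (φ - 1) * x ^ (-a)) (Set.Ioc 0 κ) := by
  have h : IntegrableOn (fun x : ℝ => A * x ^ (φ - 1 - a)) (Set.Ioc 0 κ) :=
    ((intervalIntegrable_iff_integrableOn_Ioc_of_le hκ.le).1
      (intervalIntegral.intervalIntegrable_rpow' (by linarith))).const_mul A
  refine h.congr_fun (fun x hx => ?_) measurableSet_Ioc
  simp only
  rw [mul_assoc, ← Real.rpow_add hx.1, sub_eq_add_neg (φ - 1)]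

lemma setLIntegral_lt_top (hM : 1 ≤ M) (hN : 1 ≤ N) (hH : 1 ≤ H)
    {φU θU φV θV κ s : ℝ}
    (hφU : 0 < φU) (hθU : 0 < θU) (hφV : 0 < φV) (hθV : 0 < θV) (hκ : 0 < κ)
    (hs : s < (H : ℝ) * min ((M : ℝ) * φU) ((N : ℝ) * φV) / 2) :
    ∫⁻ p in box M N H (Set.Ioc 0 κ) (Set.Ioc 0 κ),
      ENNReal.ofReal (Q p ^ (-s) * prior φU θU φV θV p) < ⊤ := by
  obtain ⟨C, a, b, hC, ha, hb, hle⟩ := exists_rpow_le (κ := κ) hM hN hH hφU hφV hs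
  set AU := θU ^ φU / Real.Gamma φU
  set AV := θV ^ φV / Real.Gamma φV
  have hAU : 0 < AU := div_pos (Real.rpow_pos_of_pos hθU _) (Real.Gamma_pos_of_pos hφU)
  have hAV : 0 < AV := div_pos (Real.rpow_pos_of_pos hθV _) (Real.Gamma_pos_of_pos hφV)
  have hint := (integrable_box (M := M) (N := N) (H := H)
    (integrableOn_rpow (A := AU) hκ ha) (integrableOn_rpow (A := AV) hκ hb)).const_mul C
  refine lt_of_le_of_lt (setLIntegral_mono' (measurableSet_box measurableSet_Ioc measurableSet_Ioc)
    fun p hp => ENNReal.ofReal_le_ofReal ?_) hint.lintegral_lt_top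
  obtain ⟨hu, hv⟩ := mem_box.1 hp
  have key : ∀ {A φ θ x : ℝ}, 0 < A → 0 < θ → 0 < x →
      0 ≤ A * x ^ (φ - 1) * Real.exp (-θ * x) ∧
      A * x ^ (φ - 1) * Real.exp (-θ * x) ≤ A * x ^ (φ - 1) := by
    intro A φ θ x hA hθ hx
    refine ⟨by positivity, mul_le_of_le_one_right (by positivity) ?_⟩
    rw [Real.exp_le_one_iff]
    nlinarith [mul_pos hθ hx]
  have hpr : prior φU θU φV θV p ≤
      (∏ i, ∏ k, AU * p.1 i k ^ (φU - 1)) * ∏ k, ∏ j, AV * p.2 k j ^ (φV - 1) := by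
    refine mul_le_mul ?_ ?_ ?_ ?_
    · exact Finset.prod_le_prod (fun i _ => Finset.prod_nonneg fun k _ =>
        (key hAU hθU (hu i k).1).1) fun i _ => Finset.prod_le_prod (fun k _ =>
        (key hAU hθU (hu i k).1).1) fun k _ => (key hAU hθU (hu i k).1).2
    · exact Finset.prod_le_prod (fun i _ => Finset.prod_nonneg fun k _ =>
        (key hAV hθV (hv i k).1).1) fun i _ => Finset.prod_le_prod (fun k _ =>
        (key hAV hθV (hv i k).1).1) fun k _ => (key hAV hθV (hv i k).1).2
    · exact Finset.prod_nonneg fun i _ => Finset.prod_nonneg fun k _ =>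
        (key hAV hθV (hv i k).1).1
    · exact Finset.prod_nonneg fun i _ => Finset.prod_nonneg fun k _ =>
        mul_nonneg hAU.le (Real.rpow_nonneg (hu i k).1.le _)
  have hpr0 : 0 ≤ prior φU θU φV θV p :=
    mul_nonneg (Finset.prod_nonneg fun i _ => Finset.prod_nonneg fun k _ =>
        (key hAU hθU (hu i k).1).1) (Finset.prod_nonneg fun i _ => Finset.prod_nonneg fun k _ =>
        (key hAV hθV (hv i k).1).1)
  refine (mul_le_mul (hle p hp) hpr hpr0 ?_).trans (le_of_eq ?_)
  · exact mul_nonneg hC (mul_nonneg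
      (Finset.prod_nonneg fun i _ => Finset.prod_nonneg fun k _ => Real.rpow_nonneg (hu i k).1.le _)
      (Finset.prod_nonneg fun i _ => Finset.prod_nonneg fun k _ => Real.rpow_nonneg (hv i k).1.le _))
  · simp only [Finset.prod_mul_distrib]
    ring

/-! ### Divergence at and above the threshold -/

/-- Lower bound for the gamma density on a dyadic interval, uniform over `(ρ/2, ρ]` and of order `ρ ^ (φ - 1)`. -/
lemma le_density {A φ θ κ ρ x : ℝ} (hA : 0 < A) (hφ : 0 < φ) (hθ : 0 < θ) (hρ : 0 < ρ) (hρκ : ρ ≤ κ)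
    (hx : x ∈ Set.Ioc (ρ / 2) ρ) :
    A * ((ρ / 2) ^ φ / ρ) * Real.exp (-θ * κ) ≤ A * x ^ (φ - 1) * Real.exp (-θ * x) := by
  have hx0 : 0 < x := (half_pos hρ).trans hx.1
  refine mul_le_mul (mul_le_mul_of_nonneg_left ?_ hA.le) (Real.exp_le_exp.2 ?_)
    (Real.exp_pos _).le (by positivity)
  · rw [Real.rpow_sub_one hx0.ne']
    exact div_le_div₀ (by positivity) (Real.rpow_le_rpow (by positivity) hx.1.le hφ.le) hx0 hx.2
  · nlinarith [hx.2]

/-- The mass of a dyadic box `u ∈ (ρ/2, ρ]`, `v ∈ (σ/2, σ]`, up to a constant that does not depend on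
`ρ` and `σ`. -/
lemma le_setLIntegral_box (hM : 1 ≤ M) (hN : 1 ≤ N) (hH : 1 ≤ H)
    {φU θU φV θV κ s : ℝ}
    (hφU : 0 < φU) (hθU : 0 < θU) (hφV : 0 < φV) (hθV : 0 < θV) (hs : 0 < s) :
    ∃ c : ℝ, 0 < c ∧ ∀ ρ σ : ℝ, 0 < ρ → ρ ≤ κ → 0 < σ → σ ≤ κ →
      ENNReal.ofReal (c * (ρ ^ (M * H * φU - 2 * s) * σ ^ (N * H * φV - 2 * s))) ≤
        ∫⁻ p in box M N H (Set.Ioc (ρ / 2) ρ) (Set.Ioc (σ / 2) σ),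
          ENNReal.ofReal (Q p ^ (-s) * prior φU θU φV θV p) := by
  have hM' : (0 : ℝ) < M := by exact_mod_cast hM
  have hN' : (0 : ℝ) < N := by exact_mod_cast hN
  have hH' : (0 : ℝ) < H := by exact_mod_cast hH
  set AU := θU ^ φU / Real.Gamma φU with hAUdef
  set AV := θV ^ φV / Real.Gamma φV with hAVdef
  have hAU : 0 < AU := div_pos (Real.rpow_pos_of_pos hθU _) (Real.Gamma_pos_of_pos hφU)
  have hAV : 0 < AV := div_pos (Real.rpow_pos_of_pos hθV _) (Real.Gamma_pos_of_pos hφV)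
  set BU := AU * (2⁻¹ ^ φU / 2) * Real.exp (-θU * κ) with hBU
  set BV := AV * (2⁻¹ ^ φV / 2) * Real.exp (-θV * κ) with hBV
  have hBU0 : 0 < BU := by positivity
  have hBV0 : 0 < BV := by positivity
  refine ⟨((M : ℝ) * N * H ^ 2) ^ (-s) * ((BU ^ H) ^ M * (BV ^ N) ^ H), by positivity,
    fun ρ σ hρ hρκ hσ hσκ => ?_⟩
  set lU := AU * ((ρ / 2) ^ φU / ρ) * Real.exp (-θU * κ) with hlU
  set lV := AV * ((σ / 2) ^ φV / σ) * Real.exp (-θV * κ) with hlV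
  have hlU0 : 0 < lU := by positivity
  have hlV0 : 0 < lV := by positivity
  have hmeas : MeasurableSet (box M N H (Set.Ioc (ρ / 2) ρ) (Set.Ioc (σ / 2) σ)) :=
    measurableSet_box measurableSet_Ioc measurableSet_Ioc
  set d := ((M : ℝ) * N * H ^ 2 * (ρ * σ) ^ 2) ^ (-s) * ((lU ^ H) ^ M * (lV ^ N) ^ H) with hd
  have hpt : ∀ p ∈ box M N H (Set.Ioc (ρ / 2) ρ) (Set.Ioc (σ / 2) σ),
      ENNReal.ofReal d ≤ ENNReal.ofReal (Q p ^ (-s) * prior φU θU φV θV p) := by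
    intro p hp
    obtain ⟨hu, hv⟩ := mem_box.1 hp
    have hu0 : ∀ i k, 0 < p.1 i k := fun i k => (half_pos hρ).trans (hu i k).1
    have hv0 : ∀ k j, 0 < p.2 k j := fun k j => (half_pos hσ).trans (hv k j).1
    refine ENNReal.ofReal_le_ofReal (mul_le_mul ?_ (mul_le_mul ?_ ?_ (by positivity) ?_)
      (by positivity) (Real.rpow_nonneg (Q_pos hM hN hH hu0 hv0).le _))
    · exact Real.rpow_le_rpow_of_nonpos (Q_pos hM hN hH hu0 hv0)
        (Q_le (mem_box.2 ⟨fun i k => ⟨hu0 i k, (hu i k).2⟩, fun k j => ⟨hv0 k j, (hv k j).2⟩⟩))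
        (neg_nonpos.2 hs.le)
    · calc (lU ^ H) ^ M = ∏ _i : Fin M, ∏ _k : Fin H, lU := by simp
        _ ≤ _ := Finset.prod_le_prod (fun _ _ => Finset.prod_nonneg fun _ _ => hlU0.le)
          fun i _ => Finset.prod_le_prod (fun _ _ => hlU0.le)
            fun k _ => le_density hAU hφU hθU hρ hρκ (hu i k)
    · calc (lV ^ N) ^ H = ∏ _i : Fin H, ∏ _k : Fin N, lV := by simp
        _ ≤ _ := Finset.prod_le_prod (fun _ _ => Finset.prod_nonneg fun _ _ => hlV0.le)
          fun i _ => Finset.prod_le_prod (fun _ _ => hlV0.le)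
            fun k _ => le_density hAV hφV hθV hσ hσκ (hv i k)
    · exact Finset.prod_nonneg fun i _ => Finset.prod_nonneg fun k _ =>
        mul_nonneg (mul_nonneg hAU.le (Real.rpow_nonneg (hu0 i k).le _)) (Real.exp_pos _).le
  have hvol : volume (box M N H (Set.Ioc (ρ / 2) ρ) (Set.Ioc (σ / 2) σ)) =
      ENNReal.ofReal (((ρ / 2) ^ H) ^ M * ((σ / 2) ^ N) ^ H) := by
    rw [volume_box, Real.volume_Ioc, Real.volume_Ioc, sub_half, sub_half,
      ENNReal.ofReal_mul (by positivity)]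
    simp only [ENNReal.ofReal_pow (half_pos hρ).le, ENNReal.ofReal_pow (half_pos hσ).le,
      ENNReal.ofReal_pow (pow_pos (half_pos hρ) H).le,
      ENNReal.ofReal_pow (pow_pos (half_pos hσ) N).le]
  have hmain : ENNReal.ofReal d * volume (box M N H (Set.Ioc (ρ / 2) ρ) (Set.Ioc (σ / 2) σ)) ≤
      ∫⁻ p in box M N H (Set.Ioc (ρ / 2) ρ) (Set.Ioc (σ / 2) σ),
          ENNReal.ofReal (Q p ^ (-s) * prior φU θU φV θV p) := by
    rw [← setLIntegral_const]
    exact setLIntegral_mono' hmeas hpt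
  refine le_trans (le_of_eq ?_) hmain
  rw [hvol, ← ENNReal.ofReal_mul (by positivity)]
  congr 1
  have e1 : lU * (ρ / 2) = BU * ρ ^ φU := by
    rw [hlU, hBU, div_eq_mul_inv ρ 2, Real.mul_rpow hρ.le (by norm_num)]
    field_simp
  have e2 : lV * (σ / 2) = BV * σ ^ φV := by
    rw [hlV, hBV, div_eq_mul_inv σ 2, Real.mul_rpow hσ.le (by norm_num)]
    field_simp
  have e3 : ρ ^ (M * H * φU - 2 * s) = ((ρ ^ φU) ^ H) ^ M * (ρ ^ 2) ^ (-s) := by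
    rw [← Real.rpow_natCast ρ 2, ← Real.rpow_mul hρ.le, ← pow_mul, ← Real.rpow_natCast,
      ← Real.rpow_mul hρ.le, ← Real.rpow_add hρ]
    congr 1; push_cast; ring
  have e4 : σ ^ (N * H * φV - 2 * s) = ((σ ^ φV) ^ N) ^ H * (σ ^ 2) ^ (-s) := by
    rw [← Real.rpow_natCast σ 2, ← Real.rpow_mul hσ.le, ← pow_mul, ← Real.rpow_natCast,
      ← Real.rpow_mul hσ.le, ← Real.rpow_add hσ]
    congr 1; push_cast; ring
  have e5 : ((M : ℝ) * N * H ^ 2 * (ρ * σ) ^ 2) ^ (-s) =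
      ((M : ℝ) * N * H ^ 2) ^ (-s) * ((ρ ^ 2) ^ (-s) * (σ ^ 2) ^ (-s)) := by
    rw [Real.mul_rpow (by positivity) (by positivity), mul_pow,
      Real.mul_rpow (x := ρ ^ 2) (by positivity) (by positivity)]
  calc _ = ((M : ℝ) * N * H ^ 2) ^ (-s) * ((ρ ^ 2) ^ (-s) * (σ ^ 2) ^ (-s)) *
        (((BU * ρ ^ φU) ^ H) ^ M * ((BV * σ ^ φV) ^ N) ^ H) := by
        rw [e3, e4]; simp only [mul_pow]; ring
    _ = _ := by rw [← e1, ← e2, hd, e5]; simp only [mul_pow]; ring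

/-- Infinitely many pairwise disjoint pieces, each of mass at least `c ≠ 0`, have infinite total mass. -/
lemma setLIntegral_eq_top {α : Type*} [MeasurableSpace α] {μ : Measure α} {f : α → ENNReal}
    {S : Set α} {B : ℕ → Set α} (hB : ∀ r, MeasurableSet (B r))
    (hd : Pairwise (Function.onFun Disjoint B)) (hS : ∀ r, B r ⊆ S) {c : ENNReal} (hc : c ≠ 0)
    (h : ∀ r, c ≤ ∫⁻ x in B r, f x ∂μ) : ∫⁻ x in S, f x ∂μ = ⊤ := by
  refine top_unique ?_
  calc ⊤ = ∑' _ : ℕ, c := (ENNReal.tsum_const_eq_top_of_ne_zero hc).symm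
    _ ≤ ∑' r, ∫⁻ x in B r, f x ∂μ := ENNReal.tsum_le_tsum h
    _ = ∫⁻ x in ⋃ r, B r, f x ∂μ := (lintegral_iUnion hB hd f).symm
    _ ≤ _ := lintegral_mono_set (Set.iUnion_subset hS)

lemma disjoint_dyadic {κ : ℝ} (hκ : 0 < κ) {m n : ℕ} (hmn : m ≠ n) :
    Disjoint (Set.Ioc (κ * 2⁻¹ ^ m / 2) (κ * 2⁻¹ ^ m)) (Set.Ioc (κ * 2⁻¹ ^ n / 2) (κ * 2⁻¹ ^ n)) := by
  have key : ∀ m n : ℕ, m < n → κ * (2⁻¹ : ℝ) ^ n ≤ κ * 2⁻¹ ^ m / 2 := by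
    intro m n h
    have := pow_le_pow_of_le_one (by norm_num : (0 : ℝ) ≤ 2⁻¹) (by norm_num) h
    rw [pow_succ] at this
    nlinarith
  rw [Set.disjoint_left]
  intro x hx hy
  rcases lt_or_gt_of_ne hmn with h | h
  · linarith [key m n h, hx.1, hy.2]
  · linarith [key n m h, hx.2, hy.1]

lemma setLIntegral_top (hM : 1 ≤ M) (hN : 1 ≤ N) (hH : 1 ≤ H)
    {φU θU φV θV κ s : ℝ}
    (hφU : 0 < φU) (hθU : 0 < θU) (hφV : 0 < φV) (hθV : 0 < θV) (hκ : 0 < κ)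
    (hs : (H : ℝ) * min ((M : ℝ) * φU) ((N : ℝ) * φV) / 2 ≤ s) :
    ∫⁻ p in box M N H (Set.Ioc 0 κ) (Set.Ioc 0 κ),
      ENNReal.ofReal (Q p ^ (-s) * prior φU θU φV θV p) = ⊤ := by
  have hM' : (0 : ℝ) < M := by exact_mod_cast hM
  have hN' : (0 : ℝ) < N := by exact_mod_cast hN
  have hH' : (0 : ℝ) < H := by exact_mod_cast hH
  have hs0 : 0 < s := lt_of_lt_of_le (by positivity) hs
  obtain ⟨c, hc, hbox⟩ := le_setLIntegral_box (κ := κ) hM hN hH hφU hθU hφV hθV hs0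
  set ρ : ℕ → ℝ := fun r => κ * 2⁻¹ ^ r with hρ
  have hρ0 : ∀ r, 0 < ρ r := fun r => by positivity
  have hρκ : ∀ r, ρ r ≤ κ := fun r =>
    mul_le_of_le_one_right hκ.le (pow_le_one₀ (by norm_num) (by norm_num))
  have hc0 : ENNReal.ofReal (c * (κ ^ (M * H * φU - 2 * s) * κ ^ (N * H * φV - 2 * s))) ≠ 0 :=
    (ENNReal.ofReal_pos.2 (by positivity)).ne'
  have hsub : ∀ {x : ℝ}, 0 < x → x ≤ κ → Set.Ioc (x / 2) x ⊆ Set.Ioc 0 κ :=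
    fun hx hxκ => Set.Ioc_subset_Ioc (half_pos hx).le hxκ
  have hmono : ∀ {A A' B B' : Set ℝ}, A ⊆ A' → B ⊆ B' → box M N H A B ⊆ box M N H A' B' :=
    fun hA hB p hp => mem_box.2 ⟨fun i k => hA ((mem_box.1 hp).1 i k),
      fun k j => hB ((mem_box.1 hp).2 k j)⟩
  rcases le_total ((M : ℝ) * φU) ((N : ℝ) * φV) with h | h
  · rw [min_eq_left h] at hs
    refine setLIntegral_eq_top (B := fun r => box M N H (Set.Ioc (ρ r / 2) (ρ r))
      (Set.Ioc (κ / 2) κ)) (fun r => measurableSet_box measurableSet_Ioc measurableSet_Ioc)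
      (fun m n hmn => Set.disjoint_left.2 fun p hp hq => ?_)
      (fun r => hmono (hsub (hρ0 r) (hρκ r)) (hsub hκ le_rfl)) hc0
      (fun r => le_trans (ENNReal.ofReal_le_ofReal ?_) (hbox (ρ r) κ (hρ0 r) (hρκ r) hκ le_rfl))
    · exact Set.disjoint_left.1 (disjoint_dyadic hκ hmn) ((mem_box.1 hp).1 ⟨0, hM⟩ ⟨0, hH⟩)
        ((mem_box.1 hq).1 ⟨0, hM⟩ ⟨0, hH⟩)
    · refine mul_le_mul_of_nonneg_left (mul_le_mul_of_nonneg_right ?_ (by positivity)) hc.le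
      exact Real.rpow_le_rpow_of_nonpos (hρ0 r) (hρκ r) (by linarith)
  · rw [min_eq_right h] at hs
    refine setLIntegral_eq_top (B := fun r => box M N H (Set.Ioc (κ / 2) κ)
      (Set.Ioc (ρ r / 2) (ρ r))) (fun r => measurableSet_box measurableSet_Ioc measurableSet_Ioc)
      (fun m n hmn => Set.disjoint_left.2 fun p hp hq => ?_)
      (fun r => hmono (hsub hκ le_rfl) (hsub (hρ0 r) (hρκ r))) hc0
      (fun r => le_trans (ENNReal.ofReal_le_ofReal ?_) (hbox κ (ρ r) hκ le_rfl (hρ0 r) (hρκ r)))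
    · exact Set.disjoint_left.1 (disjoint_dyadic hκ hmn) ((mem_box.1 hp).2 ⟨0, hH⟩ ⟨0, hN⟩)
        ((mem_box.1 hq).2 ⟨0, hH⟩ ⟨0, hN⟩)
    · refine mul_le_mul_of_nonneg_left (mul_le_mul_of_nonneg_left ?_ (by positivity)) hc.le
      exact Real.rpow_le_rpow_of_nonpos (hρ0 r) (hρκ r) (by linarith)

end GammaRLCT

/-- For `M, N, H ≥ 1`, hyperparameters `φU, θU, φV, θV > 0` and `κ > 0`,
the Lebesgue integral over `[0,κ]^{M×H} × [0,κ]^{H×N}` of `(‖UV‖²)^{-s}` times the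
gamma prior density is finite iff `s < H · min{M φU, N φV} / 2`. -/
theorem rlct_of_UV_norm_sq_with_gamma_prior
    (M N H : ℕ) (hM : 1 ≤ M) (hN : 1 ≤ N) (hH : 1 ≤ H)
    (φU θU φV θV κ : ℝ)
    (hφU : 0 < φU) (hθU : 0 < θU) (hφV : 0 < φV) (hθV : 0 < θV) (hκ : 0 < κ)
    (s : ℝ) :
    (∫⁻ p in {p : (Fin M → Fin H → ℝ) × (Fin H → Fin N → ℝ) |
        (∀ i k, p.1 i k ∈ Set.Icc (0 : ℝ) κ) ∧ (∀ k j, p.2 k j ∈ Set.Icc (0 : ℝ) κ)},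
      ENNReal.ofReal
        ((∑ i, ∑ j, (∑ k, p.1 i k * p.2 k j) ^ 2) ^ (-s) *
          ((∏ i, ∏ k, θU ^ φU / Real.Gamma φU * p.1 i k ^ (φU - 1) *
              Real.exp (-θU * p.1 i k)) *
           (∏ k, ∏ j, θV ^ φV / Real.Gamma φV * p.2 k j ^ (φV - 1) *
              Real.exp (-θV * p.2 k j))))) ≠ ⊤
    ↔ s < (H : ℝ) * min ((M : ℝ) * φU) ((N : ℝ) * φV) / 2 := by
  -- Faces of the cube are null, so entries may be taken positive; this also discards the locus where
  -- `‖UV‖² = 0` and `0 ^ (-s)` takes its junk value.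
  have hset : {p : (Fin M → Fin H → ℝ) × (Fin H → Fin N → ℝ) |
        (∀ i k, p.1 i k ∈ Set.Icc (0 : ℝ) κ) ∧ (∀ k j, p.2 k j ∈ Set.Icc (0 : ℝ) κ)} =
      GammaRLCT.box M N H (Set.Icc 0 κ) (Set.Icc 0 κ) := Set.ext fun p => GammaRLCT.mem_box.symm
  rw [hset, GammaRLCT.restrict_box, ← Measure.restrict_congr_set Ioc_ae_eq_Icc, ← GammaRLCT.restrict_box]
  constructor
  · intro h
    by_contra! hs
    exact h (GammaRLCT.setLIntegral_top hM hN hH hφU hθU hφV hθV hκ hs)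
  · intro hs
    exact (GammaRLCT.setLIntegral_lt_top hM hN hH hφU hθU hφV hθV hκ hs).ne
end

section
/- Let M, N ≥ 1 be integers, let a, b > 0 and κ > 0. For every real number s, the Lebesgue integral ∫_{[0,κ]^M × [0,κ]^N} ((Σ_{i=1}^M u_i²)(Σ_{j=1}^N v_j²))^{−s} (∏_{i=1}^M u_i^{a−1}) (∏_{j=1}^N v_j^{b−1}) du dv is finite if and only if s < min{Ma, Nb}/2. -/
/-!
The integrand is a product of a function of `u` and a function of `v`, both nonnegative, so by
Tonelli the integral is a product of two one-block integrals. Each factor is nonzero, hence the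
product is finite iff both factors are, and it remains to show that
`∫_{[0,κ]^n} (∑ u_i²)^{-s} ∏ u_i^{a-1} du` is finite iff `s < n a / 2`.

The sum `∑ u_i²` lies between `‖u‖²` and `n ‖u‖²` for the sup norm `‖·‖`, so it may be replaced by
`‖u‖²`. Under the product of the measures `a t^{a-1} dt` on `(0,κ]`, the box `{‖u‖ ≤ t}` has mass
`(t^a)^n = t^{na}` for `0 ≤ t ≤ κ`; thus the law of the sup norm is `(na) t^{na-1} dt` on `(0,κ]`
(`map_norm_pi_powMeasure`). The question becomes the finiteness of `∫_0^κ t^{-2s + na - 1} dt`, that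
is, `-1 < -2s + na - 1`.
-/

open MeasureTheory Finset

/-- The measure `a t^{a-1} dt` on `(0, κ]`, normalised so that `(0, t]` has mass `t^a`. -/
noncomputable def powMeasure (a κ : ℝ) : Measure ℝ :=
  (volume.restrict (Set.Ioc 0 κ)).withDensity fun t => ENNReal.ofReal (a * t ^ (a - 1))

lemma measurable_powDensity (a : ℝ) :
    Measurable fun t : ℝ => ENNReal.ofReal (a * t ^ (a - 1)) := by
  fun_prop

lemma powMeasure_apply {a κ t : ℝ} (ha : 0 < a) (hκ : 0 < κ) (ht : 0 ≤ t) {S : Set ℝ}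
    (hS : MeasurableSet S) (h : S ∩ Set.Ioc 0 κ = Set.Ioc 0 (min t κ)) :
    powMeasure a κ S = ENNReal.ofReal (min t κ ^ a) := by
  have hm : 0 ≤ min t κ := le_min ht hκ.le
  rw [powMeasure, withDensity_apply _ hS, Measure.restrict_restrict hS, h,
    ← ofReal_integral_eq_lintegral_ofReal]
  · rw [← intervalIntegral.integral_of_le hm, intervalIntegral.integral_const_mul,
      integral_rpow (Or.inl (by linarith)), sub_add_cancel, Real.zero_rpow ha.ne']
    congr 1
    field_simp
    ring
  · rw [← IntegrableOn, ← intervalIntegrable_iff_integrableOn_Ioc_of_le hm]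
    exact (intervalIntegral.intervalIntegrable_rpow' (by linarith)).const_mul a
  · refine (ae_restrict_iff' measurableSet_Ioc).2 (.of_forall fun x hx => ?_)
    exact mul_nonneg ha.le (Real.rpow_nonneg hx.1.le _)

lemma powMeasure_Iic {a κ t : ℝ} (ha : 0 < a) (hκ : 0 < κ) (ht : 0 ≤ t) :
    powMeasure a κ (Set.Iic t) = ENNReal.ofReal (min t κ ^ a) := by
  refine powMeasure_apply ha hκ ht measurableSet_Iic ?_
  ext x; simp only [Set.mem_inter_iff, Set.mem_Iic, Set.mem_Ioc, le_min_iff]; tauto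

lemma powMeasure_closedBall {a κ t : ℝ} (ha : 0 < a) (hκ : 0 < κ) (ht : 0 ≤ t) :
    powMeasure a κ (Metric.closedBall 0 t) = ENNReal.ofReal (min t κ ^ a) := by
  refine powMeasure_apply ha hκ ht measurableSet_closedBall ?_
  ext x
  simp only [Set.mem_inter_iff, mem_closedBall_zero_iff, Real.norm_eq_abs, abs_le, Set.mem_Ioc,
    le_min_iff]
  constructor
  · tauto
  · rintro ⟨h1, h2, h3⟩
    exact ⟨⟨by linarith, h2⟩, h1, h3⟩

lemma isFiniteMeasure_powMeasure {a κ : ℝ} (ha : 0 < a) (hκ : 0 < κ) :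
    IsFiniteMeasure (powMeasure a κ) := by
  refine ⟨?_⟩
  rw [powMeasure_apply ha hκ hκ.le MeasurableSet.univ (by simp)]
  exact ENNReal.ofReal_lt_top

/-- The sup norm of a vector with independent `powMeasure a κ` coordinates has law
`powMeasure (n * a) κ`. -/
lemma map_norm_pi_powMeasure {n : ℕ} (hn : 1 ≤ n) {a κ : ℝ} (ha : 0 < a) (hκ : 0 < κ) :
    (Measure.pi fun _ : Fin n => powMeasure a κ).map (fun u => ‖u‖) = powMeasure (n * a) κ := by
  have hn0 : (0 : ℝ) < n := by exact_mod_cast hn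
  have := isFiniteMeasure_powMeasure ha hκ
  have := isFiniteMeasure_powMeasure (mul_pos hn0 ha) hκ
  refine Measure.ext_of_Iic _ _ fun t => ?_
  rw [Measure.map_apply measurable_norm measurableSet_Iic]
  rcases lt_or_ge t 0 with ht | ht
  · have h1 : (fun u : Fin n → ℝ => ‖u‖) ⁻¹' Set.Iic t = ∅ := by
      ext u
      simpa using ht.trans_le (norm_nonneg u)
    have h2 : Set.Iic t ∩ Set.Ioc 0 κ = ∅ := by
      ext x
      simp only [Set.mem_inter_iff, Set.mem_Iic, Set.mem_Ioc, Set.mem_empty_iff_false, iff_false]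
      rintro ⟨h, h', _⟩
      linarith
    rw [h1, measure_empty, powMeasure, withDensity_apply _ measurableSet_Iic,
      Measure.restrict_restrict measurableSet_Iic, h2]
    simp
  · have h1 : (fun u : Fin n → ℝ => ‖u‖) ⁻¹' Set.Iic t
        = Set.univ.pi fun _ => Metric.closedBall (0 : ℝ) t := by
      ext u
      simp [pi_norm_le_iff_of_nonneg ht]
    have hm : 0 ≤ min t κ := le_min ht hκ.le
    rw [h1, Measure.pi_pi, powMeasure_Iic (mul_pos hn0 ha) hκ ht]
    simp only [powMeasure_closedBall ha hκ ht, prod_const, card_univ, Fintype.card_fin]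
    rw [← ENNReal.ofReal_pow (Real.rpow_nonneg hm _), ← Real.rpow_natCast, ← Real.rpow_mul hm,
      mul_comm]

lemma lintegral_pi_prod (μ : Measure ℝ) [SigmaFinite μ] :
    ∀ (n : ℕ) (f : Fin n → ℝ → ENNReal), (∀ i, Measurable (f i)) →
      ∫⁻ x, ∏ i, f i (x i) ∂(Measure.pi fun _ : Fin n => μ) = ∏ i, ∫⁻ t, f i t ∂μ := by
  intro n
  induction n with
  | zero => intro f _; simp
  | succ n ih =>
    intro f hf
    rw [← (measurePreserving_piFinSuccAbove (fun _ : Fin (n + 1) => μ) 0).symm.lintegral_comp_emb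
      (MeasurableEquiv.measurableEmbedding _)]
    simp only [Fin.prod_univ_succ]
    rw [← ih (fun i => f i.succ) (fun i => hf _), ← lintegral_prod_mul]
    · rfl
    · exact (hf 0).aemeasurable
    · exact (Finset.measurable_prod _
        fun i _ => (hf i.succ).comp (measurable_pi_apply i)).aemeasurable

/-- The product of copies of `powMeasure a κ` has density `∏ a u_i^{a-1}` on `(0, κ]^n`. -/
lemma pi_powMeasure {n : ℕ} {a κ : ℝ} (ha : 0 < a) (hκ : 0 < κ) :
    (Measure.pi fun _ : Fin n => powMeasure a κ) =
      (Measure.pi fun _ : Fin n => volume.restrict (Set.Ioc 0 κ)).withDensity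
        fun u => ∏ i, ENNReal.ofReal (a * u i ^ (a - 1)) := by
  have := isFiniteMeasure_powMeasure ha hκ
  refine (Measure.pi_eq fun S hS => ?_)
  have hb : MeasurableSet (Set.univ.pi S) := MeasurableSet.univ_pi hS
  rw [withDensity_apply _ hb, ← lintegral_indicator hb]
  simp only [powMeasure, withDensity_apply _ (hS _)]
  simp only [← lintegral_indicator (hS _)]
  rw [← lintegral_pi_prod _ n _ fun i => (measurable_powDensity a).indicator (hS i)]
  refine lintegral_congr fun u => ?_
  by_cases hu : u ∈ Set.univ.pi S
  · rw [Set.indicator_of_mem hu]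
    exact prod_congr rfl fun i hi => (Set.indicator_of_mem (hu i (Set.mem_univ i))
      fun t => ENNReal.ofReal (a * t ^ (a - 1))).symm
  · rw [Set.indicator_of_notMem hu]
    obtain ⟨i, hi⟩ : ∃ i, u i ∉ S i := by simpa using hu
    exact (prod_eq_zero (mem_univ i) (Set.indicator_of_notMem hi _)).symm

/-- Real powers of mutually comparable nonnegative numbers are comparable, for exponents of
either sign. At `x = y = 0` it holds whatever the value of `0 ^ p`. -/
lemma rpow_le_of_comparable {x y c : ℝ} (hx : 0 ≤ x) (hy : 0 ≤ y) (hc : 1 ≤ c)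
    (hxy : x ≤ c * y) (hyx : y ≤ c * x) (p : ℝ) : x ^ p ≤ c ^ |p| * y ^ p := by
  have hc0 : 0 < c := by linarith
  rcases hy.eq_or_lt with rfl | hy0
  · have : x = 0 := by linarith
    subst this
    exact le_mul_of_one_le_left (Real.rpow_nonneg le_rfl _)
      (Real.one_le_rpow hc (abs_nonneg p))
  have hx0 : 0 < x := by
    by_contra h
    have : x = 0 := by linarith
    subst this
    linarith
  rcases le_total 0 p with hp | hp
  · rw [abs_of_nonneg hp, ← Real.mul_rpow hc0.le hy]
    exact Real.rpow_le_rpow hx hxy hp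
  · rw [abs_of_nonpos hp, Real.rpow_neg hc0.le, ← div_eq_inv_mul,
      le_div_iff₀ (Real.rpow_pos_of_pos hc0 p), mul_comm, ← Real.mul_rpow hc0.le hx]
    exact Real.rpow_le_rpow_of_nonpos hy0 hyx hp

lemma lintegral_ne_top_of_le_mul {α : Type*} [MeasurableSpace α] {μ : Measure α} {f g : α → ℝ}
    {c : ℝ} (hc : 0 ≤ c) (h : ∀ x, f x ≤ c * g x) (hg : ∫⁻ x, ENNReal.ofReal (g x) ∂μ ≠ ⊤) :
    ∫⁻ x, ENNReal.ofReal (f x) ∂μ ≠ ⊤ := by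
  refine ne_top_of_le_ne_top (ENNReal.mul_ne_top (ENNReal.ofReal_ne_top (r := c)) hg) ?_
  rw [← lintegral_const_mul' _ _ ENNReal.ofReal_ne_top]
  exact lintegral_mono fun x => by
    rw [← ENNReal.ofReal_mul hc]; exact ENNReal.ofReal_le_ofReal (h x)

lemma lintegral_rpow_powMeasure_ne_top_iff {d κ : ℝ} (hd : 0 < d) (hκ : 0 < κ) (s : ℝ) :
    ∫⁻ t, ENNReal.ofReal ((t ^ 2) ^ (-s)) ∂(powMeasure d κ) ≠ ⊤ ↔ s < d / 2 := by
  have hmeas : Measurable fun t : ℝ => ENNReal.ofReal ((t ^ 2) ^ (-s)) := by fun_prop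
  rw [powMeasure, lintegral_withDensity_eq_lintegral_mul _ (measurable_powDensity d) hmeas]
  have h1 : ∫⁻ t in Set.Ioc 0 κ, ((fun t => ENNReal.ofReal (d * t ^ (d - 1))) *
      fun t => ENNReal.ofReal ((t ^ 2) ^ (-s))) t
      = ENNReal.ofReal d * ∫⁻ t in Set.Ioo 0 κ, ENNReal.ofReal (t ^ (d - 1 - 2 * s)) := by
    rw [← setLIntegral_congr Ioo_ae_eq_Ioc, ← lintegral_const_mul' _ _ ENNReal.ofReal_ne_top]
    refine setLIntegral_congr_fun measurableSet_Ioo fun t ht => ?_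
    have ht0 : 0 < t := ht.1
    simp only [Pi.mul_apply]
    rw [← ENNReal.ofReal_mul (by positivity), ← ENNReal.ofReal_mul hd.le, mul_assoc,
      ← Real.rpow_natCast, ← Real.rpow_mul ht0.le, ← Real.rpow_add ht0]
    congr 3
    push_cast
    ring
  have h2 : ∫⁻ t in Set.Ioo 0 κ, ENNReal.ofReal (t ^ (d - 1 - 2 * s)) ≠ ⊤ ↔ s < d / 2 := by
    rw [← lt_top_iff_ne_top, ← hasFiniteIntegral_iff_ofReal]
    · have := intervalIntegral.integrableOn_Ioo_rpow_iff (s := d - 1 - 2 * s) hκ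
      rw [IntegrableOn, Integrable, and_iff_right (by fun_prop)] at this
      rw [this]
      constructor <;> intro h <;> linarith
    · exact (ae_restrict_iff' measurableSet_Ioo).2
        (.of_forall fun x hx => Real.rpow_nonneg hx.1.le _)
  rw [h1, ← h2]
  have hd' : ENNReal.ofReal d ≠ 0 := by simpa using hd
  simp [ENNReal.mul_eq_top, hd']

/-- The integral over one block of variables. The half-open box differs from the closed one by a
null set and keeps all coordinates positive. -/
noncomputable def blockIntegral (n : ℕ) (a κ s : ℝ) : ENNReal :=
  ∫⁻ u, ENNReal.ofReal ((∑ i, u i ^ 2) ^ (-s) * ∏ i, u i ^ (a - 1))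
    ∂(Measure.pi fun _ : Fin n => volume.restrict (Set.Ioc 0 κ))

lemma ae_pi_mem_Ioc (n : ℕ) (κ : ℝ) :
    ∀ᵐ u ∂(Measure.pi fun _ : Fin n => volume.restrict (Set.Ioc 0 κ)),
      ∀ i, u i ∈ Set.Ioc 0 κ :=
  Filter.eventually_all.2 fun _ =>
    Measure.tendsto_eval_ae_ae.eventually (ae_restrict_mem measurableSet_Ioc)

lemma lintegral_pi_powMeasure {n : ℕ} {a κ : ℝ} (ha : 0 < a) (hκ : 0 < κ) (s : ℝ) :
    ∫⁻ u, ENNReal.ofReal ((∑ i, u i ^ 2) ^ (-s)) ∂(Measure.pi fun _ : Fin n => powMeasure a κ)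
      = ENNReal.ofReal (a ^ n) * blockIntegral n a κ s := by
  have hdens : Measurable fun u : Fin n → ℝ => ∏ i, ENNReal.ofReal (a * u i ^ (a - 1)) :=
    Finset.measurable_prod _ fun i _ => (measurable_powDensity a).comp (measurable_pi_apply i)
  rw [pi_powMeasure ha hκ, lintegral_withDensity_eq_lintegral_mul _ hdens (by fun_prop),
    blockIntegral, ← lintegral_const_mul' _ _ ENNReal.ofReal_ne_top]
  refine lintegral_congr_ae ?_
  filter_upwards [ae_pi_mem_Ioc n κ] with u hu
  have hp : ∀ i, 0 ≤ u i ^ (a - 1) := fun i => Real.rpow_nonneg (hu i).1.le _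
  simp only [Pi.mul_apply]
  rw [← ENNReal.ofReal_prod_of_nonneg fun i _ => mul_nonneg ha.le (hp i),
    ← ENNReal.ofReal_mul (prod_nonneg fun i _ => mul_nonneg ha.le (hp i)),
    ← ENNReal.ofReal_mul (by positivity), prod_mul_distrib]
  simp only [prod_const, card_univ, Fintype.card_fin]
  congr 1
  ring

lemma blockIntegral_ne_top_iff {n : ℕ} (hn : 1 ≤ n) {a κ : ℝ} (ha : 0 < a) (hκ : 0 < κ) (s : ℝ) :
    blockIntegral n a κ s ≠ ⊤ ↔ s < n * a / 2 := by
  have hn1 : (1 : ℝ) ≤ n := by exact_mod_cast hn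
  have hn0 : (0 : ℝ) < n := by linarith
  have hmeas : Measurable fun t : ℝ => ENNReal.ofReal ((t ^ 2) ^ (-s)) := by fun_prop
  rw [← lintegral_rpow_powMeasure_ne_top_iff (mul_pos hn0 ha) hκ s,
    ← map_norm_pi_powMeasure hn ha hκ, lintegral_map hmeas measurable_norm]
  have hK : (0 : ℝ) ≤ (n : ℝ) ^ |-s| := by positivity
  have hsum : ∀ u : Fin n → ℝ, 0 ≤ ∑ i, u i ^ 2 := fun u => sum_nonneg fun i _ => sq_nonneg _
  have hle : ∀ u : Fin n → ℝ, ∑ i, u i ^ 2 ≤ n * ‖u‖ ^ 2 := fun u => by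
    calc ∑ i, u i ^ 2 ≤ ∑ _i : Fin n, ‖u‖ ^ 2 := by
          refine sum_le_sum fun i _ => ?_
          rw [← sq_abs, ← Real.norm_eq_abs]
          gcongr
          exact norm_le_pi_norm u i
      _ = n * ‖u‖ ^ 2 := by simp
  have hge : ∀ u : Fin n → ℝ, ‖u‖ ^ 2 ≤ ∑ i, u i ^ 2 := fun u => by
    refine (Real.le_sqrt (norm_nonneg _) (hsum u)).1 ?_
    refine (pi_norm_le_iff_of_nonneg (Real.sqrt_nonneg _)).2 fun i => ?_
    refine Real.le_sqrt_of_sq_le ?_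
    rw [Real.norm_eq_abs, sq_abs]
    exact single_le_sum (f := fun i => u i ^ 2) (fun i _ => sq_nonneg _) (mem_univ i)
  have hle' : ∀ u : Fin n → ℝ, ∑ i, u i ^ 2 ≤ n * ∑ i, u i ^ 2 := fun u =>
    le_mul_of_one_le_left (hsum u) hn1
  have hge' : ∀ u : Fin n → ℝ, ‖u‖ ^ 2 ≤ n * ∑ i, u i ^ 2 := fun u => (hge u).trans (hle' u)
  have hscale : blockIntegral n a κ s ≠ ⊤ ↔ ∫⁻ u, ENNReal.ofReal ((∑ i, u i ^ 2) ^ (-s))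
      ∂(Measure.pi fun _ : Fin n => powMeasure a κ) ≠ ⊤ := by
    rw [lintegral_pi_powMeasure ha hκ]
    have : 0 < a ^ n := by positivity
    simp [ENNReal.mul_eq_top, ENNReal.ofReal_eq_zero, not_le.2 this]
  rw [hscale]
  exact ⟨lintegral_ne_top_of_le_mul hK fun u =>
      rpow_le_of_comparable (sq_nonneg _) (hsum u) hn1 (hge' u) (hle u) (-s),
    lintegral_ne_top_of_le_mul hK fun u =>
      rpow_le_of_comparable (hsum u) (sq_nonneg _) hn1 (hle u) (hge' u) (-s)⟩

lemma measurable_blockIntegrand (n : ℕ) (a s : ℝ) :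
    Measurable fun u : Fin n → ℝ =>
      ENNReal.ofReal ((∑ i, u i ^ 2) ^ (-s) * ∏ i, u i ^ (a - 1)) := by
  fun_prop

lemma blockIntegral_ne_zero {n : ℕ} (hn : 1 ≤ n) {a κ : ℝ} (hκ : 0 < κ) (s : ℝ) :
    blockIntegral n a κ s ≠ 0 := by
  intro h
  rw [blockIntegral, lintegral_eq_zero_iff (measurable_blockIntegrand n a s)] at h
  have hfalse : ∀ᵐ _u ∂(Measure.pi fun _ : Fin n => volume.restrict (Set.Ioc 0 κ)), False := by
    filter_upwards [h, ae_pi_mem_Ioc n κ] with u h0 hu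
    have hsum : 0 < ∑ i, u i ^ 2 :=
      sum_pos (fun i _ => pow_pos (hu i).1 2) ⟨⟨0, hn⟩, mem_univ _⟩
    have hprod : 0 < ∏ i, u i ^ (a - 1) := prod_pos fun i _ => Real.rpow_pos_of_pos (hu i).1 _
    have := mul_pos (Real.rpow_pos_of_pos hsum (-s)) hprod
    simp only [Pi.zero_apply, ENNReal.ofReal_eq_zero] at h0
    linarith
  rw [Filter.eventually_false_iff_eq_bot, ae_eq_bot] at hfalse
  have := congrArg (fun μ => μ (Set.univ.pi fun _ => Set.univ)) hfalse
  simp [Measure.pi_pi, -Set.pi_univ, not_le.2 hκ] at this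

/-- Tonelli on the product of the two closed boxes. -/
lemma lintegral_eq_blockIntegral_mul (M N : ℕ) (a b κ s : ℝ) :
    (∫⁻ p in {p : (Fin M → ℝ) × (Fin N → ℝ) |
        (∀ i, p.1 i ∈ Set.Icc (0 : ℝ) κ) ∧ (∀ j, p.2 j ∈ Set.Icc (0 : ℝ) κ)},
      ENNReal.ofReal
        (((∑ i, (p.1 i) ^ 2) * (∑ j, (p.2 j) ^ 2)) ^ (-s) *
          ((∏ i, p.1 i ^ (a - 1)) * (∏ j, p.2 j ^ (b - 1)))))
      = blockIntegral M a κ s * blockIntegral N b κ s := by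
  have hset : {p : (Fin M → ℝ) × (Fin N → ℝ) |
      (∀ i, p.1 i ∈ Set.Icc (0 : ℝ) κ) ∧ (∀ j, p.2 j ∈ Set.Icc (0 : ℝ) κ)}
      = (Set.univ.pi fun _ => Set.Icc 0 κ) ×ˢ (Set.univ.pi fun _ => Set.Icc 0 κ) := by
    ext p
    simp only [Set.mem_ofPred_eq, Set.mem_prod, Set.mem_univ_pi]
  have hpi : ∀ n : ℕ, (volume : Measure (Fin n → ℝ)).restrict (Set.univ.pi fun _ => Set.Icc 0 κ)
      = Measure.pi fun _ : Fin n => volume.restrict (Set.Ioc 0 κ) := fun n => by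
    rw [volume_pi, Measure.restrict_pi_pi]
    simp only [Measure.restrict_congr_set (Ioc_ae_eq_Icc (μ := (volume : Measure ℝ)))]
  rw [hset, Measure.volume_eq_prod, ← Measure.prod_restrict, hpi, hpi, blockIntegral,
    blockIntegral, ← lintegral_prod_mul (measurable_blockIntegrand M a s).aemeasurable
      (measurable_blockIntegrand N b s).aemeasurable]
  refine lintegral_congr_ae ?_
  filter_upwards [Measure.quasiMeasurePreserving_fst.ae (ae_pi_mem_Ioc M κ)] with p hp
  have h1 : 0 ≤ ∑ i, p.1 i ^ 2 := sum_nonneg fun i _ => sq_nonneg _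
  have h2 : 0 ≤ ∑ j, p.2 j ^ 2 := sum_nonneg fun i _ => sq_nonneg _
  have h3 : 0 ≤ ∏ i, p.1 i ^ (a - 1) := prod_nonneg fun i _ => Real.rpow_nonneg (hp i).1.le _
  rw [← ENNReal.ofReal_mul (by positivity), Real.mul_rpow h1 h2]
  congr 1
  ring

/-- Single-block RLCT computation: for `M, N ≥ 1`, `a, b > 0`, `κ > 0`,
the integral over `[0,κ]^M × [0,κ]^N` of `((Σ u_i²)(Σ v_j²))^{-s} ∏ u_i^{a-1} ∏ v_j^{b-1}`
is finite iff `s < min{M a, N b} / 2`. -/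
theorem single_block_rlct
    (M N : ℕ) (hM : 1 ≤ M) (hN : 1 ≤ N)
    (a b κ : ℝ) (ha : 0 < a) (hb : 0 < b) (hκ : 0 < κ) (s : ℝ) :
    (∫⁻ p in {p : (Fin M → ℝ) × (Fin N → ℝ) |
        (∀ i, p.1 i ∈ Set.Icc (0 : ℝ) κ) ∧ (∀ j, p.2 j ∈ Set.Icc (0 : ℝ) κ)},
      ENNReal.ofReal
        (((∑ i, (p.1 i) ^ 2) * (∑ j, (p.2 j) ^ 2)) ^ (-s) *
          ((∏ i, p.1 i ^ (a - 1)) * (∏ j, p.2 j ^ (b - 1))))) ≠ ⊤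
    ↔ s < min ((M : ℝ) * a) ((N : ℝ) * b) / 2 := by
  have hU : blockIntegral M a κ s ≠ 0 := blockIntegral_ne_zero hM hκ s
  have hV : blockIntegral N b κ s ≠ 0 := blockIntegral_ne_zero hN hκ s
  rw [lintegral_eq_blockIntegral_mul, ← min_div_div_right (zero_le_two (α := ℝ)), lt_min_iff,
    ← blockIntegral_ne_top_iff hM ha hκ, ← blockIntegral_ne_top_iff hN hb hκ, Ne,
    ENNReal.mul_eq_top]
  tauto
end

section
/- Let M ≥ 1 be an integer, let a > 0 and κ > 0. For every real number s, the Lebesgue integral ∫_{[0,κ]^M} (Σ_{i=1}^M u_i²)^{−s} ∏_{i=1}^M u_i^{a−1} du is finite if and only if s < Ma/2. -/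
open MeasureTheory Finset

/-!
Up to a null set, the cube is the half-open box `(0, κ]^M`, on which every `u i` is positive.
For `b > 0` the function `u^(b-1)` is integrable on `(0, t]` with integral `t^b / b`, so Fubini gives
`∫ ∏ i, u i^(b-1) = (t^b / b)^M` over `(0, t]^M` (`lintegral_box`).

* If `s < M a / 2` and `0 < s`, then `u i ≤ (∑ j, u j²)^(1/2)` for each `i` implies
  `(∑ j, u j²)^(-s) ≤ ∏ i, u i^(-2s/M)`, so the integrand is at most `∏ i, u i^(b-1)` with
  `b = a - 2s/M > 0`. If `s ≤ 0`, the factor `(∑ j, u j²)^(-s)` is bounded on the cube.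
* If `M a / 2 ≤ s` and the integral were finite, its restriction to `(0, t]^M` would tend to `0`
  with `t`, by absolute continuity. But `∑ j, u j² ≤ M t²` there, so that restriction is at least
  `(M t²)^(-s) (t^a / a)^M = M^(-s) a^(-M) t^(M a - 2 s)`, which for `t ≤ 1` is bounded below by
  the positive constant `M^(-s) a^(-M)`.
-/

theorem lintegral_box (M : ℕ) {b t : ℝ} (hb : 0 < b) (ht : 0 < t) :
    ∫⁻ u in Set.univ.pi (fun _ : Fin M => Set.Ioc 0 t), ENNReal.ofReal (∏ i, u i ^ (b - 1))
      = ENNReal.ofReal ((t ^ b / b) ^ M) := by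
  have hint : Integrable (fun x : ℝ => x ^ (b - 1)) (volume.restrict (Set.Ioc 0 t)) :=
    (intervalIntegrable_iff_integrableOn_Ioc_of_le ht.le).1
      (intervalIntegral.intervalIntegrable_rpow' (by linarith))
  have hval : ∫ x in Set.Ioc 0 t, x ^ (b - 1) = t ^ b / b := by
    rw [← intervalIntegral.integral_of_le ht.le, integral_rpow (Or.inl (by linarith))]
    simp [Real.zero_rpow hb.ne']
  have hnn : 0 ≤ᵐ[volume.restrict (Set.univ.pi (fun _ : Fin M => Set.Ioc 0 t))]
      fun u => ∏ i, u i ^ (b - 1) := by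
    filter_upwards [ae_restrict_mem (MeasurableSet.univ_pi fun _ => measurableSet_Ioc)] with u hu
    exact prod_nonneg fun i _ => Real.rpow_nonneg (hu i trivial).1.le _
  rw [← ofReal_integral_eq_lintegral_ofReal _ hnn]
  · rw [volume_pi, Measure.restrict_pi_pi,
      integral_fintype_prod_eq_prod (fun _ : Fin M => fun x : ℝ => x ^ (b - 1))]
    simp [hval, div_pow]
  · rw [volume_pi, Measure.restrict_pi_pi]
    exact Integrable.fintype_prod (f := fun _ : Fin M => fun x : ℝ => x ^ (b - 1)) fun _ => hint

theorem cube_ae_eq_box (M : ℕ) (κ : ℝ) :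
    {u : Fin M → ℝ | ∀ i, u i ∈ Set.Icc (0 : ℝ) κ} =ᵐ[volume]
      Set.univ.pi (fun _ : Fin M => Set.Ioc 0 κ) := by
  have h : {u : Fin M → ℝ | ∀ i, u i ∈ Set.Icc (0 : ℝ) κ} =
      Set.univ.pi (fun _ : Fin M => Set.Icc 0 κ) := by
    ext u; simp only [Set.mem_setOf_eq, Set.mem_univ_pi]
  rw [h]
  exact (Measure.pi_Ioc_ae_eq_pi_Icc (μ := fun _ : Fin M => (volume : Measure ℝ))).symm

theorem sum_sq_le_of_mem_box {M : ℕ} {t : ℝ} {u : Fin M → ℝ}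
    (hu : ∀ i, u i ∈ Set.Ioc 0 t) : ∑ i, u i ^ 2 ≤ M * t ^ 2 := by
  calc ∑ i, u i ^ 2 ≤ ∑ _i : Fin M, t ^ 2 :=
        sum_le_sum fun i _ => pow_le_pow_left₀ (hu i).1.le (hu i).2 2
    _ = M * t ^ 2 := by simp

theorem sum_sq_pos {M : ℕ} (hM : 1 ≤ M) {u : Fin M → ℝ} (hu : ∀ i, 0 < u i) :
    0 < ∑ i, u i ^ 2 :=
  sum_pos (fun i _ => pow_pos (hu i) 2) ⟨⟨0, hM⟩, mem_univ _⟩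

/-- For positive `s`, the singular factor is dominated by a monomial in which the exponent `-2s`
is shared equally among the variables. -/
theorem sum_sq_rpow_le_prod {M : ℕ} (hM : 1 ≤ M) {s : ℝ} (hs : 0 < s) {u : Fin M → ℝ}
    (hu : ∀ i, 0 < u i) : (∑ i, u i ^ 2) ^ (-s) ≤ ∏ i, u i ^ (-(2 * s / M)) := by
  have hM0 : (0 : ℝ) < M := by exact_mod_cast hM
  have hS := sum_sq_pos hM hu
  calc (∑ i, u i ^ 2) ^ (-s) = ∏ _i : Fin M, (∑ i, u i ^ 2) ^ (-(s / M)) := by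
        rw [prod_const, card_univ, Fintype.card_fin, ← Real.rpow_mul_natCast hS.le]
        congr 1; field_simp
    _ ≤ ∏ i, u i ^ (-(2 * s / M)) := by
        refine prod_le_prod (fun i _ => Real.rpow_nonneg hS.le _) fun i _ => ?_
        have h1 : u i ^ (-(2 * s / M)) = (u i ^ 2) ^ (-(s / M)) := by
          rw [← Real.rpow_natCast_mul (hu i).le]
          congr 1; push_cast; ring
        rw [h1]
        exact Real.rpow_le_rpow_of_nonpos (pow_pos (hu i) 2)
          (single_le_sum (f := fun i => u i ^ 2) (fun j _ => sq_nonneg (u j)) (mem_univ i))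
          (by have := div_pos hs hM0; linarith)

theorem lintegral_ne_top_of_lt {M : ℕ} (hM : 1 ≤ M) {a κ s : ℝ} (ha : 0 < a) (hκ : 0 < κ)
    (hs : s < (M : ℝ) * a / 2) :
    (∫⁻ u in Set.univ.pi (fun _ : Fin M => Set.Ioc 0 κ),
      ENNReal.ofReal ((∑ i, u i ^ 2) ^ (-s) * ∏ i, u i ^ (a - 1))) ≠ ⊤ := by
  have hM0 : (0 : ℝ) < M := by exact_mod_cast hM
  have hmeas : MeasurableSet (Set.univ.pi (fun _ : Fin M => Set.Ioc (0 : ℝ) κ)) :=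
    MeasurableSet.univ_pi fun _ => measurableSet_Ioc
  rcases le_or_gt s 0 with h0 | h0
  · refine ne_top_of_le_ne_top (b := ∫⁻ u in Set.univ.pi (fun _ : Fin M => Set.Ioc 0 κ),
      ENNReal.ofReal ((M * κ ^ 2) ^ (-s)) * ENNReal.ofReal (∏ i, u i ^ (a - 1))) ?_ ?_
    · rw [lintegral_const_mul' _ _ ENNReal.ofReal_ne_top, lintegral_box M ha hκ]
      exact ENNReal.mul_ne_top ENNReal.ofReal_ne_top ENNReal.ofReal_ne_top
    · refine setLIntegral_mono' hmeas fun u hu => ?_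
      have hu' : ∀ i, u i ∈ Set.Ioc 0 κ := fun i => hu i trivial
      rw [← ENNReal.ofReal_mul (by positivity)]
      refine ENNReal.ofReal_le_ofReal (mul_le_mul_of_nonneg_right ?_
        (prod_nonneg fun i _ => Real.rpow_nonneg (hu' i).1.le _))
      exact Real.rpow_le_rpow (sum_nonneg fun i _ => sq_nonneg _)
        (sum_sq_le_of_mem_box hu') (by linarith)
  · have hb : 0 < a - 2 * s / M := by
      rw [sub_pos, div_lt_iff₀ hM0]; linarith
    refine ne_top_of_le_ne_top (b := ∫⁻ u in Set.univ.pi (fun _ : Fin M => Set.Ioc 0 κ),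
      ENNReal.ofReal (∏ i, u i ^ (a - 2 * s / M - 1))) ?_ ?_
    · rw [lintegral_box M hb hκ]; exact ENNReal.ofReal_ne_top
    · refine setLIntegral_mono' hmeas fun u hu => ENNReal.ofReal_le_ofReal ?_
      have hu' : ∀ i, 0 < u i := fun i => (hu i trivial).1
      calc (∑ i, u i ^ 2) ^ (-s) * ∏ i, u i ^ (a - 1)
          ≤ (∏ i, u i ^ (-(2 * s / M))) * ∏ i, u i ^ (a - 1) :=
            mul_le_mul_of_nonneg_right (sum_sq_rpow_le_prod hM h0 hu')
              (prod_nonneg fun i _ => Real.rpow_nonneg (hu' i).le _)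
        _ = ∏ i, u i ^ (a - 2 * s / M - 1) := by
            rw [← prod_mul_distrib]
            refine prod_congr rfl fun i _ => ?_
            rw [← Real.rpow_add (hu' i)]
            congr 1; ring

/-- At or beyond the threshold, the contribution of a small box is bounded below uniformly in
its side length. -/
theorem const_le_lintegral_box {M : ℕ} (hM : 1 ≤ M) {a s t : ℝ} (ha : 0 < a)
    (hs : (M : ℝ) * a / 2 ≤ s) (ht : 0 < t) (ht1 : t ≤ 1) :
    ENNReal.ofReal ((M : ℝ) ^ (-s) * (1 / a) ^ M) ≤
      ∫⁻ u in Set.univ.pi (fun _ : Fin M => Set.Ioc 0 t),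
        ENNReal.ofReal ((∑ i, u i ^ 2) ^ (-s) * ∏ i, u i ^ (a - 1)) := by
  have hM0 : (0 : ℝ) < M := by exact_mod_cast hM
  have hs0 : 0 ≤ s := le_trans (by positivity) hs
  calc ENNReal.ofReal ((M : ℝ) ^ (-s) * (1 / a) ^ M)
      ≤ ENNReal.ofReal ((M * t ^ 2) ^ (-s) * (t ^ a / a) ^ M) := by
        refine ENNReal.ofReal_le_ofReal ?_
        have h1 : (M * t ^ 2) ^ (-s) * (t ^ a / a) ^ M
            = (M : ℝ) ^ (-s) * (1 / a) ^ M * t ^ (M * a - 2 * s) := by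
          rw [Real.mul_rpow hM0.le (by positivity), ← Real.rpow_natCast_mul ht.le, div_pow,
            ← Real.rpow_mul_natCast ht.le,
            show (M : ℝ) * a - 2 * s = ((2 : ℕ) : ℝ) * -s + a * M by push_cast; ring,
            Real.rpow_add ht, div_pow, one_pow]
          ring
        rw [h1]
        exact le_mul_of_one_le_right (by positivity)
          (Real.one_le_rpow_of_pos_of_le_one_of_nonpos ht ht1 (by linarith))
    _ = ∫⁻ u in Set.univ.pi (fun _ : Fin M => Set.Ioc 0 t),
          ENNReal.ofReal ((M * t ^ 2) ^ (-s)) * ENNReal.ofReal (∏ i, u i ^ (a - 1)) := by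
        rw [lintegral_const_mul' _ _ ENNReal.ofReal_ne_top, lintegral_box M ha ht,
          ENNReal.ofReal_mul (by positivity)]
    _ ≤ _ := by
        refine setLIntegral_mono' (MeasurableSet.univ_pi fun _ => measurableSet_Ioc)
          fun u hu => ?_
        have hu' : ∀ i, u i ∈ Set.Ioc 0 t := fun i => hu i trivial
        rw [← ENNReal.ofReal_mul (by positivity)]
        refine ENNReal.ofReal_le_ofReal (mul_le_mul_of_nonneg_right ?_
          (prod_nonneg fun i _ => Real.rpow_nonneg (hu' i).1.le _))
        exact Real.rpow_le_rpow_of_nonpos (sum_sq_pos hM fun i => (hu' i).1)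
          (sum_sq_le_of_mem_box hu') (by linarith)

theorem tendsto_volume_box {M : ℕ} (hM : 1 ≤ M) :
    Filter.Tendsto (fun t : ℝ => volume (Set.univ.pi (fun _ : Fin M => Set.Ioc 0 t)))
      (nhdsWithin 0 (Set.Ioi 0)) (nhds 0) := by
  have h : Filter.Tendsto (fun t : ℝ => ENNReal.ofReal t ^ M) (nhds 0) (nhds 0) := by
    have : Continuous fun t : ℝ => ENNReal.ofReal t ^ M :=
      (ENNReal.continuous_pow M).comp ENNReal.continuous_ofReal
    simpa [zero_pow (by omega : M ≠ 0)] using this.tendsto 0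
  simpa [Real.volume_pi_Ioc] using h.mono_left nhdsWithin_le_nhds

theorem lintegral_eq_top_of_le {M : ℕ} (hM : 1 ≤ M) {a κ s : ℝ} (ha : 0 < a) (hκ : 0 < κ)
    (hs : (M : ℝ) * a / 2 ≤ s) :
    (∫⁻ u in Set.univ.pi (fun _ : Fin M => Set.Ioc 0 κ),
      ENNReal.ofReal ((∑ i, u i ^ 2) ^ (-s) * ∏ i, u i ^ (a - 1))) = ⊤ := by
  by_contra hfin
  have hM0 : (0 : ℝ) < M := by exact_mod_cast hM
  have hlim := tendsto_setLIntegral_zero hfin (l := nhdsWithin (0 : ℝ) (Set.Ioi 0))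
    (s := fun t : ℝ => Set.univ.pi (fun _ : Fin M => Set.Ioc 0 t))
    (tendsto_of_tendsto_of_tendsto_of_le_of_le tendsto_const_nhds (tendsto_volume_box hM)
      (fun _ => zero_le) fun _ => Measure.restrict_apply_le _ _)
  have hle : ENNReal.ofReal ((M : ℝ) ^ (-s) * (1 / a) ^ M) ≤ 0 := by
    refine ge_of_tendsto hlim ?_
    filter_upwards [Ioc_mem_nhdsGT (lt_min hκ one_pos)] with t ht
    have hsub : Set.univ.pi (fun _ : Fin M => Set.Ioc 0 t) ⊆
        Set.univ.pi (fun _ : Fin M => Set.Ioc 0 κ) :=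
      Set.pi_mono fun _ _ => Set.Ioc_subset_Ioc_right (ht.2.trans (min_le_left _ _))
    rw [Measure.restrict_restrict_of_subset hsub]
    exact const_le_lintegral_box hM ha hs ht.1 (ht.2.trans (min_le_right _ _))
  have hpos : 0 < (M : ℝ) ^ (-s) * (1 / a) ^ M := by positivity
  exact absurd hle (not_le.2 (ENNReal.ofReal_pos.2 hpos))

/-- One-factor integrability threshold: for `M ≥ 1`, `a > 0`, `κ > 0`,
the integral over `[0,κ]^M` of `(Σ u_i²)^{-s} ∏ u_i^{a-1}` is finite iff `s < M a / 2`. -/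
theorem one_factor_rlct
    (M : ℕ) (hM : 1 ≤ M) (a κ : ℝ) (ha : 0 < a) (hκ : 0 < κ) (s : ℝ) :
    (∫⁻ u in {u : Fin M → ℝ | ∀ i, u i ∈ Set.Icc (0 : ℝ) κ},
      ENNReal.ofReal
        ((∑ i, (u i) ^ 2) ^ (-s) * ∏ i, u i ^ (a - 1))) ≠ ⊤
    ↔ s < (M : ℝ) * a / 2 := by
  rw [setLIntegral_congr (cube_ae_eq_box M κ)]
  refine ⟨fun h => ?_, lintegral_ne_top_of_lt hM ha hκ⟩
  by_contra hs
  exact h (lintegral_eq_top_of_le hM ha hκ (not_lt.1 hs))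
end

section
/- Let M, N ≥ 1 be integers, let φ_U, θ_U, φ_V, θ_V > 0, κ > 0, and let u⁰ ∈ ℝ^M, v⁰ ∈ ℝ^N have all entries in the open interval (0, κ). For every real number s, the Lebesgue integral ∫_{[0,κ]^M × [0,κ]^N} (‖u vᵀ − u⁰ (v⁰)ᵀ‖²)^{−s} φ(u,v) du dv is finite if and only if s < (M+N−1)/2. (Equivalently: the real log canonical threshold of non-negative matrix factorization with H = H₀ = 1 and gamma priors equals (M+N−1)/2.) -/
/-!
The zero set of `‖u vᵀ − u⁰ (v⁰)ᵀ‖²` in the positive orthant is the curve `(a⁻¹ u⁰, a v⁰)`, `a > 0`,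
which is smooth and parametrised by the coordinate `t = v 0`. Subtracting from `(u, v)` the point of the
curve with the same `t` leaves an offset `z` in dimension `d = M + N − 1`, and the residual is
bounded above and below by multiples of `‖z‖²` where `t` is bounded away from `0`
(`nmfResidual_comparable`). As `(u, v) ↦ (t, z)` preserves Lebesgue measure (`lintegral_shear`), the integral
near the curve behaves like `∫ dt ∫ ‖z‖ ^ (-2 s) dz` over a bounded region, which is finite iff `2 s < d`
(`lintegral_truncPow_ne_top_iff`).

The gamma prior is bounded above and away from `0` where all coordinates lie in `[ε, κ]`.
Where some coordinate is below a suitable `ε` the prior may be unbounded, but the residual is bounded below there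
(`nmfResidual_lower_of_small`), so that part is controlled by the integrability of the prior. For the
divergence a tube around a piece of the curve, contained in the cube (`exists_tube_subset`), suffices.
-/

open MeasureTheory Finset

/-! ### Definitions -/

/-- The squared Frobenius distance `‖u vᵀ − u⁰ (v⁰)ᵀ‖²` at `p = (u, v)`. Both factors are indexed by
`Fin (_ + 1)`, so that the coordinates `u 0` and `v 0` exist. -/
noncomputable def nmfResidual {m n : ℕ} (u₀ : Fin (m + 1) → ℝ) (v₀ : Fin (n + 1) → ℝ)
    (p : (Fin (m + 1) → ℝ) × (Fin (n + 1) → ℝ)) : ℝ :=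
  ∑ i, ∑ j, (p.1 i * p.2 j - u₀ i * v₀ j) ^ 2

/-- The point with `v 0 = t` of the curve of true parameters `(a⁻¹ u⁰, a v⁰)`, `a = t / v⁰ 0`,
recorded as (the coordinates `v 1, …, v n`; all coordinates of `u`). -/
noncomputable def nmfBranch {m n : ℕ} (u₀ : Fin (m + 1) → ℝ) (v₀ : Fin (n + 1) → ℝ) (t : ℝ) :
    (Fin n → ℝ) × (Fin (m + 1) → ℝ) :=
  (fun j => v₀ j.succ * t / v₀ 0, fun i => u₀ i * v₀ 0 / t)

/-- The displacement of `p = (u, v)` from the point of the true curve with the same `v 0`; it lives in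
dimension `n + (m + 1)`, one less than the parameter space. Its norm is the sup norm. -/
noncomputable def nmfOffset {m n : ℕ} (u₀ : Fin (m + 1) → ℝ) (v₀ : Fin (n + 1) → ℝ)
    (p : (Fin (m + 1) → ℝ) × (Fin (n + 1) → ℝ)) : (Fin n → ℝ) × (Fin (m + 1) → ℝ) :=
  (fun j => p.2 j.succ, p.1) - nmfBranch u₀ v₀ (p.2 0)

/-- The density at `x ≥ 0` of the gamma distribution with shape `φ` and rate `θ`. -/
noncomputable def gammaWeight (φ θ x : ℝ) : ℝ :=
  θ ^ φ / Real.Gamma φ * x ^ (φ - 1) * Real.exp (-θ * x)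

/-- The function `y ↦ y ^ (-2 s)`, cut off to `0` for `y ≥ r`. -/
noncomputable def truncPow (s r : ℝ) (y : ℝ) : ℝ :=
  (Set.Iio r).indicator (fun y => y ^ (-(2 * s))) y

/-! ### Comparison of the residual with the distance to the true curve -/

lemma nmfResidual_nonneg {m n : ℕ} (u₀ : Fin (m + 1) → ℝ) (v₀ : Fin (n + 1) → ℝ)
    (p : (Fin (m + 1) → ℝ) × (Fin (n + 1) → ℝ)) : 0 ≤ nmfResidual u₀ v₀ p :=
  Finset.sum_nonneg fun _ _ => Finset.sum_nonneg fun _ _ => sq_nonneg _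

lemma sq_entry_le_nmfResidual {m n : ℕ} (u₀ : Fin (m + 1) → ℝ) (v₀ : Fin (n + 1) → ℝ)
    (p : (Fin (m + 1) → ℝ) × (Fin (n + 1) → ℝ)) (i : Fin (m + 1)) (j : Fin (n + 1)) :
    (p.1 i * p.2 j - u₀ i * v₀ j) ^ 2 ≤ nmfResidual u₀ v₀ p :=
  (Finset.single_le_sum (f := fun j => (p.1 i * p.2 j - u₀ i * v₀ j) ^ 2)
    (fun _ _ => sq_nonneg _) (Finset.mem_univ j)).trans
  (Finset.single_le_sum (f := fun i => ∑ j, (p.1 i * p.2 j - u₀ i * v₀ j) ^ 2)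
    (fun _ _ => Finset.sum_nonneg fun _ _ => sq_nonneg _) (Finset.mem_univ i))

lemma nmfResidual_le {m n : ℕ} (u₀ : Fin (m + 1) → ℝ) (v₀ : Fin (n + 1) → ℝ)
    (p : (Fin (m + 1) → ℝ) × (Fin (n + 1) → ℝ)) {b : ℝ}
    (h : ∀ i j, |p.1 i * p.2 j - u₀ i * v₀ j| ≤ b) :
    nmfResidual u₀ v₀ p ≤ ((m + 1) * (n + 1)) * b ^ 2 := by
  have : nmfResidual u₀ v₀ p ≤ ∑ _i : Fin (m + 1), ∑ _j : Fin (n + 1), b ^ 2 :=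
    Finset.sum_le_sum fun i _ => Finset.sum_le_sum fun j _ => by
      rw [← sq_abs]; gcongr; exact h i j
  refine this.trans_eq ?_
  simp; ring

/-- Away from `v 0 = 0`, the residual is comparable to the squared distance to the true curve within the
slice of constant `v 0`. With `x`, `y` the displacements of `u`, `v` (so `y 0 = 0`), the `(i, j)`
entry of the residual matrix is `x i * v j + (u⁰ i * v⁰ 0 / v 0) * y j`; the first column determines `x`
and then the first row determines `y`. -/
lemma nmfResidual_comparable {m n : ℕ} {κ ε : ℝ} (hκ : 0 < κ) (hε : 0 < ε)
    (u₀ : Fin (m + 1) → ℝ) (v₀ : Fin (n + 1) → ℝ)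
    (hu₀ : ∀ i, u₀ i ∈ Set.Ioo (0 : ℝ) κ) (hv₀ : ∀ j, v₀ j ∈ Set.Ioo (0 : ℝ) κ) :
    ∃ c C : ℝ, 0 < c ∧ 0 < C ∧ ∀ p : (Fin (m + 1) → ℝ) × (Fin (n + 1) → ℝ),
      (∀ i, p.1 i ∈ Set.Icc (0 : ℝ) κ) → (∀ j, p.2 j ∈ Set.Icc (0 : ℝ) κ) → ε ≤ p.2 0 →
      c * ‖nmfOffset u₀ v₀ p‖ ^ 2 ≤ nmfResidual u₀ v₀ p ∧
      nmfResidual u₀ v₀ p ≤ C * ‖nmfOffset u₀ v₀ p‖ ^ 2 := by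
  have hq : 0 < u₀ 0 * v₀ 0 := mul_pos (hu₀ 0).1 (hv₀ 0).1
  set L : ℝ := 1 / ε + (1 + κ / ε) * κ / (u₀ 0 * v₀ 0) with hL
  have hL1 : 0 < 1 / ε := by positivity
  have hL2 : 0 < (1 + κ / ε) * κ / (u₀ 0 * v₀ 0) := by positivity
  have hLpos : 0 < L := by positivity
  refine ⟨1 / L ^ 2, ((m + 1) * (n + 1)) * (κ + κ ^ 2 / ε) ^ 2, by positivity, by positivity, ?_⟩
  rintro ⟨u, v⟩ hu hv ht
  simp only at hu hv ht
  have htpos : 0 < v 0 := hε.trans_le ht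
  have hv00 := (hv₀ 0).1
  set F := nmfResidual u₀ v₀ (u, v) with hF
  set ρ := ‖nmfOffset u₀ v₀ (u, v)‖ with hρ
  have hρ0 : 0 ≤ ρ := norm_nonneg _
  have hF0 : 0 ≤ F := nmfResidual_nonneg _ _ _
  -- the entries of the residual matrix in terms of the offset
  have hdec : ∀ i j, u i * v j - u₀ i * v₀ j =
      (u i - u₀ i * v₀ 0 / v 0) * v j + u₀ i * v₀ 0 / v 0 * (v j - v₀ j * v 0 / v₀ 0) := by
    intro i j
    field_simp
    ring
  constructor
  -- lower bound for the residual: recover the displacements from the first column and first row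
  · have hent : ∀ i j, |u i * v j - u₀ i * v₀ j| ≤ √F := fun i j =>
      Real.abs_le_sqrt (sq_entry_le_nmfResidual u₀ v₀ (u, v) i j)
    have hx : ∀ i, |u i - u₀ i * v₀ 0 / v 0| ≤ √F / ε := by
      intro i
      have h1 := hent i 0
      have : u i * v 0 - u₀ i * v₀ 0 = (u i - u₀ i * v₀ 0 / v 0) * v 0 := by field_simp
      rw [this, abs_mul, abs_of_pos htpos] at h1
      rw [le_div_iff₀ hε]
      exact (mul_le_mul_of_nonneg_left ht (abs_nonneg _)).trans h1
    have hy : ∀ j, |v j - v₀ j * v 0 / v₀ 0| ≤ √F * ((1 + κ / ε) * κ / (u₀ 0 * v₀ 0)) := by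
      intro j
      have h1 : |u₀ 0 * v₀ 0 / v 0 * (v j - v₀ j * v 0 / v₀ 0)| ≤ √F * (1 + κ / ε) := by
        have h2 : u₀ 0 * v₀ 0 / v 0 * (v j - v₀ j * v 0 / v₀ 0) =
          (u 0 * v j - u₀ 0 * v₀ j) - (u 0 - u₀ 0 * v₀ 0 / v 0) * v j := by
          rw [hdec]; ring
        rw [h2]
        refine (abs_sub _ _).trans ?_
        rw [abs_mul, abs_of_nonneg (hv j).1]
        have h3 : |u 0 - u₀ 0 * v₀ 0 / v 0| * v j ≤ √F / ε * κ :=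
          mul_le_mul (hx 0) (hv j).2 (hv j).1 (by positivity)
        have h4 := hent 0 j
        calc _ ≤ √F + √F / ε * κ := add_le_add h4 h3
          _ = _ := by ring
      rw [abs_mul, abs_of_pos (by positivity)] at h1
      have h5 : u₀ 0 * v₀ 0 / κ ≤ u₀ 0 * v₀ 0 / v 0 :=
        div_le_div_of_nonneg_left hq.le htpos (hv 0).2
      have h6 := (mul_le_mul_of_nonneg_right h5 (abs_nonneg _)).trans h1
      have h7 : √F * ((1 + κ / ε) * κ / (u₀ 0 * v₀ 0)) =
        √F * (1 + κ / ε) / (u₀ 0 * v₀ 0 / κ) := by field_simp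
      rw [h7, le_div_iff₀ (by positivity), mul_comm]
      exact h6
    have hρL : ρ ≤ L * √F := by
      have hs := Real.sqrt_nonneg F
      refine norm_prod_le_iff.2 ⟨?_, ?_⟩
      · refine (pi_norm_le_iff_of_nonneg (by positivity)).2 fun j => ?_
        refine (hy j.succ).trans ?_
        rw [mul_comm]
        gcongr
        linarith
      · refine (pi_norm_le_iff_of_nonneg (by positivity)).2 fun i => ?_
        refine (hx i).trans ?_
        rw [div_eq_inv_mul, ← one_div]
        gcongr
        linarith
    rw [one_div, inv_mul_le_iff₀ (by positivity)]
    calc ρ ^ 2 ≤ (L * √F) ^ 2 := by gcongr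
      _ = L ^ 2 * F := by rw [mul_pow, Real.sq_sqrt hF0]
  · rw [mul_assoc, ← mul_pow]
    refine nmfResidual_le u₀ v₀ (u, v) fun i j => ?_
    have hx : |u i - u₀ i * v₀ 0 / v 0| ≤ ρ :=
      (norm_le_pi_norm (nmfOffset u₀ v₀ (u, v)).2 i).trans (norm_snd_le _)
    have hy : |v j - v₀ j * v 0 / v₀ 0| ≤ ρ := by
      refine Fin.cases ?_ (fun j => ?_) j
      · rw [mul_div_assoc, mul_div_cancel₀ _ hv00.ne', sub_self, abs_zero]
        exact hρ0
      · exact (norm_le_pi_norm (nmfOffset u₀ v₀ (u, v)).1 j).trans (norm_fst_le _)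
    simp only
    rw [hdec]
    refine (abs_add_le _ _).trans ?_
    have hp : 0 < u₀ i * v₀ 0 / v 0 := div_pos (mul_pos (hu₀ i).1 hv00) htpos
    rw [abs_mul, abs_mul, abs_of_nonneg (hv j).1, abs_of_pos hp]
    have h1 : u₀ i * v₀ 0 / v 0 ≤ κ ^ 2 / ε := by
      rw [sq]
      have := (hu₀ i).2.le
      have := (hv₀ 0).2.le
      have := (hu₀ i).1.le
      gcongr
    calc _ ≤ ρ * κ + κ ^ 2 / ε * ρ :=
          add_le_add (mul_le_mul hx (hv j).2 (hv j).1 hρ0)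
            (mul_le_mul h1 hy (abs_nonneg _) (by positivity))
      _ = _ := by ring

/-- Comparability of `F` and `ρ ^ 2` passes to negative powers. At `ρ = 0` both powers take the value
`0 ^ (-s) = 0`, which keeps the inequalities valid. -/
lemma rpow_neg_comparable {c C F ρ s : ℝ} (hc : 0 < c) (hC : 0 < C) (hρ : 0 ≤ ρ) (hs : 0 < s)
    (h1 : c * ρ ^ 2 ≤ F) (h2 : F ≤ C * ρ ^ 2) :
    C ^ (-s) * ρ ^ (-(2 * s)) ≤ F ^ (-s) ∧ F ^ (-s) ≤ c ^ (-s) * ρ ^ (-(2 * s)) := by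
  have hpow : ρ ^ (-(2 * s)) = (ρ ^ 2) ^ (-s) := by
    rw [← Real.rpow_natCast, ← Real.rpow_mul hρ]; congr 1; push_cast; ring
  rw [hpow, ← Real.mul_rpow hC.le (sq_nonneg _), ← Real.mul_rpow hc.le (sq_nonneg _)]
  rcases hρ.eq_or_lt with h | h
  · subst h
    have : F = 0 := by nlinarith
    subst this
    simp
  · have h3 : 0 < c * ρ ^ 2 := by positivity
    exact ⟨Real.rpow_le_rpow_of_nonpos (h3.trans_le h1) h2 (by linarith),
      Real.rpow_le_rpow_of_nonpos h3 h1 (by linarith)⟩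

/-! ### Integrals of functions of the offset -/

lemma measurable_truncPow (s r : ℝ) : Measurable (truncPow s r) :=
  Measurable.indicator (by fun_prop) measurableSet_Iio

lemma truncPow_nonneg (s r : ℝ) {y : ℝ} (hy : 0 ≤ y) : 0 ≤ truncPow s r y := by
  unfold truncPow
  exact Set.indicator_apply_nonneg fun _ => Real.rpow_nonneg hy _

/-- In dimension `d = m + n + 1`, the function `‖z‖ ^ (-2 s)` is integrable near the origin iff
`2 s < d`, by integration in polar coordinates. -/
lemma lintegral_truncPow_ne_top_iff {m n : ℕ} {s r : ℝ} (hr : 0 < r) :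
    ∫⁻ z : (Fin n → ℝ) × (Fin (m + 1) → ℝ), ENNReal.ofReal (truncPow s r ‖z‖) ≠ ⊤ ↔
      s < ((m : ℝ) + n + 1) / 2 := by
  have : (volume : Measure ((Fin n → ℝ) × (Fin (m + 1) → ℝ))).IsAddHaarMeasure :=
    Measure.prod.instIsAddHaarMeasure _ _
  rw [lintegral_ofReal_ne_top_iff_integrable (f := fun z => truncPow s r ‖z‖)
    ((measurable_truncPow s r).comp measurable_norm).aestronglyMeasurable
    (Filter.Eventually.of_forall fun z => truncPow_nonneg s r (norm_nonneg z)),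
    integrable_fun_norm_addHaar volume (f := truncPow s r)]
  have hdim : Module.finrank ℝ ((Fin n → ℝ) × (Fin (m + 1) → ℝ)) - 1 = n + m := by simp
  rw [hdim]
  have h1 : ∀ y ∈ Set.Ioi (0 : ℝ), y ^ (n + m) • truncPow s r y =
      (Set.Iio r).indicator (fun y => y ^ ((n : ℝ) + m - 2 * s)) y := by
    intro y hy
    simp only [truncPow, Set.indicator_apply, smul_eq_mul]
    split_ifs
    · rw [sub_eq_add_neg, Real.rpow_add hy, ← Nat.cast_add, Real.rpow_natCast]
    · simp
  rw [integrableOn_congr_fun h1 measurableSet_Ioi, integrableOn_indicator_iff measurableSet_Iio,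
    Set.inter_comm, Set.Ioi_inter_Iio, intervalIntegral.integrableOn_Ioo_rpow_iff hr]
  constructor <;> intro h <;> linarith

/-- Singling out the coordinate `t = v 0` and translating the others by `γ t`, which preserves
Lebesgue measure, turns the integral into a product. -/
lemma lintegral_shear {m n : ℕ} {γ : ℝ → (Fin n → ℝ) × (Fin (m + 1) → ℝ)} (hγ : Measurable γ)
    {g : (Fin n → ℝ) × (Fin (m + 1) → ℝ) → ENNReal} (hg : Measurable g) {I : Set ℝ}
    (hI : MeasurableSet I) :
    ∫⁻ p : (Fin (m + 1) → ℝ) × (Fin (n + 1) → ℝ),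
      I.indicator 1 (p.2 0) * g ((fun j => p.2 j.succ, p.1) - γ (p.2 0)) =
    volume I * ∫⁻ z, g z := by
  have : (volume : Measure ((Fin n → ℝ) × (Fin (m + 1) → ℝ))).IsAddHaarMeasure :=
    Measure.prod.instIsAddHaarMeasure _ _
  -- the map is a rearrangement of coordinates: `(u, v) ↦ (v, u) ↦ ((v 0, tail), u) ↦ (v 0, (tail, u))`
  have hmp : MeasurePreserving (fun p : (Fin (m + 1) → ℝ) × (Fin (n + 1) → ℝ) =>
      (p.2 0, ((fun j => p.2 j.succ, p.1) : (Fin n → ℝ) × (Fin (m + 1) → ℝ)))) volume volume :=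
    (volume_preserving_prodAssoc.comp
      ((volume_preserving_piFinSuccAbove (fun _ : Fin (n + 1) => ℝ) 0).prod
        (MeasurePreserving.id (volume : Measure (Fin (m + 1) → ℝ))))).comp
      Measure.measurePreserving_swap
  have hF : Measurable (fun q : ℝ × ((Fin n → ℝ) × (Fin (m + 1) → ℝ)) =>
      I.indicator (1 : ℝ → ENNReal) q.1 * g (q.2 - γ q.1)) :=
    ((measurable_one.indicator hI).comp measurable_fst).mul
      (hg.comp (measurable_snd.sub (hγ.comp measurable_fst)))
  rw [hmp.lintegral_comp hF]
  change ∫⁻ q, _ ∂(Measure.prod volume volume) = _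
  rw [lintegral_prod _ hF.aemeasurable]
  have : ∀ t : ℝ, ∫⁻ z, I.indicator (1 : ℝ → ENNReal) t * g (z - γ t) =
      I.indicator 1 t * ∫⁻ z, g z := by
    intro t
    have hgt : Measurable fun z => g (z - γ t) := hg.comp (measurable_id.sub_const _)
    rw [lintegral_const_mul _ hgt, lintegral_sub_right_eq_self]
  simp only [this]
  rw [lintegral_mul_const _ (measurable_one.indicator hI), lintegral_indicator_one hI]

lemma measurable_nmfBranch {m n : ℕ} (u₀ : Fin (m + 1) → ℝ) (v₀ : Fin (n + 1) → ℝ) :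
    Measurable (nmfBranch u₀ v₀) := by
  unfold nmfBranch
  fun_prop

lemma continuousAt_nmfBranch {m n : ℕ} (u₀ : Fin (m + 1) → ℝ) (v₀ : Fin (n + 1) → ℝ) {t : ℝ}
    (ht : t ≠ 0) : ContinuousAt (nmfBranch u₀ v₀) t := by
  unfold nmfBranch
  refine ContinuousAt.prodMk (by fun_prop) (continuousAt_pi.2 fun i => ?_)
  exact continuousAt_const.div continuousAt_id ht

lemma lintegral_truncPow_offset {m n : ℕ} (u₀ : Fin (m + 1) → ℝ) (v₀ : Fin (n + 1) → ℝ)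
    (s r : ℝ) {I : Set ℝ} (hI : MeasurableSet I) :
    ∫⁻ p : (Fin (m + 1) → ℝ) × (Fin (n + 1) → ℝ),
      I.indicator 1 (p.2 0) * ENNReal.ofReal (truncPow s r ‖nmfOffset u₀ v₀ p‖) =
    volume I * ∫⁻ z : (Fin n → ℝ) × (Fin (m + 1) → ℝ), ENNReal.ofReal (truncPow s r ‖z‖) :=
  lintegral_shear (measurable_nmfBranch u₀ v₀)
    (g := fun z => ENNReal.ofReal (truncPow s r ‖z‖))
    ((measurable_truncPow s r).comp measurable_norm).ennreal_ofReal hI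

/-! ### The gamma prior -/

lemma gammaWeight_pos {φ θ x : ℝ} (hφ : 0 < φ) (hθ : 0 < θ) (hx : 0 < x) :
    0 < gammaWeight φ θ x := by
  have := Real.Gamma_pos_of_pos hφ
  unfold gammaWeight
  positivity

lemma gammaWeight_nonneg {φ θ x : ℝ} (hφ : 0 < φ) (hθ : 0 < θ) (hx : 0 ≤ x) :
    0 ≤ gammaWeight φ θ x := by
  have := Real.Gamma_pos_of_pos hφ
  unfold gammaWeight
  positivity

lemma continuousOn_gammaWeight (φ θ : ℝ) {ε κ : ℝ} (hε : 0 < ε) :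
    ContinuousOn (gammaWeight φ θ) (Set.Icc ε κ) := by
  unfold gammaWeight
  refine ContinuousOn.mul (ContinuousOn.mul continuousOn_const ?_) (by fun_prop)
  exact ContinuousOn.rpow_const continuousOn_id fun x hx => Or.inl (hε.trans_le hx.1).ne'

lemma integrable_gammaWeight {φ θ κ : ℝ} (hφ : 0 < φ) (hκ : 0 < κ) :
    Integrable ((Set.Icc 0 κ).indicator (gammaWeight φ θ)) := by
  rw [integrable_indicator_iff measurableSet_Icc]
  unfold gammaWeight
  refine IntegrableOn.mul_continuousOn ?_ (by fun_prop) isCompact_Icc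
  refine Integrable.const_mul ?_ _
  rw [← IntegrableOn, integrableOn_Icc_iff_integrableOn_Ioo,
    intervalIntegral.integrableOn_Ioo_rpow_iff hκ]
  linarith

lemma gammaWeight_bounds {φ θ ε κ : ℝ} (hφ : 0 < φ) (hθ : 0 < θ) (hε : 0 < ε) (hεκ : ε ≤ κ) :
    ∃ b B : ℝ, 0 < b ∧ 0 < B ∧ ∀ x ∈ Set.Icc ε κ, b ≤ gammaWeight φ θ x ∧ gammaWeight φ θ x ≤ B := by
  have hc := continuousOn_gammaWeight φ θ (κ := κ) hε
  have hne : (Set.Icc ε κ).Nonempty := ⟨ε, le_rfl, hεκ⟩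
  obtain ⟨a, ha, ha'⟩ := isCompact_Icc.exists_isMinOn hne hc
  obtain ⟨d, hd, hd'⟩ := isCompact_Icc.exists_isMaxOn hne hc
  exact ⟨_, _, gammaWeight_pos hφ hθ (hε.trans_le ha.1), gammaWeight_pos hφ hθ (hε.trans_le hd.1),
    fun x hx => ⟨ha' hx, hd' hx⟩⟩

/-- The product gamma prior density on pairs `(u, v)`. -/
noncomputable def gammaPrior {m n : ℕ} (φU θU φV θV : ℝ)
    (p : (Fin (m + 1) → ℝ) × (Fin (n + 1) → ℝ)) : ℝ :=
  (∏ i, gammaWeight φU θU (p.1 i)) * ∏ j, gammaWeight φV θV (p.2 j)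

/-- The cube `[0, κ]^M × [0, κ]^N` with `M = m + 1`, `N = n + 1`. -/
def factorBox (m n : ℕ) (κ : ℝ) : Set ((Fin (m + 1) → ℝ) × (Fin (n + 1) → ℝ)) :=
  {p | (∀ i, p.1 i ∈ Set.Icc (0 : ℝ) κ) ∧ (∀ j, p.2 j ∈ Set.Icc (0 : ℝ) κ)}

lemma measurableSet_factorBox (m n : ℕ) (κ : ℝ) : MeasurableSet (factorBox m n κ) := by
  unfold factorBox
  simp only [Set.ofPred_and, Set.ofPred_forall]
  refine (MeasurableSet.iInter fun i => ?_).inter (MeasurableSet.iInter fun j => ?_)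
  · exact measurableSet_Icc.preimage (f := fun p : (Fin (m + 1) → ℝ) × (Fin (n + 1) → ℝ) => p.1 i)
      (by fun_prop)
  · exact measurableSet_Icc.preimage (f := fun p : (Fin (m + 1) → ℝ) × (Fin (n + 1) → ℝ) => p.2 j)
      (by fun_prop)

/-- The prior is integrable on the cube. It is replaced there by a function integrable on the whole space,
a product of one-variable integrable functions. -/
lemma exists_truncated_prior {m n : ℕ} {φU θU φV θV κ : ℝ} (hφU : 0 < φU) (hφV : 0 < φV)
    (hκ : 0 < κ) :
    ∃ w : (Fin (m + 1) → ℝ) × (Fin (n + 1) → ℝ) → ℝ, Integrable w ∧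
      ∀ p ∈ factorBox m n κ, w p = gammaPrior φU θU φV θV p := by
  refine ⟨fun p => (∏ i, (Set.Icc 0 κ).indicator (gammaWeight φU θU) (p.1 i)) *
    ∏ j, (Set.Icc 0 κ).indicator (gammaWeight φV θV) (p.2 j), ?_, ?_⟩
  · exact Integrable.mul_prod
      (Integrable.fintype_prod (f := fun _ : Fin (m + 1) =>
        (Set.Icc 0 κ).indicator (gammaWeight φU θU)) fun _ => integrable_gammaWeight hφU hκ)
      (Integrable.fintype_prod (f := fun _ : Fin (n + 1) =>
        (Set.Icc 0 κ).indicator (gammaWeight φV θV)) fun _ => integrable_gammaWeight hφV hκ)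
  · rintro p ⟨h1, h2⟩
    have e1 : ∀ i, (Set.Icc 0 κ).indicator (gammaWeight φU θU) (p.1 i) = gammaWeight φU θU (p.1 i) :=
      fun i => Set.indicator_of_mem (h1 i) _
    have e2 : ∀ j, (Set.Icc 0 κ).indicator (gammaWeight φV θV) (p.2 j) = gammaWeight φV θV (p.2 j) :=
      fun j => Set.indicator_of_mem (h2 j) _
    simp only [e1, e2, gammaPrior]

lemma gammaPrior_nonneg {m n : ℕ} {φU θU φV θV κ : ℝ} (hφU : 0 < φU) (hθU : 0 < θU)
    (hφV : 0 < φV) (hθV : 0 < θV) {p : (Fin (m + 1) → ℝ) × (Fin (n + 1) → ℝ)}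
    (hp : p ∈ factorBox m n κ) : 0 ≤ gammaPrior φU θU φV θV p :=
  mul_nonneg (Finset.prod_nonneg fun i _ => gammaWeight_nonneg hφU hθU (hp.1 i).1)
    (Finset.prod_nonneg fun j _ => gammaWeight_nonneg hφV hθV (hp.2 j).1)

lemma gammaPrior_bounds {m n : ℕ} {φU θU φV θV ε κ : ℝ} (hφU : 0 < φU) (hθU : 0 < θU)
    (hφV : 0 < φV) (hθV : 0 < θV) (hε : 0 < ε) (hεκ : ε ≤ κ) :
    ∃ b B : ℝ, 0 < b ∧ 0 < B ∧ ∀ p : (Fin (m + 1) → ℝ) × (Fin (n + 1) → ℝ),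
      (∀ i, p.1 i ∈ Set.Icc ε κ) → (∀ j, p.2 j ∈ Set.Icc ε κ) →
      b ≤ gammaPrior φU θU φV θV p ∧ gammaPrior φU θU φV θV p ≤ B := by
  obtain ⟨b, B, hb, hB, h⟩ := gammaWeight_bounds hφU hθU hε hεκ
  obtain ⟨b', B', hb', hB', h'⟩ := gammaWeight_bounds hφV hθV hε hεκ
  refine ⟨(∏ _i : Fin (m + 1), b) * ∏ _j : Fin (n + 1), b',
    (∏ _i : Fin (m + 1), B) * ∏ _j : Fin (n + 1), B', ?_, ?_, ?_⟩
  · exact mul_pos (Finset.prod_pos fun _ _ => hb) (Finset.prod_pos fun _ _ => hb')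
  · exact mul_pos (Finset.prod_pos fun _ _ => hB) (Finset.prod_pos fun _ _ => hB')
  · intro p h1 h2
    have hnU : ∀ i, 0 ≤ gammaWeight φU θU (p.1 i) := fun i => hb.le.trans (h _ (h1 i)).1
    have hnV : ∀ j, 0 ≤ gammaWeight φV θV (p.2 j) := fun j => hb'.le.trans (h' _ (h2 j)).1
    constructor
    · exact mul_le_mul (Finset.prod_le_prod (fun _ _ => hb.le) fun i _ => (h _ (h1 i)).1)
        (Finset.prod_le_prod (fun _ _ => hb'.le) fun j _ => (h' _ (h2 j)).1)
        (Finset.prod_nonneg fun _ _ => hb'.le) (Finset.prod_nonneg fun i _ => hnU i)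
    · exact mul_le_mul (Finset.prod_le_prod (fun i _ => hnU i) fun i _ => (h _ (h1 i)).2)
        (Finset.prod_le_prod (fun j _ => hnV j) fun j _ => (h' _ (h2 j)).2)
        (Finset.prod_nonneg fun j _ => hnV j) (Finset.prod_nonneg fun _ _ => hB.le)

/-! ### Convergence below the threshold -/

/-- If one coordinate of `u` or `v` is small, then some entry of `u vᵀ` is at most half of a lower bound
for the entries of `u⁰ (v⁰)ᵀ`, so the residual is bounded away from `0`. Hence the
singularities of the prior do not meet those of the residual. -/
lemma nmfResidual_lower_of_small {m n : ℕ} {κ b : ℝ} (hκ : 0 < κ) (hb : 0 < b)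
    {u₀ : Fin (m + 1) → ℝ} {v₀ : Fin (n + 1) → ℝ} (hu₀ : ∀ i, b ≤ u₀ i) (hv₀ : ∀ j, b ≤ v₀ j)
    {p : (Fin (m + 1) → ℝ) × (Fin (n + 1) → ℝ)} (hp : p ∈ factorBox m n κ)
    (hsmall : (∃ i, p.1 i < b ^ 2 / (2 * κ)) ∨ ∃ j, p.2 j < b ^ 2 / (2 * κ)) :
    (b ^ 2 / 2) ^ 2 ≤ nmfResidual u₀ v₀ p := by
  have key : ∀ i j, p.1 i * p.2 j ≤ b ^ 2 / 2 → (b ^ 2 / 2) ^ 2 ≤ nmfResidual u₀ v₀ p := by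
    intro i j h
    refine le_trans ?_ (sq_entry_le_nmfResidual u₀ v₀ p i j)
    have h1 : b * b ≤ u₀ i * v₀ j := mul_le_mul (hu₀ i) (hv₀ j) hb.le (hb.le.trans (hu₀ i))
    nlinarith [sq_nonneg b]
  have he : b ^ 2 / (2 * κ) * κ = b ^ 2 / 2 := by field_simp
  rcases hsmall with ⟨i, hi⟩ | ⟨j, hj⟩
  · refine key i 0 (le_trans (mul_le_mul hi.le (hp.2 0).2 (hp.2 0).1 (by positivity)) he.le)
  · refine key 0 j ?_
    rw [mul_comm]
    exact le_trans (mul_le_mul hj.le (hp.1 0).2 (hp.1 0).1 (by positivity)) he.le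

lemma exists_pos_lower {n : ℕ} (v : Fin (n + 1) → ℝ) (hv : ∀ j, 0 < v j) :
    ∃ b, 0 < b ∧ ∀ j, b ≤ v j := by
  obtain ⟨j, hj⟩ := Finite.exists_min v
  exact ⟨v j, hv j, hj⟩

lemma lintegral_ne_top {m n : ℕ} {φU θU φV θV κ s : ℝ} (hφU : 0 < φU) (hθU : 0 < θU)
    (hφV : 0 < φV) (hθV : 0 < θV) (hκ : 0 < κ)
    (u₀ : Fin (m + 1) → ℝ) (v₀ : Fin (n + 1) → ℝ)
    (hu₀ : ∀ i, u₀ i ∈ Set.Ioo (0 : ℝ) κ) (hv₀ : ∀ j, v₀ j ∈ Set.Ioo (0 : ℝ) κ)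
    (hs : s < ((m : ℝ) + n + 1) / 2) :
    ∫⁻ p in factorBox m n κ, ENNReal.ofReal
      (nmfResidual u₀ v₀ p ^ (-s) * gammaPrior φU θU φV θV p) ≠ ⊤ := by
  obtain ⟨w, hw, hwp⟩ := exists_truncated_prior (m := m) (n := n) (θU := θU) (θV := θV) hφU hφV hκ
  set A : ℝ := ((m + 1) * (n + 1)) * (κ * κ) ^ 2 with hA
  have hFA : ∀ p ∈ factorBox m n κ, nmfResidual u₀ v₀ p ≤ A := by
    intro p hp
    refine nmfResidual_le u₀ v₀ p fun i j => ?_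
    have h1 : p.1 i * p.2 j ≤ κ * κ := mul_le_mul (hp.1 i).2 (hp.2 j).2 (hp.2 j).1 hκ.le
    have h2 : u₀ i * v₀ j ≤ κ * κ := mul_le_mul (hu₀ i).2.le (hv₀ j).2.le (hv₀ j).1.le hκ.le
    have h3 : 0 ≤ p.1 i * p.2 j := mul_nonneg (hp.1 i).1 (hp.2 j).1
    have h4 : 0 ≤ u₀ i * v₀ j := mul_nonneg (hu₀ i).1.le (hv₀ j).1.le
    exact abs_le.2 ⟨by linarith, by linarith⟩
  have hfin : ∀ K : ℝ, ∫⁻ p, ENNReal.ofReal (K * w p) ≠ ⊤ := fun K =>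
    (hw.const_mul K).lintegral_lt_top.ne
  rcases le_or_gt s 0 with hs0 | hs0
  -- for `s ≤ 0` the power of the residual is bounded on the cube
  · refine ne_top_of_le_ne_top (hfin (A ^ (-s))) ?_
    refine le_trans (setLIntegral_mono' (measurableSet_factorBox m n κ) fun p hp => ?_)
      (setLIntegral_le_lintegral _ _)
    rw [hwp p hp]
    refine ENNReal.ofReal_le_ofReal (mul_le_mul_of_nonneg_right ?_
      (gammaPrior_nonneg hφU hθU hφV hθV hp))
    exact Real.rpow_le_rpow (nmfResidual_nonneg _ _ _) (hFA p hp) (by linarith)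
  obtain ⟨b₁, hb₁, hb₁'⟩ := exists_pos_lower u₀ fun i => (hu₀ i).1
  obtain ⟨b₂, hb₂, hb₂'⟩ := exists_pos_lower v₀ fun i => (hv₀ i).1
  set b := min b₁ b₂
  have hb : 0 < b := lt_min hb₁ hb₂
  have hbu : ∀ i, b ≤ u₀ i := fun i => (min_le_left _ _).trans (hb₁' i)
  have hbv : ∀ j, b ≤ v₀ j := fun j => (min_le_right _ _).trans (hb₂' j)
  -- a coordinate below `ε` makes an entry of `u vᵀ` at most `ε * κ = b ^ 2 / 2`, while
  -- all entries of `u⁰ (v⁰)ᵀ` are at least `b ^ 2`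
  set ε := b ^ 2 / (2 * κ) with hεdef
  have hε : 0 < ε := by positivity
  have hεκ : ε ≤ κ := by
    have : b ≤ κ := (hbu 0).trans (hu₀ 0).2.le
    rw [hεdef, div_le_iff₀ (by positivity)]
    nlinarith
  obtain ⟨c, C, hc, hC, hcmp⟩ := nmfResidual_comparable hκ hε u₀ v₀ hu₀ hv₀
  obtain ⟨_, B, _, hB, hBp⟩ := gammaPrior_bounds (m := m) (n := n) hφU hθU hφV hθV hε hεκ
  -- the cut-off radius exceeds every offset that occurs in the cube with `ε ≤ v 0`
  set R := √(A / c) + 1 with hR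
  have hRpos : 0 < R := by positivity
  set K := ENNReal.ofReal (c ^ (-s) * B)
  have hmeas : AEMeasurable (fun p => ENNReal.ofReal (((b ^ 2 / 2) ^ 2) ^ (-s) * w p)) :=
    (hw.const_mul _).aemeasurable.ennreal_ofReal
  refine ne_top_of_le_ne_top (b := ∫⁻ p, (ENNReal.ofReal (((b ^ 2 / 2) ^ 2) ^ (-s) * w p) +
    K * ((Set.Icc ε κ).indicator 1 (p.2 0) *
      ENNReal.ofReal (truncPow s R ‖nmfOffset u₀ v₀ p‖)))) ?_ ?_
  · rw [lintegral_add_left' hmeas, lintegral_const_mul' _ _ ENNReal.ofReal_ne_top,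
      lintegral_truncPow_offset u₀ v₀ s R measurableSet_Icc]
    refine ENNReal.add_ne_top.2 ⟨hfin _, ENNReal.mul_ne_top ENNReal.ofReal_ne_top
      (ENNReal.mul_ne_top (by simp) ((lintegral_truncPow_ne_top_iff hRpos).2 hs))⟩
  refine le_trans (setLIntegral_mono' (measurableSet_factorBox m n κ) fun p hp => ?_)
    (setLIntegral_le_lintegral _ _)
  have hW := gammaPrior_nonneg hφU hθU hφV hθV hp
  by_cases hsmall : (∃ i, p.1 i < ε) ∨ ∃ j, p.2 j < ε
  · refine le_trans ?_ le_self_add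
    rw [hwp p hp]
    refine ENNReal.ofReal_le_ofReal (mul_le_mul_of_nonneg_right ?_ hW)
    exact Real.rpow_le_rpow_of_nonpos (by positivity)
      (nmfResidual_lower_of_small hκ hb hbu hbv hp hsmall) (by linarith)
  · push Not at hsmall
    obtain ⟨hsu, hsv⟩ := hsmall
    refine le_trans ?_ le_add_self
    obtain ⟨h1, h2⟩ := hcmp p hp.1 hp.2 (hsv 0)
    have hρR : ‖nmfOffset u₀ v₀ p‖ < R := by
      have : ‖nmfOffset u₀ v₀ p‖ ≤ √(A / c) := by
        refine Real.le_sqrt_of_sq_le ?_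
        rw [le_div_iff₀' hc]
        exact h1.trans (hFA p hp)
      linarith
    have hI : p.2 0 ∈ Set.Icc ε κ := ⟨hsv 0, (hp.2 0).2⟩
    rw [Set.indicator_of_mem hI, Pi.one_apply, one_mul,
      ← ENNReal.ofReal_mul (by positivity)]
    refine ENNReal.ofReal_le_ofReal ?_
    rw [truncPow, Set.indicator_of_mem (Set.mem_Iio.2 hρR)]
    have h3 := (rpow_neg_comparable hc hC (norm_nonneg _) hs0 h1 h2).2
    have h4 := (hBp p (fun i => ⟨hsu i, (hp.1 i).2⟩) fun j => ⟨hsv j, (hp.2 j).2⟩).2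
    calc _ ≤ (c ^ (-s) * ‖nmfOffset u₀ v₀ p‖ ^ (-(2 * s))) * B :=
          mul_le_mul h3 h4 hW (by positivity)
      _ = _ := by ring

/-! ### Divergence from the threshold on, and the equivalence -/

/-- Points close enough to the true curve, with `v 0` close to `v⁰ 0`, stay in any open cube which
contains the true parameter. -/
lemma exists_tube_subset {m n : ℕ} {ε κ : ℝ} (u₀ : Fin (m + 1) → ℝ) (v₀ : Fin (n + 1) → ℝ)
    (hu₀ : ∀ i, u₀ i ∈ Set.Ioo ε κ) (hv₀ : ∀ j, v₀ j ∈ Set.Ioo ε κ) (h0 : v₀ 0 ≠ 0) :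
    ∃ r > 0, ∀ p : (Fin (m + 1) → ℝ) × (Fin (n + 1) → ℝ),
      p.2 0 ∈ Metric.ball (v₀ 0) r → ‖nmfOffset u₀ v₀ p‖ < r →
      (∀ i, p.1 i ∈ Set.Ioo ε κ) ∧ ∀ j, p.2 j ∈ Set.Ioo ε κ := by
  have hcont : ContinuousAt (fun q : ℝ × ((Fin n → ℝ) × (Fin (m + 1) → ℝ)) =>
      (q.1, q.2 + nmfBranch u₀ v₀ q.1)) (v₀ 0, 0) := by
    refine continuousAt_fst.prodMk (continuousAt_snd.add ?_)
    exact ContinuousAt.comp (f := Prod.fst) (continuousAt_nmfBranch u₀ v₀ h0) continuousAt_fst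
  have hval : nmfBranch u₀ v₀ (v₀ 0) = (fun j => v₀ j.succ, u₀) := by
    unfold nmfBranch
    ext i <;> simp [h0]
  set O : Set (ℝ × ((Fin n → ℝ) × (Fin (m + 1) → ℝ))) :=
    Set.Ioo ε κ ×ˢ ((Set.univ.pi fun _ => Set.Ioo ε κ) ×ˢ (Set.univ.pi fun _ => Set.Ioo ε κ))
  have hO : IsOpen O := isOpen_Ioo.prod
    ((isOpen_set_pi Set.finite_univ fun _ _ => isOpen_Ioo).prod
      (isOpen_set_pi Set.finite_univ fun _ _ => isOpen_Ioo))
  have hmem := hcont.preimage_mem_nhds (hO.mem_nhds (by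
    rw [hval, zero_add]
    exact ⟨hv₀ 0, fun j _ => hv₀ j.succ, fun i _ => hu₀ i⟩))
  obtain ⟨r, hr, hball⟩ := Metric.mem_nhds_iff.1 hmem
  refine ⟨r, hr, fun p hp1 hp2 => ?_⟩
  have hin : (p.2 0, nmfOffset u₀ v₀ p) ∈ Metric.ball (v₀ 0, (0 : (Fin n → ℝ) × _)) r := by
    rw [← ball_prod_same]
    exact ⟨hp1, by simpa using hp2⟩
  have h := hball hin
  simp only [Set.mem_preimage, nmfOffset, sub_add_cancel] at h
  obtain ⟨ha, hb, hc⟩ := h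
  exact ⟨fun i => hc i trivial, fun j => Fin.cases ha (fun j => hb j trivial) j⟩

lemma lintegral_eq_top {m n : ℕ} {φU θU φV θV κ s : ℝ} (hφU : 0 < φU) (hθU : 0 < θU)
    (hφV : 0 < φV) (hθV : 0 < θV) (hκ : 0 < κ)
    (u₀ : Fin (m + 1) → ℝ) (v₀ : Fin (n + 1) → ℝ)
    (hu₀ : ∀ i, u₀ i ∈ Set.Ioo (0 : ℝ) κ) (hv₀ : ∀ j, v₀ j ∈ Set.Ioo (0 : ℝ) κ)
    (hs : ((m : ℝ) + n + 1) / 2 ≤ s) :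
    ∫⁻ p in factorBox m n κ, ENNReal.ofReal
      (nmfResidual u₀ v₀ p ^ (-s) * gammaPrior φU θU φV θV p) = ⊤ := by
  have hs0 : 0 < s := lt_of_lt_of_le (by positivity) hs
  obtain ⟨b₁, hb₁, hb₁'⟩ := exists_pos_lower u₀ fun i => (hu₀ i).1
  obtain ⟨b₂, hb₂, hb₂'⟩ := exists_pos_lower v₀ fun i => (hv₀ i).1
  set ε := min b₁ b₂ / 2
  have hε : 0 < ε := half_pos (lt_min hb₁ hb₂)
  have hε₁ : ε < b₁ := (half_lt_self (lt_min hb₁ hb₂)).trans_le (min_le_left _ _)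
  have hε₂ : ε < b₂ := (half_lt_self (lt_min hb₁ hb₂)).trans_le (min_le_right _ _)
  have hεκ : ε ≤ κ := (hε₁.le.trans (hb₁' 0)).trans (hu₀ 0).2.le
  obtain ⟨r, hr, htube⟩ := exists_tube_subset (ε := ε) (κ := κ) u₀ v₀
    (fun i => ⟨hε₁.trans_le (hb₁' i), (hu₀ i).2⟩)
    (fun j => ⟨hε₂.trans_le (hb₂' j), (hv₀ j).2⟩) (hv₀ 0).1.ne'
  obtain ⟨c, C, hc, hC, hcmp⟩ := nmfResidual_comparable hκ hε u₀ v₀ hu₀ hv₀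
  obtain ⟨b, _, hb, _, hbp⟩ := gammaPrior_bounds (m := m) (n := n) hφU hθU hφV hθV hε hεκ
  set K := ENNReal.ofReal (C ^ (-s) * b) with hK
  have hK0 : K ≠ 0 := by
    rw [hK, Ne, ENNReal.ofReal_eq_zero, not_le]
    positivity
  have hdiv : ∫⁻ p, K * ((Metric.ball (v₀ 0) r).indicator 1 (p.2 0) *
      ENNReal.ofReal (truncPow s r ‖nmfOffset u₀ v₀ p‖)) = ⊤ := by
    rw [lintegral_const_mul' _ _ ENNReal.ofReal_ne_top,
      lintegral_truncPow_offset u₀ v₀ s r measurableSet_ball]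
    have h1 : ∫⁻ z : (Fin n → ℝ) × (Fin (m + 1) → ℝ), ENNReal.ofReal (truncPow s r ‖z‖) = ⊤ := by
      by_contra h
      exact absurd ((lintegral_truncPow_ne_top_iff hr).1 h) (not_lt.2 hs)
    rw [h1, ENNReal.mul_top (Metric.measure_ball_pos _ _ hr).ne', ENNReal.mul_top hK0]
  refine top_unique (hdiv.symm.le.trans ?_)
  rw [← lintegral_indicator (measurableSet_factorBox m n κ)]
  refine lintegral_mono fun p => ?_
  by_cases hp1 : p.2 0 ∈ Metric.ball (v₀ 0) r
  swap
  · simp [Set.indicator_of_notMem hp1]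
  by_cases hp2 : ‖nmfOffset u₀ v₀ p‖ < r
  swap
  · simp [truncPow, Set.indicator_of_notMem (show ‖nmfOffset u₀ v₀ p‖ ∉ Set.Iio r from hp2)]
  obtain ⟨hU, hV⟩ := htube p hp1 hp2
  have hp : p ∈ factorBox m n κ :=
    ⟨fun i => ⟨hε.le.trans (hU i).1.le, (hU i).2.le⟩,
      fun j => ⟨hε.le.trans (hV j).1.le, (hV j).2.le⟩⟩
  rw [Set.indicator_of_mem hp, Set.indicator_of_mem hp1, Pi.one_apply, one_mul,
    ← ENNReal.ofReal_mul (by positivity), truncPow, Set.indicator_of_mem (Set.mem_Iio.2 hp2)]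
  refine ENNReal.ofReal_le_ofReal ?_
  obtain ⟨h1, h2⟩ := hcmp p hp.1 hp.2 (hV 0).1.le
  have h3 := (rpow_neg_comparable hc hC (norm_nonneg _) hs0 h1 h2).1
  have h4 := (hbp p (fun i => Set.Ioo_subset_Icc_self (hU i))
    fun j => Set.Ioo_subset_Icc_self (hV j)).1
  calc _ = (C ^ (-s) * ‖nmfOffset u₀ v₀ p‖ ^ (-(2 * s))) * b := by ring
    _ ≤ _ := mul_le_mul h3 h4 hb.le (Real.rpow_nonneg (nmfResidual_nonneg _ _ _) _)

/-- Rank-one NMF (`H = H₀ = 1`) with gamma priors: for `M, N ≥ 1`,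
hyperparameters `φU, θU, φV, θV > 0`, `κ > 0`, and true factors `u⁰ ∈ (0,κ)^M`,
`v⁰ ∈ (0,κ)^N`, the integral over `[0,κ]^M × [0,κ]^N` of
`(‖u vᵀ − u⁰ (v⁰)ᵀ‖²)^{-s}` times the gamma prior density is finite iff
`s < (M + N − 1)/2`. -/
theorem rank_one_nmf_rlct
    (M N : ℕ) (hM : 1 ≤ M) (hN : 1 ≤ N)
    (φU θU φV θV κ : ℝ)
    (hφU : 0 < φU) (hθU : 0 < θU) (hφV : 0 < φV) (hθV : 0 < θV) (hκ : 0 < κ)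
    (u₀ : Fin M → ℝ) (v₀ : Fin N → ℝ)
    (hu₀ : ∀ i, u₀ i ∈ Set.Ioo (0 : ℝ) κ) (hv₀ : ∀ j, v₀ j ∈ Set.Ioo (0 : ℝ) κ)
    (s : ℝ) :
    (∫⁻ p in {p : (Fin M → ℝ) × (Fin N → ℝ) |
        (∀ i, p.1 i ∈ Set.Icc (0 : ℝ) κ) ∧ (∀ j, p.2 j ∈ Set.Icc (0 : ℝ) κ)},
      ENNReal.ofReal
        ((∑ i, ∑ j, (p.1 i * p.2 j - u₀ i * v₀ j) ^ 2) ^ (-s) *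
          ((∏ i, θU ^ φU / Real.Gamma φU * p.1 i ^ (φU - 1) * Real.exp (-θU * p.1 i)) *
           (∏ j, θV ^ φV / Real.Gamma φV * p.2 j ^ (φV - 1) * Real.exp (-θV * p.2 j))))) ≠ ⊤
    ↔ s < ((M : ℝ) + (N : ℝ) - 1) / 2 := by
  obtain ⟨m, rfl⟩ : ∃ m, M = m + 1 := ⟨M - 1, by omega⟩
  obtain ⟨n, rfl⟩ : ∃ n, N = n + 1 := ⟨N - 1, by omega⟩
  have hd : (((m + 1 : ℕ) : ℝ) + ((n + 1 : ℕ) : ℝ) - 1) / 2 = ((m : ℝ) + n + 1) / 2 := by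
    push_cast; ring
  rw [hd]
  constructor
  · intro h
    by_contra! hs
    exact h (lintegral_eq_top hφU hθU hφV hθV hκ u₀ v₀ hu₀ hv₀ hs)
  · exact fun hs => lintegral_ne_top hφU hθU hφV hθV hκ u₀ v₀ hu₀ hv₀ hs
end

section
/- Let M, N, H₀ ≥ 1 be integers, let φ_U, θ_U, φ_V, θ_V > 0, κ > 0, and let U₀ ∈ ℝ^{M×H₀}, V₀ ∈ ℝ^{H₀×N} have all entries in the open interval (0, κ). Then for every real number s > H₀(M+N−1)/2, the Lebesgue integral ∫_{[0,κ]^{M×H₀} × [0,κ]^{H₀×N}} (‖UV − U₀V₀‖²)^{−s} φ(U,V) dU dV is infinite. (Equivalently: when the model inner dimension H equals the true non-negative rank H₀, the real log canonical threshold λ of non-negative matrix factorization satisfies λ ≤ H₀(M+N−1)/2.) -/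
/-!
The parameter `(U₀, V₀)` lies on the `H₀`-dimensional fibre
`t ↦ (U₀ diag(t), diag(t)⁻¹ V₀)` of the map `(U, V) ↦ UV`, so the set where
`‖UV − U₀V₀‖ ≲ 1/n` contains a neighbourhood of size `1/n` of that fibre. Such a neighbourhood has
volume of order `n ^ (H₀ - d)` with `d = H₀(M + N)`, whereas the integrand is of order at least
`n ^ (2s)` on it. Since `2s + H₀ - d > 0`, letting `n → ∞` makes the integral infinite.

The volume bound is obtained by packing: `n ^ H₀` points of the fibre, taken on a grid in `t`, carry
pairwise disjoint sup-norm balls of radius of order `1/n` (`lintegral_eq_top_of_packing`). Each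
centre is shifted by the radius in the direction `(1, …, 1)`. Then every entry of `U` and `V`
strictly exceeds the corresponding entry of the fibre point, hence every entry of `UV` strictly
exceeds that of `U₀V₀` (`mul_sub_bounds`). This keeps the balls off the zero set of
`UV − U₀V₀`, where the real power `0 ^ (-s)` would take the value `0`.
-/

open MeasureTheory Finset

/-- If for every `n` a set contains `n ^ h` disjoint balls of radius `D / n` on which the integrand
is at least `K n ^ (2s)`, and `2s + h` exceeds the dimension, then the integral is infinite: the
balls contribute at least a constant times `n ^ (2s + h - dim)`. -/
lemma lintegral_eq_top_of_packing {E : Type*} [NormedAddCommGroup E] [NormedSpace ℝ E]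
    [MeasurableSpace E] [BorelSpace E] [FiniteDimensional ℝ E] (μ : Measure E)
    [μ.IsAddHaarMeasure] (g : E → ENNReal) (S : Set E) (h : ℕ) (D K s : ℝ)
    (hD : 0 < D) (hK : 0 < K) (hs : 0 < 2 * s + h - Module.finrank ℝ E)
    (hpack : ∀ n : ℕ, 1 ≤ n → ∃ c : (Fin h → Fin n) → E,
      (Pairwise fun a b => Disjoint (Metric.ball (c a) (D / n)) (Metric.ball (c b) (D / n))) ∧
      ∀ a, ∀ p ∈ Metric.ball (c a) (D / n), p ∈ S ∧
        ENNReal.ofReal (K * (n : ℝ) ^ (2 * s)) ≤ g p) :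
    ∫⁻ p in S, g p ∂μ = ⊤ := by
  set d := Module.finrank ℝ E with hd
  set v := (μ (Metric.ball 0 1)).toReal with hv
  have hv0 : 0 < v := ENNReal.toReal_pos (Metric.measure_ball_pos μ 0 one_pos).ne'
    measure_ball_lt_top.ne
  have hvE : μ (Metric.ball 0 1) = ENNReal.ofReal v :=
    (ENNReal.ofReal_toReal measure_ball_lt_top.ne).symm
  have key : ∀ n : ℕ, 1 ≤ n →
      ENNReal.ofReal (K * D ^ d * v * (n : ℝ) ^ (2 * s + h - d)) ≤ ∫⁻ p in S, g p ∂μ := by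
    intro n hn
    obtain ⟨c, hdisj, hc⟩ := hpack n hn
    have hn0 : (0 : ℝ) < n := by exact_mod_cast hn
    set A : Set E := ⋃ a, Metric.ball (c a) (D / n) with hA
    have hAm : MeasurableSet A := MeasurableSet.iUnion fun a => measurableSet_ball
    have hAS : A ⊆ S := Set.iUnion_subset fun a p hp => (hc a p hp).1
    have hμA : μ A = ENNReal.ofReal ((n : ℝ) ^ h * ((D / n) ^ d * v)) := by
      rw [hA, measure_iUnion hdisj fun a => measurableSet_ball]
      have hball : ∀ a, μ (Metric.ball (c a) (D / n)) = ENNReal.ofReal ((D / n) ^ d * v) := by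
        intro a
        rw [Measure.addHaar_ball_of_pos μ _ (by positivity), hvE, ← ENNReal.ofReal_mul (by positivity)]
      rw [tsum_fintype, Finset.sum_congr rfl fun a _ => hball a, Finset.sum_const,
        ENNReal.ofReal_mul (by positivity : (0 : ℝ) ≤ (n : ℝ) ^ h),
        ENNReal.ofReal_pow hn0.le, nsmul_eq_mul]
      simp
    calc ENNReal.ofReal (K * D ^ d * v * (n : ℝ) ^ (2 * s + h - d))
        = ENNReal.ofReal (K * (n : ℝ) ^ (2 * s)) * μ A := by
          rw [hμA, ← ENNReal.ofReal_mul (by positivity)]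
          congr 1
          rw [Real.rpow_sub hn0, Real.rpow_add hn0, Real.rpow_natCast, Real.rpow_natCast, div_pow]
          field_simp
      _ = ∫⁻ _ in A, ENNReal.ofReal (K * (n : ℝ) ^ (2 * s)) ∂μ := (setLIntegral_const _ _).symm
      _ ≤ ∫⁻ p in A, g p ∂μ := by
          refine setLIntegral_mono' hAm fun p hp => ?_
          obtain ⟨a, ha⟩ := Set.mem_iUnion.1 hp
          exact (hc a p ha).2
      _ ≤ ∫⁻ p in S, g p ∂μ := lintegral_mono_set hAS
  have hlim : Filter.Tendsto
      (fun n : ℕ => ENNReal.ofReal (K * D ^ d * v * (n : ℝ) ^ (2 * s + h - d)))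
      Filter.atTop (nhds ⊤) := by
    refine ENNReal.tendsto_ofReal_nhds_top.2 ?_
    exact Filter.Tendsto.const_mul_atTop (by positivity)
      ((tendsto_rpow_atTop hs).comp tendsto_natCast_atTop_atTop)
  exact top_le_iff.1 (le_of_tendsto hlim (Filter.eventually_atTop.2 ⟨1, key⟩))

/-- One term of an entry of `UV − U₀V₀` when `x`, `y` lie slightly above the fibre point
`(t u, v / t)`: it is positive and at most of order `δ`. -/
lemma mul_sub_bounds {u v t x y κ δ : ℝ} (hu : 0 < u) (hv : 0 < v) (huκ : u < κ) (hvκ : v < κ)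
    (ht : 1 ≤ t) (ht2 : t ≤ 2) (hδκ : δ ≤ κ / 2)
    (hx : t * u < x) (hx' : x < t * u + 2 * δ) (hy : v / t < y) (hy' : y < v / t + 2 * δ) :
    0 < x * y - u * v ∧ x * y - u * v ≤ 8 * κ * δ := by
  have ht0 : 0 < t := by linarith
  set w := v / t with hw
  have hwpos : 0 < w := by positivity
  have huv : u * v = (t * u) * w := by rw [hw]; field_simp
  have hwκ : w ≤ κ := (div_le_self hv.le ht).trans hvκ.le
  have htu : t * u ≤ 2 * κ := by nlinarith
  have htu0 : 0 < t * u := by positivity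
  rw [huv]
  generalize t * u = z at *
  obtain ⟨a, rfl⟩ : ∃ a, x = z + a := ⟨x - z, by ring⟩
  obtain ⟨b, rfl⟩ : ∃ b, y = w + b := ⟨y - w, by ring⟩
  have ha : 0 < a := by linarith
  have hb : 0 < b := by linarith
  have ha' : a ≤ 2 * δ := by linarith
  have hb' : b ≤ 2 * δ := by linarith
  have h1 : z * b ≤ 2 * κ * (2 * δ) := mul_le_mul htu hb' hb.le (by linarith)
  have h2 : a * w ≤ 2 * δ * κ := mul_le_mul ha' hwκ hwpos.le (by linarith)
  have h3 : a * b ≤ 2 * δ * κ := mul_le_mul ha' (by linarith) hb.le (by linarith)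
  constructor
  · nlinarith [mul_pos htu0 hb, mul_pos ha hwpos, mul_pos ha hb]
  · nlinarith

lemma prior_continuousAt {M H N : ℕ} (φU θU φV θV : ℝ)
    (p₀ : (Fin M → Fin H → ℝ) × (Fin H → Fin N → ℝ))
    (hU₀ : ∀ i k, 0 < p₀.1 i k) (hV₀ : ∀ k j, 0 < p₀.2 k j) :
    ContinuousAt (fun p : (Fin M → Fin H → ℝ) × (Fin H → Fin N → ℝ) =>
      (∏ i, ∏ k, θU ^ φU / Real.Gamma φU * p.1 i k ^ (φU - 1) * Real.exp (-θU * p.1 i k)) *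
      (∏ k, ∏ j, θV ^ φV / Real.Gamma φV * p.2 k j ^ (φV - 1) * Real.exp (-θV * p.2 k j))) p₀ := by
  refine ContinuousAt.mul ?_ ?_
  · refine tendsto_finsetProd _ fun i _ => tendsto_finsetProd _ fun k _ => ?_
    have h : ContinuousAt (fun p : (Fin M → Fin H → ℝ) × (Fin H → Fin N → ℝ) => p.1 i k) p₀ := by
      fun_prop
    exact (continuousAt_const.mul (h.rpow_const (Or.inl (hU₀ i k).ne'))).mul
      (Real.continuous_exp.continuousAt.comp (continuousAt_const.mul h))
  · refine tendsto_finsetProd _ fun k _ => tendsto_finsetProd _ fun j _ => ?_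
    have h : ContinuousAt (fun p : (Fin M → Fin H → ℝ) × (Fin H → Fin N → ℝ) => p.2 k j) p₀ := by
      fun_prop
    exact (continuousAt_const.mul (h.rpow_const (Or.inl (hV₀ k j).ne'))).mul
      (Real.continuous_exp.continuousAt.comp (continuousAt_const.mul h))

lemma domain_mem_nhds {M H N : ℕ} {κ : ℝ} (p₀ : (Fin M → Fin H → ℝ) × (Fin H → Fin N → ℝ))
    (hU₀ : ∀ i k, p₀.1 i k ∈ Set.Ioo (0 : ℝ) κ) (hV₀ : ∀ k j, p₀.2 k j ∈ Set.Ioo (0 : ℝ) κ) :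
    {p : (Fin M → Fin H → ℝ) × (Fin H → Fin N → ℝ) |
        (∀ i k, p.1 i k ∈ Set.Icc (0 : ℝ) κ) ∧ (∀ k j, p.2 k j ∈ Set.Icc (0 : ℝ) κ)}
      ∈ nhds p₀ := by
  refine Filter.Eventually.and ?_ ?_
  · refine Filter.eventually_all.2 fun i => Filter.eventually_all.2 fun k => ?_
    have h : ContinuousAt (fun p : (Fin M → Fin H → ℝ) × (Fin H → Fin N → ℝ) => p.1 i k) p₀ := by
      fun_prop
    exact h (Icc_mem_nhds (hU₀ i k).1 (hU₀ i k).2)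
  · refine Filter.eventually_all.2 fun k => Filter.eventually_all.2 fun j => ?_
    have h : ContinuousAt (fun p : (Fin M → Fin H → ℝ) × (Fin H → Fin N → ℝ) => p.2 k j) p₀ := by
      fun_prop
    exact h (Icc_mem_nhds (hV₀ k j).1 (hV₀ k j).2)

lemma exists_pos_le_entries {M H : ℕ} (hM : 1 ≤ M) (hH : 1 ≤ H) (U₀ : Fin M → Fin H → ℝ)
    (hU₀ : ∀ i k, 0 < U₀ i k) : ∃ m : ℝ, 0 < m ∧ ∀ i k, m ≤ U₀ i k := by
  have : Nonempty (Fin M × Fin H) := ⟨(⟨0, hM⟩, ⟨0, hH⟩)⟩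
  obtain ⟨⟨i, k⟩, h⟩ := Finite.exists_min (fun q : Fin M × Fin H => U₀ q.1 q.2)
  exact ⟨U₀ i k, hU₀ i k, fun i' k' => h (i', k')⟩

set_option maxHeartbeats 1000000 in
/-- Case `H = H₀`: for `M, N, H₀ ≥ 1`, gamma hyperparameters,
`κ > 0`, and true factors `U₀ ∈ (0,κ)^{M×H₀}`, `V₀ ∈ (0,κ)^{H₀×N}`, for every
`s > H₀(M+N−1)/2` the integral of `(‖UV − U₀V₀‖²)^{-s}` times the gamma prior
over `[0,κ]^{M×H₀} × [0,κ]^{H₀×N}` diverges (so the RLCT λ ≤ H₀(M+N−1)/2). -/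
theorem nmf_rlct_upper_bound_H_eq_H0
    (M N H₀ : ℕ) (hM : 1 ≤ M) (hN : 1 ≤ N) (hH₀ : 1 ≤ H₀)
    (φU θU φV θV κ : ℝ)
    (hφU : 0 < φU) (hθU : 0 < θU) (hφV : 0 < φV) (hθV : 0 < θV) (hκ : 0 < κ)
    (U₀ : Fin M → Fin H₀ → ℝ) (V₀ : Fin H₀ → Fin N → ℝ)
    (hU₀ : ∀ i k, U₀ i k ∈ Set.Ioo (0 : ℝ) κ) (hV₀ : ∀ k j, V₀ k j ∈ Set.Ioo (0 : ℝ) κ)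
    (s : ℝ) (hs : (H₀ : ℝ) * ((M : ℝ) + (N : ℝ) - 1) / 2 < s) :
    (∫⁻ p in {p : (Fin M → Fin H₀ → ℝ) × (Fin H₀ → Fin N → ℝ) |
        (∀ i k, p.1 i k ∈ Set.Icc (0 : ℝ) κ) ∧ (∀ k j, p.2 k j ∈ Set.Icc (0 : ℝ) κ)},
      ENNReal.ofReal
        ((∑ i, ∑ j, ((∑ k, p.1 i k * p.2 k j) - ∑ k, U₀ i k * V₀ k j) ^ 2) ^ (-s) *
          ((∏ i, ∏ k, θU ^ φU / Real.Gamma φU * p.1 i k ^ (φU - 1) *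
              Real.exp (-θU * p.1 i k)) *
           (∏ k, ∏ j, θV ^ φV / Real.Gamma φV * p.2 k j ^ (φV - 1) *
              Real.exp (-θV * p.2 k j))))) = ⊤ := by
  set p₀ : (Fin M → Fin H₀ → ℝ) × (Fin H₀ → Fin N → ℝ) := (U₀, V₀) with hp₀
  have hU₀p : ∀ i k, 0 < U₀ i k := fun i k => (hU₀ i k).1
  have hV₀p : ∀ k j, 0 < V₀ k j := fun k j => (hV₀ k j).1
  have hMr : (1 : ℝ) ≤ M := by exact_mod_cast hM
  have hNr : (1 : ℝ) ≤ N := by exact_mod_cast hN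
  have hHr : (1 : ℝ) ≤ H₀ := by exact_mod_cast hH₀
  have hs0 : 0 < s := by
    refine lt_of_le_of_lt ?_ hs
    have : 0 ≤ (H₀ : ℝ) * ((M : ℝ) + (N : ℝ) - 1) := mul_nonneg (by linarith) (by linarith)
    linarith
  obtain ⟨m, hm, hmU⟩ := exists_pos_le_entries hM hH₀ U₀ hU₀p
  have hmκ : m < κ := (hmU ⟨0, hM⟩ ⟨0, hH₀⟩).trans_lt (hU₀ _ _).2
  have hcont := prior_continuousAt φU θU φV θV p₀ hU₀p hV₀p
  set pr : (Fin M → Fin H₀ → ℝ) × (Fin H₀ → Fin N → ℝ) → ℝ := fun p =>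
      (∏ i, ∏ k, θU ^ φU / Real.Gamma φU * p.1 i k ^ (φU - 1) * Real.exp (-θU * p.1 i k)) *
      (∏ k, ∏ j, θV ^ φV / Real.Gamma φV * p.2 k j ^ (φV - 1) * Real.exp (-θV * p.2 k j))
    with hpr
  have hprpos : 0 < pr p₀ := by
    have hΓU := Real.Gamma_pos_of_pos hφU
    have hΓV := Real.Gamma_pos_of_pos hφV
    refine mul_pos (Finset.prod_pos fun i _ => Finset.prod_pos fun k _ => ?_)
      (Finset.prod_pos fun k _ => Finset.prod_pos fun j _ => ?_)
    · have := Real.rpow_pos_of_pos (hU₀p i k) (φU - 1)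
      positivity
    · have := Real.rpow_pos_of_pos (hV₀p k j) (φV - 1)
      positivity
  -- Near `p₀` the prior is bounded below by a positive constant.
  set c₀ := pr p₀ / 2 with hc₀
  have hc₀pos : 0 < c₀ := half_pos hprpos
  have hev : ∀ᶠ p in nhds p₀, c₀ < pr p := hcont.eventually_const_lt (half_lt_self hprpos)
  obtain ⟨ρ, hρ, hball⟩ := Metric.mem_nhds_iff.1
    (Filter.inter_mem (domain_mem_nhds p₀ hU₀ hV₀) hev)
  -- `η` bounds the scaling parameter, `1 ≤ t ≤ 1 + η`, so that all the balls fit into `ball p₀ ρ`.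
  obtain ⟨η, hη, hη1, hηρ⟩ : ∃ η : ℝ, 0 < η ∧ η ≤ 1 ∧ 2 * (η * κ) < ρ := by
    refine ⟨min 1 (ρ / (4 * κ)), by positivity, min_le_left _ _, ?_⟩
    have h := min_le_right 1 (ρ / (4 * κ))
    rw [le_div_iff₀ (by positivity)] at h
    linarith
  -- With radius `D / n`, grid points at distance `η / n` in `t` move an entry of `U` by at least
  -- `m η / n`, twice the radius.
  set D := η * m / 2 with hD
  have hDpos : 0 < D := by positivity
  -- `‖UV − U₀V₀‖² ≤ B / n²` on the balls of radius `D / n`.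
  set B := (M : ℝ) * N * (H₀ * (8 * κ * D)) ^ 2 with hB
  have hBpos : 0 < B := by positivity
  have hpi : ∀ a b : ℕ, (volume : Measure (Fin a → Fin b → ℝ)).IsAddHaarMeasure := fun a b =>
    Measure.pi.isAddHaarMeasure fun _ : Fin a => (volume : Measure (Fin b → ℝ))
  have := hpi M H₀
  have := hpi H₀ N
  have : (volume : Measure ((Fin M → Fin H₀ → ℝ) × (Fin H₀ → Fin N → ℝ))).IsAddHaarMeasure :=
    Measure.prod.instIsAddHaarMeasure volume volume
  refine lintegral_eq_top_of_packing volume _ _ H₀ D (B ^ (-s) * c₀) s hDpos (by positivity) ?_ ?_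
  · have hfin : Module.finrank ℝ ((Fin M → Fin H₀ → ℝ) × (Fin H₀ → Fin N → ℝ))
        = M * H₀ + H₀ * N := by
      simp [Module.finrank_prod, Module.finrank_pi_fintype]
    rw [hfin]
    push_cast
    nlinarith
  intro n hn
  have hn0 : (0 : ℝ) < n := by exact_mod_cast hn
  have hn1 : (1 : ℝ) ≤ n := by exact_mod_cast hn
  set δ := D / n with hδ
  have hδpos : 0 < δ := by positivity
  have hδD : δ ≤ D := div_le_self hDpos.le hn1
  have hDκ : D ≤ η * κ / 2 := by
    have := mul_le_mul_of_nonneg_left hmκ.le hη.le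
    linarith
  have hηκ : η * κ ≤ κ := mul_le_of_le_one_left hκ.le hη1
  let t : (Fin H₀ → Fin n) → Fin H₀ → ℝ := fun a k => 1 + η * ((a k : ℕ) : ℝ) / n
  have ht1 : ∀ a k, 1 ≤ t a k := fun a k => by
    have : 0 ≤ η * ((a k : ℕ) : ℝ) / n := by positivity
    simp only [t]; linarith
  have htη : ∀ a k, t a k ≤ 1 + η := fun a k => by
    have h1 : ((a k : ℕ) : ℝ) ≤ n := by exact_mod_cast (a k).2.le
    have : η * ((a k : ℕ) : ℝ) / n ≤ η := by
      rw [div_le_iff₀ hn0]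
      exact mul_le_mul_of_nonneg_left h1 hη.le
    simp only [t]; linarith
  -- Shifting the fibre point by the radius puts the whole ball above it, entry by entry.
  let c : (Fin H₀ → Fin n) → (Fin M → Fin H₀ → ℝ) × (Fin H₀ → Fin N → ℝ) := fun a =>
    (fun i k => t a k * U₀ i k + δ, fun k j => V₀ k j / t a k + δ)
  have hmem : ∀ a, ∀ p ∈ Metric.ball (c a) δ,
      (∀ i k, |p.1 i k - (t a k * U₀ i k + δ)| < δ) ∧
      (∀ k j, |p.2 k j - (V₀ k j / t a k + δ)| < δ) := by
    intro a p hp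
    have h := Metric.mem_ball.1 hp
    rw [Prod.dist_eq, max_lt_iff, dist_pi_lt_iff hδpos, dist_pi_lt_iff hδpos] at h
    refine ⟨fun i k => ?_, fun k j => ?_⟩
    · exact (dist_pi_lt_iff hδpos).1 (h.1 i) k
    · exact (dist_pi_lt_iff hδpos).1 (h.2 k) j
  refine ⟨c, ?_, ?_⟩
  · intro a b hab
    refine Set.disjoint_left.2 fun p hpa hpb => ?_
    obtain ⟨k, hk⟩ := Function.ne_iff.1 hab
    have h1 := abs_lt.1 ((hmem a p hpa).1 ⟨0, hM⟩ k)
    have h2 := abs_lt.1 ((hmem b p hpb).1 ⟨0, hM⟩ k)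
    have hu := hmU ⟨0, hM⟩ k
    generalize U₀ ⟨0, hM⟩ k = u at h1 h2 hu
    have hδ2 : 2 * δ = η / n * m := by rw [hδ, hD]; field_simp
    have hηn : 0 < η / n := by positivity
    have hgap : ∀ x y : ℕ, x < y → 2 * δ ≤ (1 + η * (y : ℝ) / n) * u - (1 + η * (x : ℝ) / n) * u := by
      intro x y hxy
      have hxy' : (x : ℝ) + 1 ≤ y := by exact_mod_cast hxy
      have e : (1 + η * (y : ℝ) / n) * u - (1 + η * (x : ℝ) / n) * u
          = η / n * (((y : ℝ) - x) * u) := by ring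
      rw [e, hδ2]
      refine mul_le_mul_of_nonneg_left ?_ hηn.le
      nlinarith
    rcases lt_or_gt_of_ne (fun h => hk (Fin.ext h) : (a k : ℕ) ≠ (b k : ℕ)) with h | h
    · have := hgap _ _ h
      simp only [t] at h1 h2
      linarith [h1.1, h1.2, h2.1, h2.2]
    · have := hgap _ _ h
      simp only [t] at h1 h2
      linarith [h1.1, h1.2, h2.1, h2.2]
  · intro a p hp
    obtain ⟨hpU, hpV⟩ := hmem a p hp
    have hpball : p ∈ Metric.ball p₀ ρ := by
      refine Metric.mem_ball.2 ?_
      rw [Prod.dist_eq, max_lt_iff, dist_pi_lt_iff hρ, dist_pi_lt_iff hρ]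
      refine ⟨fun i => (dist_pi_lt_iff hρ).2 fun k => ?_,
        fun k => (dist_pi_lt_iff hρ).2 fun j => ?_⟩
      · have h := abs_lt.1 (hpU i k)
        have h1 : 0 ≤ (t a k - 1) * U₀ i k :=
          mul_nonneg (by linarith [ht1 a k]) (hU₀p i k).le
        have h2 : (t a k - 1) * U₀ i k ≤ η * κ :=
          mul_le_mul (by linarith [htη a k]) (hU₀ i k).2.le (hU₀p i k).le hη.le
        rw [Real.dist_eq, abs_lt]
        constructor <;> simp only [hp₀] <;> nlinarith [h.1, h.2]
      · have h := abs_lt.1 (hpV k j)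
        have ht0 : 0 < t a k := by linarith [ht1 a k]
        have h1 : V₀ k j / t a k ≤ V₀ k j := div_le_self (hV₀p k j).le (ht1 a k)
        have h2 : V₀ k j - η * κ ≤ V₀ k j / t a k := by
          have e : V₀ k j = t a k * (V₀ k j / t a k) := by field_simp
          have hw : 0 < V₀ k j / t a k := div_pos (hV₀p k j) ht0
          have h3 : (t a k - 1) * (V₀ k j / t a k) ≤ η * κ :=
            mul_le_mul (by linarith [htη a k]) (h1.trans (hV₀ k j).2.le) hw.le hη.le
          linarith
        rw [Real.dist_eq, abs_lt]
        constructor <;> simp only [hp₀] <;> linarith [h.1, h.2]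
    obtain ⟨hpS, hppr⟩ := hball hpball
    refine ⟨hpS, ENNReal.ofReal_le_ofReal ?_⟩
    have hterm : ∀ i j k, 0 < p.1 i k * p.2 k j - U₀ i k * V₀ k j ∧
        p.1 i k * p.2 k j - U₀ i k * V₀ k j ≤ 8 * κ * δ := by
      intro i j k
      have h1 := abs_lt.1 (hpU i k)
      have h2 := abs_lt.1 (hpV k j)
      exact mul_sub_bounds (hU₀p i k) (hV₀p k j) (hU₀ i k).2 (hV₀ k j).2 (ht1 a k)
        (by linarith [htη a k]) (by linarith) (by linarith [h1.1]) (by linarith [h1.2])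
        (by linarith [h2.1]) (by linarith [h2.2])
    have hentry : ∀ i j, 0 < (∑ k, p.1 i k * p.2 k j) - ∑ k, U₀ i k * V₀ k j ∧
        (∑ k, p.1 i k * p.2 k j) - ∑ k, U₀ i k * V₀ k j ≤ H₀ * (8 * κ * δ) := by
      intro i j
      rw [← Finset.sum_sub_distrib]
      refine ⟨Finset.sum_pos (fun k _ => (hterm i j k).1) ⟨⟨0, hH₀⟩, Finset.mem_univ _⟩, ?_⟩
      refine (Finset.sum_le_sum fun k _ => (hterm i j k).2).trans_eq ?_
      simp
    set F := ∑ i, ∑ j, ((∑ k, p.1 i k * p.2 k j) - ∑ k, U₀ i k * V₀ k j) ^ 2 with hF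
    have hFpos : 0 < F :=
      Finset.sum_pos (fun i _ => Finset.sum_pos (fun j _ => pow_pos (hentry i j).1 2)
        ⟨⟨0, hN⟩, Finset.mem_univ _⟩) ⟨⟨0, hM⟩, Finset.mem_univ _⟩
    have hFle : F ≤ B * ((n : ℝ) ^ (2 : ℝ))⁻¹ := by
      have h1 : F ≤ ∑ _i : Fin M, ∑ _j : Fin N, ((H₀ : ℝ) * (8 * κ * δ)) ^ 2 :=
        Finset.sum_le_sum fun i _ => Finset.sum_le_sum fun j _ =>
          pow_le_pow_left₀ (hentry i j).1.le (hentry i j).2 2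
      refine h1.trans_eq ?_
      simp only [Finset.sum_const, Finset.card_univ, Fintype.card_fin, nsmul_eq_mul]
      rw [hB, hδ, Real.rpow_two]
      field_simp
    have hFs : B ^ (-s) * (n : ℝ) ^ (2 * s) ≤ F ^ (-s) := by
      have h1 := Real.rpow_le_rpow_of_nonpos hFpos hFle (neg_nonpos.2 hs0.le)
      rwa [Real.mul_rpow hBpos.le (by positivity), ← Real.rpow_neg hn0.le, ← Real.rpow_mul hn0.le,
        show -2 * -s = 2 * s by ring] at h1
    calc B ^ (-s) * c₀ * (n : ℝ) ^ (2 * s) = B ^ (-s) * (n : ℝ) ^ (2 * s) * c₀ := by ring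
      _ ≤ F ^ (-s) * pr p := mul_le_mul hFs (le_of_lt hppr) hc₀pos.le (by positivity)
end

section
/- Let M, N ≥ 1 and H ≥ H₀ ≥ 1 be integers, let φ_U, θ_U, φ_V, θ_V > 0, κ > 0, and let U₀ ∈ ℝ^{M×H₀}, V₀ ∈ ℝ^{H₀×N} have all entries in the open interval (0, κ). Assume the non-negative rank of U₀V₀ equals H₀, i.e., there is no factorization U₀V₀ = U′V′ with entrywise nonnegative U′ ∈ ℝ^{M×H′}, V′ ∈ ℝ^{H′×N} and H′ < H₀. Then for every real number s > ½[(H−H₀)·min{Mφ_U, Nφ_V} + H₀(M+N−1)], the Lebesgue integral ∫_{[0,κ]^{M×H} × [0,κ]^{H×N}} (‖UV − U₀V₀‖²)^{−s} φ(U,V) dU dV is infinite. (Equivalently: the real log canonical threshold λ of non-negative matrix factorization with gamma priors satisfies λ ≤ ½[(H−H₀)·min{Mφ_U, Nφ_V} + H₀(M+N−1)].) -/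
/-!
For every small width `ε` there is a region of prior mass at least a constant times `ε ^ c`, where
`c = (H - H₀) min (M φU) (N φV) + H₀ (M + N - 1)`, on which `0 < ‖UV - U₀V₀‖² ≤ K ε²`. Hence the
integral is at least a constant times `ε ^ (c - 2 s)`, which is unbounded as `ε → 0` once
`2 s > c`.

The region consists of the factorizations near `(U₀ D, D⁻¹ V₀)` with `D` a diagonal scaling
close to the identity: each of the `H₀` rank-one terms has `M + N` parameters, one of which (the
scaling) is free. To stay with boxes, the scaling is discretized: with `ε = η / n`, each term is
rescaled by one of `n` factors, giving `n ^ H₀` disjoint cells of side `ε` (`lower_bound`). The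
`H - H₀` superfluous columns of `U` are confined to `(ε/2, ε]`, which has gamma mass at least a
constant times `ε ^ φU` per entry (`gammaDens_lower_shell`), while the matching rows of `V` stay
in `(κ/2, κ]`, or the other way round, whichever is cheaper.

The cells lie strictly above the true factorization, so `UV - U₀V₀` is entrywise positive on them
(`term_bounds`). This matters because `0 ^ (-s) = 0` in Lean for `s > 0`.
-/

open MeasureTheory Finset

/-! ### Lower bounds for the gamma density -/

/-- The `Gamma(φ, θ)` density, written as in the prior. -/
noncomputable def gammaDens (φ θ x : ℝ) : ℝ :=
  θ ^ φ / Real.Gamma φ * x ^ (φ - 1) * Real.exp (-θ * x)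

lemma gammaDens_lower_compact {φ θ β κ : ℝ} (hφ : 0 < φ) (hθ : 0 < θ) (hβ : 0 < β) :
    ∃ c : ℝ, 0 < c ∧ ∀ x ∈ Set.Icc β κ, c ≤ gammaDens φ θ x := by
  refine isCompact_Icc.exists_forall_le' (f := gammaDens φ θ) ?_ ?_
  · intro x hx
    have hx0 : x ≠ 0 := (lt_of_lt_of_le hβ hx.1).ne'
    unfold gammaDens
    refine ContinuousAt.continuousWithinAt ?_
    refine (continuousAt_const.mul (Real.continuousAt_rpow_const _ _ (Or.inl hx0))).mul ?_
    fun_prop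
  · intro x hx
    have hx0 : 0 < x := lt_of_lt_of_le hβ hx.1
    have := Real.Gamma_pos_of_pos hφ
    unfold gammaDens
    positivity

/-- On a dyadic shell `(p/2, p]` the gamma density is comparable to `p ^ (φ - 1)`, uniformly in
`p ≤ κ`; hence the shell has mass of order at least `p ^ φ`. -/
lemma gammaDens_lower_shell {φ θ κ : ℝ} (hφ : 0 < φ) (hθ : 0 < θ) :
    ∃ c : ℝ, 0 < c ∧ ∀ p, 0 < p → p ≤ κ → ∀ x ∈ Set.Ioc (p / 2) p,
      c * p ^ (φ - 1) ≤ gammaDens φ θ x := by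
  have hG := Real.Gamma_pos_of_pos hφ
  refine ⟨θ ^ φ / Real.Gamma φ * min 1 ((1 / 2 : ℝ) ^ (φ - 1)) * Real.exp (-θ * κ),
    by positivity, ?_⟩
  intro p hp hpκ x hx
  have hx0 : 0 < x := by linarith [hx.1]
  have ht : min 1 ((1 / 2 : ℝ) ^ (φ - 1)) ≤ (x / p) ^ (φ - 1) := by
    have h1 : x / p ≤ 1 := by rw [div_le_one hp]; exact hx.2
    have h2 : 1 / 2 ≤ x / p := by rw [le_div_iff₀ hp]; linarith [hx.1]
    rcases le_total 1 φ with h | h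
    · exact (min_le_right _ _).trans (Real.rpow_le_rpow (by norm_num) h2 (by linarith))
    · exact (min_le_left _ _).trans
        (Real.one_le_rpow_of_pos_of_le_one_of_nonpos (by positivity) h1 (by linarith))
  have hxp : x ^ (φ - 1) = p ^ (φ - 1) * (x / p) ^ (φ - 1) := by
    rw [← Real.mul_rpow hp.le (by positivity), mul_div_cancel₀ _ hp.ne']
  have he : Real.exp (-θ * κ) ≤ Real.exp (-θ * x) := by
    apply Real.exp_le_exp.2
    nlinarith [hx.2]
  unfold gammaDens
  calc θ ^ φ / Real.Gamma φ * min 1 ((1 / 2 : ℝ) ^ (φ - 1)) * Real.exp (-θ * κ) * p ^ (φ - 1)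
      = θ ^ φ / Real.Gamma φ * (p ^ (φ - 1) * min 1 ((1 / 2 : ℝ) ^ (φ - 1)))
          * Real.exp (-θ * κ) := by ring
    _ ≤ θ ^ φ / Real.Gamma φ * (p ^ (φ - 1) * (x / p) ^ (φ - 1)) * Real.exp (-θ * x) := by
        gcongr
    _ = _ := by rw [hxp]

/-! ### Integrals over boxes of pairs of matrices -/

/-- A half-open box in the space of pairs of matrices. -/
def matBox {M H N : ℕ} (lU hU : Fin M → Fin H → ℝ) (lV hV : Fin H → Fin N → ℝ) :
    Set ((Fin M → Fin H → ℝ) × (Fin H → Fin N → ℝ)) :=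
  (Set.univ.pi fun i => Set.univ.pi fun k => Set.Ioc (lU i k) (hU i k)) ×ˢ
    (Set.univ.pi fun k => Set.univ.pi fun j => Set.Ioc (lV k j) (hV k j))

lemma mem_matBox {M H N : ℕ} {lU hU : Fin M → Fin H → ℝ} {lV hV : Fin H → Fin N → ℝ}
    {p : (Fin M → Fin H → ℝ) × (Fin H → Fin N → ℝ)} :
    p ∈ matBox lU hU lV hV ↔ (∀ i k, p.1 i k ∈ Set.Ioc (lU i k) (hU i k)) ∧
      (∀ k j, p.2 k j ∈ Set.Ioc (lV k j) (hV k j)) := by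
  simp only [matBox, Set.mem_prod, Set.mem_pi, Set.mem_univ, true_imp_iff]

lemma measurableSet_matBox {M H N : ℕ} (lU hU : Fin M → Fin H → ℝ) (lV hV : Fin H → Fin N → ℝ) :
    MeasurableSet (matBox lU hU lV hV) :=
  (MeasurableSet.univ_pi fun _ => MeasurableSet.univ_pi fun _ => measurableSet_Ioc).prod
    (MeasurableSet.univ_pi fun _ => MeasurableSet.univ_pi fun _ => measurableSet_Ioc)

lemma volume_matBox {M H N : ℕ} {lU hU : Fin M → Fin H → ℝ} {lV hV : Fin H → Fin N → ℝ}
    (h1 : ∀ i k, lU i k ≤ hU i k) (h2 : ∀ k j, lV k j ≤ hV k j) :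
    volume (matBox lU hU lV hV) =
      ENNReal.ofReal ((∏ i, ∏ k, (hU i k - lU i k)) * ∏ k, ∏ j, (hV k j - lV k j)) := by
  have e1 : ∀ i k, 0 ≤ hU i k - lU i k := fun i k => sub_nonneg.2 (h1 i k)
  have e2 : ∀ k j, 0 ≤ hV k j - lV k j := fun k j => sub_nonneg.2 (h2 k j)
  rw [matBox, Measure.volume_eq_prod, Measure.prod_prod,
    ENNReal.ofReal_mul (prod_nonneg fun i _ => prod_nonneg fun k _ => e1 i k)]
  simp only [volume_pi_pi, Real.volume_Ioc]
  congr 1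
  · rw [ENNReal.ofReal_prod_of_nonneg (fun i _ => prod_nonneg fun k _ => e1 i k)]
    exact prod_congr rfl fun i _ => (ENNReal.ofReal_prod_of_nonneg fun k _ => e1 i k).symm
  · rw [ENNReal.ofReal_prod_of_nonneg (fun i _ => prod_nonneg fun k _ => e2 i k)]
    exact prod_congr rfl fun i _ => (ENNReal.ofReal_prod_of_nonneg fun k _ => e2 i k).symm

/-- The integrand `(‖UV - U₀V₀‖²)^(-s) φ(U,V)`, with the prior written through `gammaDens`. -/
noncomputable def zetaIntegrand {M N H H₀ : ℕ} (φU θU φV θV : ℝ) (U₀ : Fin M → Fin H₀ → ℝ)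
    (V₀ : Fin H₀ → Fin N → ℝ) (s : ℝ) (p : (Fin M → Fin H → ℝ) × (Fin H → Fin N → ℝ)) : ℝ :=
  (∑ i, ∑ j, ((∑ k, p.1 i k * p.2 k j) - ∑ k, U₀ i k * V₀ k j) ^ 2) ^ (-s) *
    ((∏ i, ∏ k, gammaDens φU θU (p.1 i k)) * (∏ k, ∏ j, gammaDens φV θV (p.2 k j)))

lemma lintegral_matBox_ge {M N H : ℕ} {F : (Fin M → Fin H → ℝ) × (Fin H → Fin N → ℝ) → ℝ}
    {lU hU dU : Fin M → Fin H → ℝ} {lV hV dV : Fin H → Fin N → ℝ} {L : ℝ}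
    (h1 : ∀ i k, lU i k ≤ hU i k) (h2 : ∀ k j, lV k j ≤ hV k j)
    (hL : 0 ≤ L) (d1 : ∀ i k, 0 ≤ dU i k) (d2 : ∀ k j, 0 ≤ dV k j)
    (hF : ∀ p ∈ matBox lU hU lV hV, L * ((∏ i, ∏ k, dU i k) * ∏ k, ∏ j, dV k j) ≤ F p) :
    ENNReal.ofReal (L * ((∏ i, ∏ k, dU i k * (hU i k - lU i k)) *
      ∏ k, ∏ j, dV k j * (hV k j - lV k j))) ≤
    ∫⁻ p in matBox lU hU lV hV, ENNReal.ofReal (F p) := by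
  have hD : 0 ≤ L * ((∏ i, ∏ k, dU i k) * ∏ k, ∏ j, dV k j) :=
    mul_nonneg hL (mul_nonneg (prod_nonneg fun i _ => prod_nonneg fun k _ => d1 i k)
      (prod_nonneg fun i _ => prod_nonneg fun k _ => d2 i k))
  calc _ = ENNReal.ofReal (L * ((∏ i, ∏ k, dU i k) * ∏ k, ∏ j, dV k j)) *
        volume (matBox lU hU lV hV) := by
          rw [volume_matBox h1 h2, ← ENNReal.ofReal_mul hD]
          simp only [prod_mul_distrib]
          congr 1
          ring
    _ = ∫⁻ p in matBox lU hU lV hV,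
          ENNReal.ofReal (L * ((∏ i, ∏ k, dU i k) * ∏ k, ∏ j, dV k j)) := by
          rw [setLIntegral_const]
    _ ≤ _ := setLIntegral_mono' (measurableSet_matBox _ _ _ _)
          fun p hp => ENNReal.ofReal_le_ofReal (hF p hp)

lemma lintegral_ge_card_mul {X ι : Type*} [MeasurableSpace X] [Fintype ι] {μ : Measure X}
    {B : ι → Set X} {S : Set X} {f : X → ENNReal} {Q : ENNReal}
    (hB : ∀ m, MeasurableSet (B m)) (hd : Pairwise (Function.onFun Disjoint B))
    (hS : ∀ m, B m ⊆ S) (hQ : ∀ m, Q ≤ ∫⁻ x in B m, f x ∂μ) :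
    (Fintype.card ι : ENNReal) * Q ≤ ∫⁻ x in S, f x ∂μ := by
  calc (Fintype.card ι : ENNReal) * Q = ∑ _m : ι, Q := by simp
    _ ≤ ∑ m, ∫⁻ x in B m, f x ∂μ := sum_le_sum fun m _ => hQ m
    _ = ∫⁻ x in ⋃ m, B m, f x ∂μ := by rw [lintegral_iUnion hB hd, tsum_fintype]
    _ ≤ _ := lintegral_mono_set (Set.iUnion_subset hS)

/-! ### The cells near the true factorization -/

/-- A true rank-one term is reproduced from above, up to `2κε`, by the cell cornered at the
rescaled pair `(a u₀, v₀ / a)`. -/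
lemma term_bounds {κ ε a u₀ v₀ u v : ℝ} (ha : 0 < a) (hu₀ : 0 < u₀) (hv₀ : 0 < v₀)
    (hu : u ∈ Set.Ioc (a * u₀) (a * u₀ + ε)) (hv : v ∈ Set.Ioc (v₀ / a) (v₀ / a + ε))
    (hκ1 : u ≤ κ) (hκ2 : v ≤ κ) :
    u₀ * v₀ < u * v ∧ u * v - u₀ * v₀ ≤ 2 * κ * ε := by
  have hw : a * (v₀ / a) = v₀ := mul_div_cancel₀ _ ha.ne'
  have hw0 : 0 < v₀ / a := by positivity
  have hau : 0 < a * u₀ := by positivity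
  have e : u₀ * v₀ = (a * u₀) * (v₀ / a) := by rw [← hw]; field_simp
  generalize v₀ / a = w at *
  generalize a * u₀ = b at *
  obtain ⟨h1, h2⟩ := hu
  obtain ⟨h3, h4⟩ := hv
  rw [e]
  constructor
  · exact mul_lt_mul'' h1 h3 hau.le hw0.le
  · have : (u - b) * v ≤ ε * κ := mul_le_mul (by linarith) hκ2 (by linarith) (by linarith)
    have : b * (v - w) ≤ κ * ε := mul_le_mul (by linarith) (by linarith) (by linarith) (by linarith)
    nlinarith

/-- Lower bound for the integral from `n ^ H₀` disjoint cells. The cell with index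
`m` is cornered at the factorization obtained by rescaling the `k`-th rank-one term of `U₀V₀`
by `1 + δ m_k / n`, with side `ε` in the entries of that factorization and with the
superfluous columns of `U` and rows of `V` in `(pU/2, pU]` and `(pV/2, pV]`. -/
lemma lower_bound {M N r H₀ n : ℕ} (hM : 1 ≤ M) (hN : 1 ≤ N) (hH₀ : 1 ≤ H₀)
    {φU θU φV θV κ α δ ε c pU pV s : ℝ} {U₀ : Fin M → Fin H₀ → ℝ} {V₀ : Fin H₀ → Fin N → ℝ}
    (hn : 1 ≤ n) (hκ : 0 < κ) (hα : 0 < α) (hδ : 0 < δ) (hδ1 : δ ≤ 1) (hε : 0 < ε) (hc : 0 < c)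
    (hs : 0 ≤ s)
    (hU₀ : ∀ i k, α ≤ U₀ i k) (hV₀ : ∀ k j, α ≤ V₀ k j)
    (hU₁ : ∀ i k, U₀ i k ≤ κ - α) (hV₁ : ∀ k j, V₀ k j ≤ κ - α)
    (hδα : δ * κ + ε ≤ α) (hεn : ε * n ≤ δ * α)
    (hpU : 0 < pU) (hpV : 0 < pV) (hpUκ : pU ≤ κ) (hpVκ : pV ≤ κ) (hp : pU * pV ≤ κ * ε)
    (hcU : ∀ x ∈ Set.Icc (α / 2) κ, c ≤ gammaDens φU θU x)
    (hcV : ∀ x ∈ Set.Icc (α / 2) κ, c ≤ gammaDens φV θV x)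
    (hcU' : ∀ x ∈ Set.Ioc (pU / 2) pU, c * pU ^ (φU - 1) ≤ gammaDens φU θU x)
    (hcV' : ∀ x ∈ Set.Ioc (pV / 2) pV, c * pV ^ (φV - 1) ≤ gammaDens φV θV x) :
    ENNReal.ofReal ((n : ℝ) ^ H₀ *
      ((M * (N * (2 * κ * ε * (H₀ + r)) ^ 2)) ^ (-s) *
        ((((c * ε) ^ H₀ * (c * pU ^ (φU - 1) * (pU - pU / 2)) ^ r) ^ M) *
         (((c * ε) ^ N) ^ H₀ * ((c * pV ^ (φV - 1) * (pV - pV / 2)) ^ N) ^ r)))) ≤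
    ∫⁻ p in {p : (Fin M → Fin (H₀ + r) → ℝ) × (Fin (H₀ + r) → Fin N → ℝ) |
        (∀ i k, p.1 i k ∈ Set.Icc (0 : ℝ) κ) ∧ (∀ k j, p.2 k j ∈ Set.Icc (0 : ℝ) κ)},
      ENNReal.ofReal (zetaIntegrand φU θU φV θV U₀ V₀ s p) := by
  have hn0 : (0 : ℝ) < n := by exact_mod_cast hn
  -- the scaling factors `a t`, lying in `[1, 1 + δ]`
  obtain ⟨a, ha⟩ : ∃ a : Fin n → ℝ, ∀ t, a t = 1 + δ * ((t : ℕ) : ℝ) / n := ⟨_, fun _ => rfl⟩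
  have ha1 : ∀ t, 1 ≤ a t := fun t => by
    rw [ha]; have : 0 ≤ δ * ((t : ℕ) : ℝ) / n := by positivity
    linarith
  have ha2 : ∀ t, a t ≤ 1 + δ := fun t => by
    rw [ha]
    have : δ * ((t : ℕ) : ℝ) / n ≤ δ := by
      rw [div_le_iff₀ hn0]
      have : ((t : ℕ) : ℝ) ≤ n := by exact_mod_cast t.2.le
      gcongr
    linarith
  have ha0 : ∀ t, 0 < a t := fun t => by linarith [ha1 t]
  -- the steps of `a` exceed the cell width
  have hastep : ∀ t t' : Fin n, t < t' → ∀ x, α ≤ x → a t * x + ε ≤ a t' * x := by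
    intro t t' htt x hx
    have h1 : ((t : ℕ) : ℝ) + 1 ≤ ((t' : ℕ) : ℝ) := by exact_mod_cast htt
    have h2 : ε ≤ δ * α / n := by rw [le_div_iff₀ hn0]; exact hεn
    have h3 : a t' - a t = δ / n * (((t' : ℕ) : ℝ) - ((t : ℕ) : ℝ)) := by rw [ha, ha]; ring
    have h4 : δ / n ≤ a t' - a t := by
      rw [h3]; exact le_mul_of_one_le_right (by positivity) (by linarith)
    have h5 : δ / n * α ≤ (a t' - a t) * x := mul_le_mul h4 hx hα.le (le_trans (by positivity) h4)
    have h6 : δ / n * α = δ * α / n := by ring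
    linarith
  have hαε : ε ≤ α := by nlinarith
  have hbU : ∀ t i k, α / 2 ≤ a t * U₀ i k ∧ a t * U₀ i k + ε ≤ κ := fun t i k => by
    have h1 := hU₀ i k
    have h2 := hU₁ i k
    have h3 := ha1 t
    have h4 := ha2 t
    constructor
    · nlinarith
    · have : a t * U₀ i k ≤ (1 + δ) * U₀ i k := by gcongr; linarith
      nlinarith
  have hbV : ∀ t k j, α / 2 ≤ V₀ k j / a t ∧ V₀ k j / a t + ε ≤ κ := fun t k j => by
    have h1 := hV₀ k j
    have h2 := hV₁ k j
    have h3 := ha1 t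
    have h4 := ha2 t
    constructor
    · rw [le_div_iff₀ (ha0 t)]; nlinarith
    · have : V₀ k j / a t ≤ V₀ k j := div_le_self (by linarith) h3
      linarith
  -- the corners of the cells and the lower bounds for the densities on them
  let lU : (Fin H₀ → Fin n) → Fin M → Fin (H₀ + r) → ℝ := fun m i k =>
    Fin.addCases (motive := fun _ => ℝ) (fun k => a (m k) * U₀ i k) (fun _ => pU / 2) k
  let hU : (Fin H₀ → Fin n) → Fin M → Fin (H₀ + r) → ℝ := fun m i k =>
    Fin.addCases (motive := fun _ => ℝ) (fun k => a (m k) * U₀ i k + ε) (fun _ => pU) k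
  let lV : (Fin H₀ → Fin n) → Fin (H₀ + r) → Fin N → ℝ := fun m k j =>
    Fin.addCases (motive := fun _ => ℝ) (fun k => V₀ k j / a (m k)) (fun _ => pV / 2) k
  let hV : (Fin H₀ → Fin n) → Fin (H₀ + r) → Fin N → ℝ := fun m k j =>
    Fin.addCases (motive := fun _ => ℝ) (fun k => V₀ k j / a (m k) + ε) (fun _ => pV) k
  let dU : Fin M → Fin (H₀ + r) → ℝ := fun i k =>
    Fin.addCases (motive := fun _ => ℝ) (fun _ => c) (fun _ => c * pU ^ (φU - 1)) k
  let dV : Fin (H₀ + r) → Fin N → ℝ := fun k j =>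
    Fin.addCases (motive := fun _ => ℝ) (fun _ => c) (fun _ => c * pV ^ (φV - 1)) k
  have key := lintegral_ge_card_mul (μ := volume)
    (B := fun m : Fin H₀ → Fin n => matBox (lU m) (hU m) (lV m) (hV m))
    (S := {p : (Fin M → Fin (H₀ + r) → ℝ) × (Fin (H₀ + r) → Fin N → ℝ) |
        (∀ i k, p.1 i k ∈ Set.Icc (0 : ℝ) κ) ∧ (∀ k j, p.2 k j ∈ Set.Icc (0 : ℝ) κ)})
    (f := fun p => ENNReal.ofReal (zetaIntegrand φU θU φV θV U₀ V₀ s p))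
    (Q := ENNReal.ofReal ((M * (N * (2 * κ * ε * (H₀ + r)) ^ 2)) ^ (-s) *
        ((((c * ε) ^ H₀ * (c * pU ^ (φU - 1) * (pU - pU / 2)) ^ r) ^ M) *
         (((c * ε) ^ N) ^ H₀ * ((c * pV ^ (φV - 1) * (pV - pV / 2)) ^ N) ^ r))))
    (fun m => measurableSet_matBox _ _ _ _) ?_ ?_ ?_
  · refine le_trans (le_of_eq ?_) key
    rw [ENNReal.ofReal_mul (by positivity)]
    congr 1
    simp [ENNReal.ofReal_pow]
  · -- distinct cells are separated by a coordinate in the first row of `U`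
    intro m m' hmm
    obtain ⟨k, hk⟩ := Function.ne_iff.1 hmm
    refine Set.disjoint_left.2 fun p hp1 hp2 => ?_
    have e1 := (mem_matBox.1 hp1).1 ⟨0, hM⟩ (Fin.castAdd r k)
    have e2 := (mem_matBox.1 hp2).1 ⟨0, hM⟩ (Fin.castAdd r k)
    simp only [lU, hU, Fin.addCases_left, Set.mem_Ioc] at e1 e2
    rcases lt_or_gt_of_ne hk with h | h
    · linarith [hastep _ _ h _ (hU₀ ⟨0, hM⟩ k)]
    · linarith [hastep _ _ h _ (hU₀ ⟨0, hM⟩ k)]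
  · intro m p hp
    rw [mem_matBox] at hp
    refine ⟨fun i k => ?_, fun k j => ?_⟩
    · have := hp.1 i k
      induction k using Fin.addCases with
      | left k =>
        simp only [lU, hU, Fin.addCases_left, Set.mem_Ioc] at this
        have := hbU (m k) i k
        constructor <;> linarith
      | right k =>
        simp only [lU, hU, Fin.addCases_right, Set.mem_Ioc] at this
        constructor <;> linarith
    · have := hp.2 k j
      induction k using Fin.addCases with
      | left k =>
        simp only [lV, hV, Fin.addCases_left, Set.mem_Ioc] at this
        have := hbV (m k) k j
        constructor <;> linarith
      | right k =>
        simp only [lV, hV, Fin.addCases_right, Set.mem_Ioc] at this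
        constructor <;> linarith
  · intro m
    have dU0 : ∀ i k, 0 ≤ dU i k := fun i k => by
      induction k using Fin.addCases <;> simp only [dU, Fin.addCases_left, Fin.addCases_right] <;>
        positivity
    have dV0 : ∀ k j, 0 ≤ dV k j := fun k j => by
      induction k using Fin.addCases <;> simp only [dV, Fin.addCases_left, Fin.addCases_right] <;>
        positivity
    refine le_trans (le_of_eq ?_) (lintegral_matBox_ge (dU := dU) (dV := dV)
      (L := (M * (N * (2 * κ * ε * (H₀ + r)) ^ 2)) ^ (-s)) ?_ ?_ (by positivity) dU0 dV0 ?_)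
    · simp only [Fin.prod_univ_add, dU, dV, lU, hU, lV, hV, Fin.addCases_left, Fin.addCases_right,
        add_sub_cancel_left, prod_const, card_univ, Fintype.card_fin]
    · intro i k
      induction k using Fin.addCases <;>
        simp only [lU, hU, Fin.addCases_left, Fin.addCases_right] <;> linarith
    · intro k j
      induction k using Fin.addCases <;>
        simp only [lV, hV, Fin.addCases_left, Fin.addCases_right] <;> linarith
    · intro p hp
      rw [mem_matBox] at hp
      obtain ⟨hp1, hp2⟩ := hp
      have hUl : ∀ i k, p.1 i (Fin.castAdd r k) ∈
          Set.Ioc (a (m k) * U₀ i k) (a (m k) * U₀ i k + ε) := fun i k => by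
        simpa only [lU, hU, Fin.addCases_left] using hp1 i (Fin.castAdd r k)
      have hUr : ∀ i k, p.1 i (Fin.natAdd H₀ k) ∈ Set.Ioc (pU / 2) pU := fun i k => by
        simpa only [lU, hU, Fin.addCases_right] using hp1 i (Fin.natAdd H₀ k)
      have hVl : ∀ k j, p.2 (Fin.castAdd r k) j ∈
          Set.Ioc (V₀ k j / a (m k)) (V₀ k j / a (m k) + ε) := fun k j => by
        simpa only [lV, hV, Fin.addCases_left] using hp2 (Fin.castAdd r k) j
      have hVr : ∀ k j, p.2 (Fin.natAdd H₀ k) j ∈ Set.Ioc (pV / 2) pV := fun k j => by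
        simpa only [lV, hV, Fin.addCases_right] using hp2 (Fin.natAdd H₀ k) j
      unfold zetaIntegrand
      -- every entry of `UV - U₀V₀` is positive and of order `ε`
      have hentry : ∀ i j, 0 < (∑ k, p.1 i k * p.2 k j) - ∑ k, U₀ i k * V₀ k j ∧
          (∑ k, p.1 i k * p.2 k j) - ∑ k, U₀ i k * V₀ k j ≤ 2 * κ * ε * (H₀ + r) := by
        intro i j
        rw [Fin.sum_univ_add, add_sub_right_comm, ← sum_sub_distrib]
        have hl : ∀ k, U₀ i k * V₀ k j < p.1 i (Fin.castAdd r k) * p.2 (Fin.castAdd r k) j ∧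
            p.1 i (Fin.castAdd r k) * p.2 (Fin.castAdd r k) j - U₀ i k * V₀ k j
              ≤ 2 * κ * ε := fun k =>
          term_bounds (ha0 (m k)) (hα.trans_le (hU₀ i k)) (hα.trans_le (hV₀ k j)) (hUl i k)
            (hVl k j) ((hUl i k).2.trans (hbU _ _ _).2) ((hVl k j).2.trans (hbV _ _ _).2)
        have hr : ∀ k, 0 ≤ p.1 i (Fin.natAdd H₀ k) * p.2 (Fin.natAdd H₀ k) j ∧
            p.1 i (Fin.natAdd H₀ k) * p.2 (Fin.natAdd H₀ k) j ≤ 2 * κ * ε := fun k => by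
          have h1 := hUr i k
          have h2 := hVr k j
          have h3 : 0 ≤ p.2 (Fin.natAdd H₀ k) j := by linarith [h2.1]
          have h4 : 0 ≤ p.1 i (Fin.natAdd H₀ k) := by linarith [h1.1]
          have h5 := mul_le_mul h1.2 h2.2 h3 hpU.le
          exact ⟨mul_nonneg h4 h3, by nlinarith [mul_pos hκ hε]⟩
        constructor
        · refine add_pos_of_pos_of_nonneg ?_ (sum_nonneg fun k _ => (hr k).1)
          have : Nonempty (Fin H₀) := ⟨⟨0, hH₀⟩⟩
          exact sum_pos (fun k _ => sub_pos.2 (hl k).1) univ_nonempty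
        · have t1 := sum_le_card_nsmul (univ : Finset (Fin H₀)) _ _ fun k _ => (hl k).2
          have t2 := sum_le_card_nsmul (univ : Finset (Fin r)) _ _ fun k _ => (hr k).2
          simp only [card_univ, Fintype.card_fin, nsmul_eq_mul] at t1 t2
          linarith
      have hdU : ∀ i k, dU i k ≤ gammaDens φU θU (p.1 i k) := fun i k => by
        induction k using Fin.addCases with
        | left k =>
          simp only [dU, Fin.addCases_left]
          exact hcU _ ⟨(hbU (m k) i k).1.trans (hUl i k).1.le, (hUl i k).2.trans (hbU _ _ _).2⟩
        | right k =>
          simp only [dU, Fin.addCases_right]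
          exact hcU' _ (hUr i k)
      have hdV : ∀ k j, dV k j ≤ gammaDens φV θV (p.2 k j) := fun k j => by
        induction k using Fin.addCases with
        | left k =>
          simp only [dV, Fin.addCases_left]
          exact hcV _ ⟨(hbV (m k) k j).1.trans (hVl k j).1.le, (hVl k j).2.trans (hbV _ _ _).2⟩
        | right k =>
          simp only [dV, Fin.addCases_right]
          exact hcV' _ (hVr k j)
      have pU0 : 0 ≤ ∏ i, ∏ k, dU i k := prod_nonneg fun i _ => prod_nonneg fun k _ => dU0 i k
      have pV0 : 0 ≤ ∏ k, ∏ j, dV k j := prod_nonneg fun k _ => prod_nonneg fun j _ => dV0 k j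
      have pU1 : ∏ i, ∏ k, dU i k ≤ ∏ i, ∏ k, gammaDens φU θU (p.1 i k) :=
        prod_le_prod (fun i _ => prod_nonneg fun k _ => dU0 i k) fun i _ =>
          prod_le_prod (fun k _ => dU0 i k) fun k _ => hdU i k
      have pV1 : ∏ k, ∏ j, dV k j ≤ ∏ k, ∏ j, gammaDens φV θV (p.2 k j) :=
        prod_le_prod (fun k _ => prod_nonneg fun j _ => dV0 k j) fun k _ =>
          prod_le_prod (fun j _ => dV0 k j) fun j _ => hdV k j
      refine mul_le_mul ?_ (mul_le_mul pU1 pV1 pV0 (pU0.trans pU1)) (mul_nonneg pU0 pV0)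
        (by positivity)
      · have hpos : 0 < ∑ i, ∑ j, ((∑ k, p.1 i k * p.2 k j) - ∑ k, U₀ i k * V₀ k j) ^ 2 := by
          have : Nonempty (Fin M) := ⟨⟨0, hM⟩⟩
          have : Nonempty (Fin N) := ⟨⟨0, hN⟩⟩
          exact sum_pos (fun i _ => sum_pos (fun j _ => pow_pos (hentry i j).1 2) univ_nonempty)
            univ_nonempty
        refine Real.rpow_le_rpow_of_nonpos hpos ?_ (by linarith)
        have t1 : ∀ i, ∑ j, ((∑ k, p.1 i k * p.2 k j) - ∑ k, U₀ i k * V₀ k j) ^ 2 ≤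
            N * (2 * κ * ε * (H₀ + r)) ^ 2 := fun i => by
          have := sum_le_card_nsmul (univ : Finset (Fin N)) _ _ fun j _ =>
            pow_le_pow_left₀ (hentry i j).1.le (hentry i j).2 2
          simpa only [card_univ, Fintype.card_fin, nsmul_eq_mul] using this
        have := sum_le_card_nsmul (univ : Finset (Fin M)) _ _ fun i _ => t1 i
        simpa only [card_univ, Fintype.card_fin, nsmul_eq_mul] using this

/-! ### Counting powers and divergence -/

lemma exists_pos_le {ι : Type*} [Finite ι] (f : ι → ℝ) (hf : ∀ i, 0 < f i) :
    ∃ α : ℝ, 0 < α ∧ ∀ i, α ≤ f i := by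
  cases isEmpty_or_nonempty ι
  · exact ⟨1, one_pos, fun i => isEmptyElim i⟩
  · obtain ⟨i, hi⟩ := Finite.exists_min f
    exact ⟨f i, hf i, hi⟩

/-- Collects the powers of `n` when the cell width is `ε = η / n`. -/
lemma power_count {A B η s φ x : ℝ} (H₀ r M N Q : ℕ) (hB : 0 < B) (hη : 0 < η) (hx : 0 < x) :
    x ^ H₀ * ((B * (η / x) ^ 2) ^ (-s) * (A * (η / x) ^ (H₀ * (M + N)) *
      ((η / x) ^ φ) ^ (r * Q))) =
    (A * B ^ (-s) * η ^ ((H₀ : ℝ) * (M + N) + r * (Q * φ) - 2 * s)) *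
      x ^ (2 * s - (r * (Q * φ) + H₀ * ((M : ℝ) + N - 1))) := by
  obtain ⟨e, he⟩ : ∃ e : ℝ, e = (H₀ : ℝ) * (M + N) + r * (Q * φ) - 2 * s := ⟨_, rfl⟩
  have hε : 0 < η / x := by positivity
  have h1 : (η / x) ^ e = ((η / x) ^ 2) ^ (-s) * (η / x) ^ (H₀ * (M + N)) *
      ((η / x) ^ φ) ^ (r * Q) := by
    rw [← Real.rpow_natCast, ← Real.rpow_natCast, ← Real.rpow_natCast, ← Real.rpow_mul hε.le,
      ← Real.rpow_mul hε.le, ← Real.rpow_add hε, ← Real.rpow_add hε, he]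
    congr 1
    push_cast
    ring
  have h2 : (η / x) ^ e = η ^ e * x ^ (-e) := by
    rw [Real.div_rpow hη.le hx.le, Real.rpow_neg hx.le]; rfl
  have h3 : x ^ (2 * s - (r * (Q * φ) + H₀ * ((M : ℝ) + N - 1))) = x ^ H₀ * x ^ (-e) := by
    rw [← Real.rpow_natCast, ← Real.rpow_add hx, he]
    congr 1
    ring
  rw [h3, ← he, Real.mul_rpow hB.le (by positivity)]
  linear_combination (-(x ^ H₀ * B ^ (-s) * A)) * h1 + (x ^ H₀ * B ^ (-s) * A) * h2

lemma eq_top_of_growth {I : ENNReal} {C γ : ℝ} (hC : 0 < C) (hγ : 0 < γ)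
    (h : ∀ n : ℕ, 1 ≤ n → ENNReal.ofReal (C * (n : ℝ) ^ γ) ≤ I) : I = ⊤ := by
  by_contra hI
  have ht : Filter.Tendsto (fun n : ℕ => C * (n : ℝ) ^ γ) Filter.atTop Filter.atTop :=
    ((tendsto_rpow_atTop hγ).comp tendsto_natCast_atTop_atTop).const_mul_atTop hC
  obtain ⟨n, hn, hn1⟩ := ((ht.eventually_gt_atTop I.toReal).and
    (Filter.eventually_ge_atTop 1)).exists
  have := (ENNReal.ofReal_le_iff_le_toReal hI).1 (h n hn1)
  linarith

/-- Main upper bound for the RLCT of NMF with gamma priors: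
for `M, N ≥ 1`, `H ≥ H₀ ≥ 1`, gamma hyperparameters, `κ > 0`, true factors with
entries in `(0,κ)` and non-negative rank of `U₀V₀` equal to `H₀`, for every
`s > ½[(H−H₀)·min{MφU, NφV} + H₀(M+N−1)]` the integral of `(‖UV − U₀V₀‖²)^{-s}`
times the gamma prior over `[0,κ]^{M×H} × [0,κ]^{H×N}` diverges
(so λ ≤ ½[(H−H₀)·min{MφU, NφV} + H₀(M+N−1)]). -/
theorem nmf_rlct_upper_bound
    (M N H H₀ : ℕ) (hM : 1 ≤ M) (hN : 1 ≤ N) (hH₀ : 1 ≤ H₀) (hH : H₀ ≤ H)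
    (φU θU φV θV κ : ℝ)
    (hφU : 0 < φU) (hθU : 0 < θU) (hφV : 0 < φV) (hθV : 0 < θV) (hκ : 0 < κ)
    (U₀ : Fin M → Fin H₀ → ℝ) (V₀ : Fin H₀ → Fin N → ℝ)
    (hU₀ : ∀ i k, U₀ i k ∈ Set.Ioo (0 : ℝ) κ) (hV₀ : ∀ k j, V₀ k j ∈ Set.Ioo (0 : ℝ) κ)
    (hrank : ∀ H' : ℕ, H' < H₀ →
      ¬ ∃ (U' : Fin M → Fin H' → ℝ) (V' : Fin H' → Fin N → ℝ),
        (∀ i k, 0 ≤ U' i k) ∧ (∀ k j, 0 ≤ V' k j) ∧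
        (∀ i j, ∑ k, U' i k * V' k j = ∑ k, U₀ i k * V₀ k j))
    (s : ℝ)
    (hs : (((H : ℝ) - (H₀ : ℝ)) * min ((M : ℝ) * φU) ((N : ℝ) * φV) +
        (H₀ : ℝ) * ((M : ℝ) + (N : ℝ) - 1)) / 2 < s) :
    (∫⁻ p in {p : (Fin M → Fin H → ℝ) × (Fin H → Fin N → ℝ) |
        (∀ i k, p.1 i k ∈ Set.Icc (0 : ℝ) κ) ∧ (∀ k j, p.2 k j ∈ Set.Icc (0 : ℝ) κ)},
      ENNReal.ofReal
        ((∑ i, ∑ j, ((∑ k, p.1 i k * p.2 k j) - ∑ k, U₀ i k * V₀ k j) ^ 2) ^ (-s) *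
          ((∏ i, ∏ k, θU ^ φU / Real.Gamma φU * p.1 i k ^ (φU - 1) *
              Real.exp (-θU * p.1 i k)) *
           (∏ k, ∏ j, θV ^ φV / Real.Gamma φV * p.2 k j ^ (φV - 1) *
              Real.exp (-θV * p.2 k j))))) = ⊤ := by
  obtain ⟨r, rfl⟩ := Nat.exists_eq_add_of_le hH
  change ∫⁻ p in _, ENNReal.ofReal (zetaIntegrand φU θU φV θV U₀ V₀ s p) = ⊤
  have hM' : (1 : ℝ) ≤ M := by exact_mod_cast hM
  have hN' : (1 : ℝ) ≤ N := by exact_mod_cast hN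
  have hH₀' : (1 : ℝ) ≤ H₀ := by exact_mod_cast hH₀
  have hr : ((H₀ + r : ℕ) : ℝ) - H₀ = r := by push_cast; ring
  rw [hr] at hs
  have hs0 : 0 ≤ s := by
    have h1 : 0 ≤ (r : ℝ) * min ((M : ℝ) * φU) (N * φV) := by positivity
    have h2 : 0 ≤ (H₀ : ℝ) * ((M : ℝ) + N - 1) := mul_nonneg (by linarith) (by linarith)
    linarith
  -- a uniform distance `α` of the entries of `U₀`, `V₀` from `0` and `κ`
  obtain ⟨α₁, hα₁, hα₁'⟩ := exists_pos_le
    (fun q : Fin M × Fin H₀ => min (U₀ q.1 q.2) (κ - U₀ q.1 q.2))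
    (fun q => lt_min (hU₀ _ _).1 (sub_pos.2 (hU₀ _ _).2))
  obtain ⟨α₂, hα₂, hα₂'⟩ := exists_pos_le
    (fun q : Fin H₀ × Fin N => min (V₀ q.1 q.2) (κ - V₀ q.1 q.2))
    (fun q => lt_min (hV₀ _ _).1 (sub_pos.2 (hV₀ _ _).2))
  obtain ⟨α, hα, hα1, hα2⟩ : ∃ α, 0 < α ∧ α ≤ α₁ ∧ α ≤ α₂ :=
    ⟨min α₁ α₂, lt_min hα₁ hα₂, min_le_left _ _, min_le_right _ _⟩
  have bU : ∀ i k, α ≤ U₀ i k ∧ U₀ i k ≤ κ - α := fun i k => by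
    have h := le_min_iff.1 (hα₁' (i, k))
    constructor <;> linarith [h.1, h.2]
  have bV : ∀ k j, α ≤ V₀ k j ∧ V₀ k j ≤ κ - α := fun k j => by
    have h := le_min_iff.1 (hα₂' (k, j))
    constructor <;> linarith [h.1, h.2]
  have hακ : 2 * α ≤ κ := by linarith [(bU ⟨0, hM⟩ ⟨0, hH₀⟩).1, (bU ⟨0, hM⟩ ⟨0, hH₀⟩).2]
  obtain ⟨c₁, hc₁, hc₁'⟩ := gammaDens_lower_compact (κ := κ) hφU hθU (half_pos hα)
  obtain ⟨c₂, hc₂, hc₂'⟩ := gammaDens_lower_compact (κ := κ) hφV hθV (half_pos hα)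
  obtain ⟨c₃, hc₃, hc₃'⟩ := gammaDens_lower_shell (κ := κ) hφU hθU
  obtain ⟨c₄, hc₄, hc₄'⟩ := gammaDens_lower_shell (κ := κ) hφV hθV
  obtain ⟨c, hc, hc1, hc2, hc3, hc4⟩ : ∃ c, 0 < c ∧ c ≤ c₁ ∧ c ≤ c₂ ∧ c ≤ c₃ ∧ c ≤ c₄ :=
    ⟨min (min c₁ c₂) (min c₃ c₄), by positivity, by simp, by simp, by simp, by simp⟩
  obtain ⟨δ, hδ⟩ : ∃ δ, δ = α / (2 * κ) := ⟨_, rfl⟩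
  have hδ0 : 0 < δ := by rw [hδ]; positivity
  have hδκ : δ * κ = α / 2 := by rw [hδ]; field_simp
  have hδ1 : δ ≤ 1 / 4 := by rw [hδ, div_le_iff₀ (by positivity)]; linarith
  have hη0 : 0 < δ * α := by positivity
  have hη1 : δ * α ≤ α / 4 := by nlinarith
  have hB : 0 < (M : ℝ) * (N * (2 * κ * (H₀ + r)) ^ 2) := by positivity
  have hfin : ∀ n : ℕ, 1 ≤ n → 0 < δ * α / n ∧ δ * α / n ≤ δ * α ∧ δ * α / n * n = δ * α := by
    intro n hn
    have hn' : (1 : ℝ) ≤ n := by exact_mod_cast hn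
    exact ⟨by positivity, div_le_self hη0.le hn', by field_simp⟩
  have main := fun (n : ℕ) (hn : 1 ≤ n) (pU pV : ℝ) (hpU : 0 < pU) (hpV : 0 < pV) (hpUκ : pU ≤ κ)
      (hpVκ : pV ≤ κ) (hp : pU * pV ≤ κ * (δ * α / n)) =>
    lower_bound (r := r) (s := s) (φU := φU) (θU := θU) (φV := φV) (θV := θV) hM hN hH₀ hn hκ hα
      hδ0 (by linarith) (hfin n hn).1 hc hs0
      (fun i k => (bU i k).1) (fun i k => (bV i k).1) (fun i k => (bU i k).2)
      (fun i k => (bV i k).2) (by linarith [(hfin n hn).2.1]) (hfin n hn).2.2.le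
      hpU hpV hpUκ hpVκ hp
      (fun x hx => hc1.trans (hc₁' x hx)) (fun x hx => hc2.trans (hc₂' x hx))
      (fun x hx => (mul_le_mul_of_nonneg_right hc3 (by positivity)).trans (hc₃' pU hpU hpUκ x hx))
      (fun x hx => (mul_le_mul_of_nonneg_right hc4 (by positivity)).trans (hc₄' pV hpV hpVκ x hx))
  have hshell : ∀ p φ : ℝ, 0 < p → c * p ^ (φ - 1) * (p - p / 2) = c / 2 * p ^ φ := by
    intro p φ hp
    rw [Real.rpow_sub_one hp.ne']
    field_simp
    ring
  -- shrink whichever of the two superfluous blocks carries the smaller exponent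
  rcases le_total ((M : ℝ) * φU) (N * φV) with hmin | hmin
  · rw [min_eq_left hmin] at hs
    refine eq_top_of_growth (C := (c ^ (H₀ * (M + N)) * (c / 2) ^ (r * M) *
        (c / 2 * κ ^ φV) ^ (N * r)) * (M * (N * (2 * κ * (H₀ + r)) ^ 2)) ^ (-s) *
        (δ * α) ^ ((H₀ : ℝ) * (M + N) + r * (M * φU) - 2 * s))
      (γ := 2 * s - (r * (M * φU) + H₀ * ((M : ℝ) + N - 1))) (by positivity) (by linarith) ?_
    intro n hn
    obtain ⟨h1, h2, h3⟩ := hfin n hn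
    refine le_trans (le_of_eq ?_) (main n hn (δ * α / n) κ h1 hκ (by linarith) le_rfl
      (mul_comm _ _).le)
    rw [← power_count H₀ r M N M hB hη0 (by exact_mod_cast hn), hshell _ _ h1, hshell _ _ hκ]
    congr 3
    · congr 1; ring
    · ring
  · rw [min_eq_right hmin] at hs
    refine eq_top_of_growth (C := (c ^ (H₀ * (M + N)) * (c / 2) ^ (r * N) *
        (c / 2 * κ ^ φU) ^ (M * r)) * (M * (N * (2 * κ * (H₀ + r)) ^ 2)) ^ (-s) *
        (δ * α) ^ ((H₀ : ℝ) * (M + N) + r * (N * φV) - 2 * s))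
      (γ := 2 * s - (r * (N * φV) + H₀ * ((M : ℝ) + N - 1))) (by positivity) (by linarith) ?_
    intro n hn
    obtain ⟨h1, h2, h3⟩ := hfin n hn
    refine le_trans (le_of_eq ?_) (main n hn κ (δ * α / n) hκ h1 le_rfl (by linarith) le_rfl)
    rw [← power_count H₀ r M N N hB hη0 (by exact_mod_cast hn), hshell _ _ h1, hshell _ _ hκ]
    congr 3
    · congr 1; ring
    · ring
end
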